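/- arXiv:2002.07925 — 3 statements merged into one kernel-verified Lean document; each statement's English description precedes it below -/
import Mathlib

section
/- Let G be an irreducible robust graph and let x, y be distinct vertices of G with deg(x) ≤ 6, deg(y) ≤ 6, and |N(x) ∪ N(y)| ≤ 7. Then (a) deg(x) = deg(y) = 5; (b) |N(x) ∩ N(y)| = 3; and (c) the induced subgraphs G[N(x)] and G[N(y)] are both complete graphs on 5 vertices. -/
open SimpleGraph

variable {V : Type*}

/-- A triangle transversal of `G`: a set of edges of `G` meeting every triangle of `G`
(so that its removal leaves a triangle-free graph). -/
def IsTriangleTransversal (G : SimpleGraph V) (X : Finset (Sym2 V)) : Prop :=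
  ↑X ⊆ G.edgeSet ∧
    ∀ t : Finset V, G.IsNClique 3 t → ∃ e ∈ X, ∀ v ∈ e, v ∈ t

/-- A triangle packing of `G`: a set of pairwise edge-disjoint triangles of `G`. -/
def IsTrianglePacking (G : SimpleGraph V) (Y : Finset (Finset V)) : Prop :=
  (∀ t ∈ Y, G.IsNClique 3 t) ∧
    ∀ s ∈ Y, ∀ t ∈ Y, s ≠ t →
      ∀ e ∈ G.edgeSet, ¬ ((∀ v ∈ e, v ∈ s) ∧ (∀ v ∈ e, v ∈ t))

/-- `tau G` is the minimum size of a triangle transversal of `G`. -/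
noncomputable def tau (G : SimpleGraph V) : ℕ :=
  sInf {n | ∃ X : Finset (Sym2 V), IsTriangleTransversal G X ∧ X.card = n}

/-- `nu G` is the maximum size of a triangle packing of `G`. -/
noncomputable def nu (G : SimpleGraph V) : ℕ :=
  sSup {n | ∃ Y : Finset (Finset V), IsTrianglePacking G Y ∧ Y.card = n}

/-- `(V₀, X, Y)` is a reducing triple for `G`: `V₀` is a nonempty set of vertices,
`X` a set of edges of `G`, `Y` a triangle packing of `G`, with (i) `|X| ≤ 2|Y|`;
(ii) every triangle of `G` containing a vertex of `V₀` contains an edge of `X`;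
(iii) every edge of a triangle of `Y` with both endpoints outside `V₀` lies in `X`. -/
def IsReducingTriple (G : SimpleGraph V) (V₀ : Finset V) (X : Finset (Sym2 V))
    (Y : Finset (Finset V)) : Prop :=
  V₀.Nonempty ∧ ↑X ⊆ G.edgeSet ∧ IsTrianglePacking G Y ∧
    X.card ≤ 2 * Y.card ∧
    (∀ t : Finset V, G.IsNClique 3 t → (∃ v ∈ V₀, v ∈ t) → ∃ e ∈ X, ∀ v ∈ e, v ∈ t) ∧
    (∀ t ∈ Y, ∀ u v : V, u ∈ t → v ∈ t → G.Adj u v →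
      u ∉ V₀ → v ∉ V₀ → s(u, v) ∈ X)

/-- `G` is irreducible if it admits no reducing triple. -/
def IrreducibleGraph (G : SimpleGraph V) : Prop :=
  ¬ ∃ (V₀ : Finset V) (X : Finset (Sym2 V)) (Y : Finset (Finset V)),
      IsReducingTriple G V₀ X Y

/-- `G` is robust: for every vertex `v`, each connected component of the subgraph induced
on the neighborhood of `v` has at least `5` vertices. -/
def Robust (G : SimpleGraph V) : Prop :=
  ∀ v : V, ∀ c : (G.induce (G.neighborSet v)).ConnectedComponent, 5 ≤ c.supp.ncard


/-! ### Labelled configurations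

A finite part of a graph is described by a labelling `p : ℕ → V` that is injective on the labels
below some `n ≤ 10`.  The unordered pair of labels `i`, `j` is coded by the two-digit number
`code i j`, a triangle by a three-digit number, and sets of pairs by bit masks. -/

section Codes

/-- The two-digit code of an unordered pair of labels. -/
def code (i j : ℕ) : ℕ := 10 * min i j + max i j

/-- The pair of labels coded by `q` is an edge. -/
def Holds (G : SimpleGraph V) (p : ℕ → V) (q : ℕ) : Prop := G.Adj (p (q / 10)) (p (q % 10))

theorem code_comm (i j : ℕ) : code i j = code j i := by
  simp only [code, min_comm, max_comm]

theorem mk_code {i j : ℕ} (hi : i < 10) (hj : j < 10) (p : ℕ → V) :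
    s(p (code i j / 10), p (code i j % 10)) = s(p i, p j) := by
  rcases le_total i j with h | h
  · have h1 : code i j / 10 = i := by simp only [code, min_eq_left h, max_eq_right h]; omega
    have h2 : code i j % 10 = j := by simp only [code, min_eq_left h, max_eq_right h]; omega
    rw [h1, h2]
  · have h1 : code i j / 10 = j := by simp only [code, min_eq_right h, max_eq_left h]; omega
    have h2 : code i j % 10 = i := by simp only [code, min_eq_right h, max_eq_left h]; omega
    rw [h1, h2, Sym2.eq_swap]

theorem holds_code {G : SimpleGraph V} {p : ℕ → V} {i j : ℕ} (hi : i < 10) (hj : j < 10) :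
    Holds G p (code i j) ↔ G.Adj (p i) (p j) := by
  rw [Holds, ← SimpleGraph.mem_edgeSet, mk_code hi hj, SimpleGraph.mem_edgeSet]

/-- The bit mask of a list of codes. -/
def mask (l : List ℕ) : ℕ := l.foldr (fun q m => 2 ^ q ||| m) 0

theorem testBit_mask {l : List ℕ} {q : ℕ} : (mask l).testBit q = true ↔ q ∈ l := by
  induction l with
  | nil => simp [mask]
  | cons a l ih =>
    have : mask (a :: l) = 2 ^ a ||| mask l := rfl
    rw [this, Nat.testBit_or, Bool.or_eq_true, ih, Nat.testBit_two_pow, List.mem_cons]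
    simp [eq_comm]

/-- A clause `(P, A)` applies if all pairs in the mask `P` hold and all pairs in `A` fail. -/
def Applies (h : ℕ → Prop) (c : ℕ × ℕ) : Prop :=
  (∀ q, c.1.testBit q = true → h q) ∧ ∀ q, c.2.testBit q = true → ¬ h q

theorem applies_mask {h : ℕ → Prop} {P A : List ℕ} :
    Applies h (mask P, mask A) ↔ (∀ q ∈ P, h q) ∧ ∀ q ∈ A, ¬ h q := by
  simp only [Applies, testBit_mask]

/-- Branching on the codes in the list, with `T` and `F` the masks of the codes already known to
hold and to fail: on every branch some clause in `cs` is found to apply. -/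
def decides : List ℕ → ℕ → ℕ → List (ℕ × ℕ) → Bool
  | [], T, F, cs => cs.any fun c => c.1 &&& T == c.1 && c.2 &&& F == c.2
  | q :: qs, T, F, cs =>
    (cs.any fun c => c.1 &&& T == c.1 && c.2 &&& F == c.2) ||
      (decides qs (T ||| 2 ^ q) F (cs.filter fun c => !c.2.testBit q) &&
        decides qs T (F ||| 2 ^ q) (cs.filter fun c => !c.1.testBit q))

theorem exists_applies_of_any {h : ℕ → Prop} {T F : ℕ} {cs : List (ℕ × ℕ)}
    (hT : ∀ q, T.testBit q = true → h q) (hF : ∀ q, F.testBit q = true → ¬ h q)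
    (hc : (cs.any fun c => c.1 &&& T == c.1 && c.2 &&& F == c.2) = true) :
    ∃ c ∈ cs, Applies h c := by
  obtain ⟨c, hc, hc'⟩ := List.any_eq_true.1 hc
  rw [Bool.and_eq_true, beq_iff_eq, beq_iff_eq] at hc'
  refine ⟨c, hc, fun q hq => hT q ?_, fun q hq => hF q ?_⟩
  · rw [← hc'.1, Nat.testBit_and, Bool.and_eq_true] at hq
    exact hq.2
  · rw [← hc'.2, Nat.testBit_and, Bool.and_eq_true] at hq
    exact hq.2

theorem exists_applies_of_decides {h : ℕ → Prop} (qs : List ℕ) :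
    ∀ (T F : ℕ) (cs : List (ℕ × ℕ)), (∀ q, T.testBit q = true → h q) →
      (∀ q, F.testBit q = true → ¬ h q) → decides qs T F cs = true → ∃ c ∈ cs, Applies h c := by
  induction qs with
  | nil => exact fun T F cs hT hF hd => exists_applies_of_any hT hF hd
  | cons q qs ih =>
    intro T F cs hT hF hd
    rw [decides, Bool.or_eq_true, Bool.and_eq_true] at hd
    rcases hd with hd | ⟨hd₁, hd₂⟩
    · exact exists_applies_of_any hT hF hd
    by_cases hq : h q
    · obtain ⟨c, hc, hc'⟩ := ih _ _ _ (fun r hr => by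
        rw [Nat.testBit_or, Bool.or_eq_true, Nat.testBit_two_pow, decide_eq_true_eq] at hr
        rcases hr with hr | rfl
        exacts [hT r hr, hq]) hF hd₁
      exact ⟨c, (List.mem_filter.1 hc).1, hc'⟩
    · obtain ⟨c, hc, hc'⟩ := ih _ _ _ hT (fun r hr => by
        rw [Nat.testBit_or, Bool.or_eq_true, Nat.testBit_two_pow, decide_eq_true_eq] at hr
        rcases hr with hr | rfl
        exacts [hF r hr, hq]) hd₂
      exact ⟨c, (List.mem_filter.1 hc).1, hc'⟩

end Codes

section Configurations

/-- The codes of the three sides of a triangle given by its three digits. -/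
def sides (t : ℕ) : List ℕ :=
  [code (t / 100) (t / 10 % 10), code (t / 100) (t % 10), code (t / 10 % 10) (t % 10)]

/-- The codes of the edge set determined by a list `Y` of triangles and a list `C` of further
edges: those in `C` and the sides of triangles in `Y` that avoid the vertices in `S`. -/
def cover (S : List (ℕ × List ℕ)) (Y C : List ℕ) : List ℕ :=
  C ++ (Y.flatMap sides).filter fun q => S.all fun s => s.1 != q / 10 && s.1 != q % 10

/-- `Y` codes edge-disjoint triangles on labels below `n`, and the edge set determined by `Y`
and `C` has at most `2 * |Y|` elements. -/
def fits (n : ℕ) (S : List (ℕ × List ℕ)) (YC : List ℕ × List ℕ) : Bool :=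
  (YC.1.all fun t => decide (t / 100 < t / 10 % 10 ∧ t / 10 % 10 < t % 10 ∧ t % 10 < n)) &&
    decide (YC.1.flatMap sides).Nodup && decide ((cover S YC.1 YC.2).length ≤ 2 * YC.1.length)

/-- The clause saying that the sides of the triangles in `Y` are edges, and that the edge set
determined by `Y` and `C` meets every triangle containing a vertex in `S`. -/
def reducingClause (S : List (ℕ × List ℕ)) (YC : List ℕ × List ℕ) : ℕ × ℕ :=
  let X := mask (cover S YC.1 YC.2)
  (mask (YC.1.flatMap sides), mask (S.flatMap fun s => s.2.flatMap fun i =>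
    ((s.2.filter fun j => decide (i < j) && !X.testBit (code s.1 i) && !X.testBit (code s.1 j)
      && !X.testBit (code i j)).map (code i))))

/-- `p` labels, injectively below `n ≤ 10`, a part of `G` such that for every `(s, N)` in `S` the
neighbours of `p s` are exactly the vertices labelled by `N`. -/
structure IsLabelling (G : SimpleGraph V) (p : ℕ → V) (n : ℕ) (S : List (ℕ × List ℕ)) : Prop where
  le : n ≤ 10
  inj : ∀ i < n, ∀ j < n, p i = p j → i = j
  ne_nil : S ≠ []
  lt_left : ∀ s ∈ S, s.1 < n
  lt_right : ∀ s ∈ S, ∀ i ∈ s.2, i < n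
  adj_iff : ∀ s ∈ S, ∀ w, G.Adj (p s.1) w ↔ ∃ i ∈ s.2, p i = w

theorem mem_sides_of_mem {t i j : ℕ} (hi : i = t / 100 ∨ i = t / 10 % 10 ∨ i = t % 10)
    (hj : j = t / 100 ∨ j = t / 10 % 10 ∨ j = t % 10) (hij : i ≠ j) : code i j ∈ sides t := by
  simp only [sides, List.mem_cons, List.not_mem_nil, or_false]
  rcases hi with hi | hi | hi <;> rcases hj with hj | hj | hj <;> subst hi <;> subst hj <;>
    first
      | exact absurd rfl hij
      | simp only [true_or, or_true]
      | (rw [code_comm]; simp only [true_or, or_true])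

theorem IsLabelling.not_applies [DecidableEq V] {G : SimpleGraph V} (hirr : IrreducibleGraph G)
    {p : ℕ → V} {n : ℕ} {S : List (ℕ × List ℕ)} (hp : IsLabelling G p n S)
    {YC : List ℕ × List ℕ} (hf : fits n S YC = true) :
    ¬ Applies (Holds G p) (reducingClause S YC) := by
  classical
  obtain ⟨Y, C⟩ := YC
  rintro ⟨hP, hA⟩
  simp only [fits, Bool.and_eq_true, List.all_eq_true, decide_eq_true_eq] at hf
  obtain ⟨⟨hdig, hnd⟩, hlen⟩ := hf
  have hn := hp.le
  have hlt10 : ∀ {i}, i < n → i < 10 := fun h => h.trans_le hn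
  have hP' : ∀ t ∈ Y, ∀ q ∈ sides t, Holds G p q := fun t ht q hq =>
    hP q (testBit_mask.2 (List.mem_flatMap.2 ⟨t, ht, hq⟩))
  let tri : ℕ → Finset V := fun t => {p (t / 100), p (t / 10 % 10), p (t % 10)}
  have mem_tri : ∀ t ∈ Y, ∀ u ∈ tri t,
      ∃ i < n, (i = t / 100 ∨ i = t / 10 % 10 ∨ i = t % 10) ∧ p i = u := by
    intro t ht u hu
    have := hdig t ht
    simp only [tri, Finset.mem_insert, Finset.mem_singleton] at hu
    rcases hu with rfl | rfl | rfl
    · exact ⟨_, by omega, Or.inl rfl, rfl⟩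
    · exact ⟨_, by omega, Or.inr (Or.inl rfl), rfl⟩
    · exact ⟨_, by omega, Or.inr (Or.inr rfl), rfl⟩
  have mem_sides : ∀ t ∈ Y, ∀ i < n, ∀ j < n, p i ∈ tri t → p j ∈ tri t → i ≠ j →
      code i j ∈ sides t := by
    intro t ht i hi j hj hit hjt hij
    obtain ⟨i', hi', hi'', hpi⟩ := mem_tri t ht _ hit
    obtain ⟨j', hj', hj'', hpj⟩ := mem_tri t ht _ hjt
    obtain rfl := hp.inj _ hi' _ hi hpi
    obtain rfl := hp.inj _ hj' _ hj hpj
    exact mem_sides_of_mem hi'' hj'' hij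
  have hclique : ∀ t ∈ Y, G.IsNClique 3 (tri t) := by
    intro t ht
    have hd := hdig t ht
    have hh := hP' t ht
    simp only [sides, List.mem_cons, List.not_mem_nil, or_false, forall_eq_or_imp, forall_eq] at hh
    rw [holds_code (by omega) (by omega), holds_code (by omega) (by omega),
      holds_code (by omega) (by omega)] at hh
    exact SimpleGraph.is3Clique_triple_iff.2 hh
  have hdisj : ∀ t₁ ∈ Y, ∀ t₂ ∈ Y, ∀ q, q ∈ sides t₁ → q ∈ sides t₂ → t₁ = t₂ := by
    intro t₁ h₁ t₂ h₂ q hq₁ hq₂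
    by_contra hne
    have : Std.Symm (Function.onFun List.Disjoint sides) := ⟨fun _ _ h => List.Disjoint.symm h⟩
    exact (List.nodup_flatMap.1 hnd).2.forall h₁ h₂ hne hq₁ hq₂
  have hshare : ∀ t₁ ∈ Y, ∀ t₂ ∈ Y, ∀ u v, u ≠ v → u ∈ tri t₁ → v ∈ tri t₁ → u ∈ tri t₂ →
      v ∈ tri t₂ → t₁ = t₂ := by
    intro t₁ h₁ t₂ h₂ u v huv hu₁ hv₁ hu₂ hv₂
    obtain ⟨i, hi, -, rfl⟩ := mem_tri t₁ h₁ u hu₁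
    obtain ⟨j, hj, -, rfl⟩ := mem_tri t₁ h₁ v hv₁
    have hij : i ≠ j := fun h => huv (congrArg p h)
    exact hdisj t₁ h₁ t₂ h₂ _ (mem_sides t₁ h₁ i hi j hj hu₁ hv₁ hij)
      (mem_sides t₂ h₂ i hi j hj hu₂ hv₂ hij)
  have hinj : ∀ t₁ ∈ Y, ∀ t₂ ∈ Y, tri t₁ = tri t₂ → t₁ = t₂ := by
    intro t₁ h₁ t₂ h₂ h
    have hd := hdig t₁ h₁
    refine hshare t₁ h₁ t₂ h₂ (p (t₁ / 100)) (p (t₁ % 10)) (fun he => ?_) (by simp [tri])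
      (by simp [tri]) (h ▸ by simp [tri]) (h ▸ by simp [tri])
    have := hp.inj _ (by omega) _ (by omega) he
    omega
  have hYnd : Y.Nodup := by
    refine List.Pairwise.imp ?_ (List.nodup_flatMap.1 hnd).2
    rintro a b hab rfl
    exact hab (a := code (a / 100) (a / 10 % 10)) (by simp [sides]) (by simp [sides])
  let edge : ℕ → Sym2 V := fun q => s(p (q / 10), p (q % 10))
  let X : Finset (Sym2 V) := ((cover S Y C).map edge).toFinset.filter (· ∈ G.edgeSet)
  have mem_X : ∀ i < n, ∀ j < n, G.Adj (p i) (p j) → code i j ∈ cover S Y C →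
      s(p i, p j) ∈ X := by
    intro i hi j hj hij hc
    refine Finset.mem_filter.2 ⟨List.mem_toFinset.2 (List.mem_map.2 ⟨_, hc, ?_⟩), hij⟩
    exact mk_code (hlt10 hi) (hlt10 hj) p
  refine hirr ⟨(S.map fun s => p s.1).toFinset, X, (Y.map tri).toFinset, ?_, ?_, ⟨?_, ?_⟩, ?_,
    ?_, ?_⟩
  · obtain ⟨s, hs⟩ := List.exists_mem_of_ne_nil S hp.ne_nil
    exact ⟨p s.1, List.mem_toFinset.2 (List.mem_map.2 ⟨s, hs, rfl⟩)⟩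
  · intro e he
    exact (Finset.mem_filter.1 he).2
  · intro t' ht'
    obtain ⟨t, ht, rfl⟩ := List.mem_map.1 (List.mem_toFinset.1 ht')
    exact hclique t ht
  · intro t₁' h₁' t₂' h₂' hne e he
    obtain ⟨t₁, h₁, rfl⟩ := List.mem_map.1 (List.mem_toFinset.1 h₁')
    obtain ⟨t₂, h₂, rfl⟩ := List.mem_map.1 (List.mem_toFinset.1 h₂')
    induction e with | _ u v =>
    rintro ⟨ha, hb⟩
    refine hne (congrArg tri (hshare t₁ h₁ t₂ h₂ u v (G.ne_of_adj he) ?_ ?_ ?_ ?_))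
    exacts [ha u (Sym2.mem_mk_left u v), ha v (Sym2.mem_mk_right u v),
      hb u (Sym2.mem_mk_left u v), hb v (Sym2.mem_mk_right u v)]
  · have hcard : (Y.map tri).toFinset.card = Y.length := by
      rw [List.toFinset_card_of_nodup, List.length_map]
      exact hYnd.map_on hinj
    rw [hcard]
    refine (Finset.card_filter_le _ _).trans ((List.toFinset_card_le _).trans ?_)
    rwa [List.length_map]
  · rintro t ht ⟨v, hv, hvt⟩
    obtain ⟨s, hs, rfl⟩ := List.mem_map.1 (List.mem_toFinset.1 hv)
    obtain ⟨u, w, hut, hwt, hu, hw, huw⟩ : ∃ u w, u ∈ t ∧ w ∈ t ∧ G.Adj (p s.1) u ∧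
        G.Adj (p s.1) w ∧ G.Adj u w := by
      obtain ⟨a, b, c, hab, hac, hbc, rfl⟩ := SimpleGraph.is3Clique_iff.1 ht
      simp only [Finset.mem_insert, Finset.mem_singleton] at hvt
      rcases hvt with h | h | h <;> rw [h]
      · exact ⟨b, c, by simp, by simp, hab, hac, hbc⟩
      · exact ⟨a, c, by simp, by simp, hab.symm, hbc, hac⟩
      · exact ⟨a, b, by simp, by simp, hac.symm, hbc.symm, hab⟩
    obtain ⟨i, hi, rfl⟩ := (hp.adj_iff s hs u).1 hu
    obtain ⟨j, hj, rfl⟩ := (hp.adj_iff s hs w).1 hw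
    have key : ∀ i ∈ s.2, ∀ j ∈ s.2, i < j → p i ∈ t → p j ∈ t → G.Adj (p s.1) (p i) →
        G.Adj (p s.1) (p j) → G.Adj (p i) (p j) → ∃ e ∈ X, ∀ v ∈ e, v ∈ t := by
      intro i hi j hj hij hit hjt hsi hsj hadj
      have hin := hp.lt_right s hs i hi
      have hjn := hp.lt_right s hs j hj
      have hsn := hp.lt_left s hs
      by_cases h₁ : code s.1 i ∈ cover S Y C
      · exact ⟨_, mem_X _ hsn _ hin hsi h₁, by simp [hvt, hit]⟩
      by_cases h₂ : code s.1 j ∈ cover S Y C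
      · exact ⟨_, mem_X _ hsn _ hjn hsj h₂, by simp [hvt, hjt]⟩
      by_cases h₃ : code i j ∈ cover S Y C
      · exact ⟨_, mem_X _ hin _ hjn hadj h₃, by simp [hit, hjt]⟩
      refine absurd ((holds_code (hlt10 hin) (hlt10 hjn)).2 hadj) (hA _ (testBit_mask.2 ?_))
      refine List.mem_flatMap.2 ⟨s, hs, List.mem_flatMap.2 ⟨i, hi, List.mem_map.2
        ⟨j, List.mem_filter.2 ⟨hj, ?_⟩, rfl⟩⟩⟩
      simp only [Bool.and_eq_true, decide_eq_true_eq, Bool.not_eq_true', ← Bool.not_eq_true,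
        testBit_mask]
      exact ⟨⟨⟨hij, h₁⟩, h₂⟩, h₃⟩
    rcases lt_trichotomy i j with hij | rfl | hij
    · exact key i hi j hj hij hut hwt hu hw huw
    · exact absurd huw (G.irrefl)
    · exact key j hj i hi hij hwt hut hw hu huw.symm
  · intro t' ht' u v hu hv huv hu₀ hv₀
    obtain ⟨t, ht, rfl⟩ := List.mem_map.1 (List.mem_toFinset.1 ht')
    obtain ⟨i, hi, -, rfl⟩ := mem_tri t ht u hu
    obtain ⟨j, hj, -, rfl⟩ := mem_tri t ht v hv
    have hij : i ≠ j := fun h => G.ne_of_adj huv (congrArg p h)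
    refine mem_X i hi j hj huv (List.mem_append_right _ (List.mem_filter.2
      ⟨List.mem_flatMap.2 ⟨t, ht, mem_sides t ht i hi j hj hu hv hij⟩, ?_⟩))
    have hmk := mk_code (hlt10 hi) (hlt10 hj) p
    simp only [List.all_eq_true, Bool.and_eq_true, bne_iff_ne, ne_eq]
    intro s hs
    have hs₀ : p s.1 ∈ (S.map fun s => p s.1).toFinset :=
      List.mem_toFinset.2 (List.mem_map.2 ⟨s, hs, rfl⟩)
    have hmem : ∀ k, p k ∈ s(p i, p j) → s.1 ≠ k := by
      rintro k hk rfl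
      rcases Sym2.mem_iff.1 hk with h | h
      · exact hu₀ (h ▸ hs₀)
      · exact hv₀ (h ▸ hs₀)
    exact ⟨hmem _ (hmk ▸ Sym2.mem_mk_left _ _), hmem _ (hmk ▸ Sym2.mem_mk_right _ _)⟩

end Configurations

section Decision

/-- The pairs of distinct entries of a list of labels. -/
def labelPairs (N : List ℕ) : List (ℕ × ℕ) :=
  N.flatMap fun a => (N.filter fun b => decide (a < b)).map (Prod.mk a)

theorem mem_labelPairs {N : List ℕ} {e : ℕ × ℕ} :
    e ∈ labelPairs N ↔ e.1 ∈ N ∧ e.2 ∈ N ∧ e.1 < e.2 := by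
  obtain ⟨a, b⟩ := e
  simp [labelPairs]

/-- The codes of the pairs that the configuration `S` says are edges. -/
def edgeCodes (S : List (ℕ × List ℕ)) : List ℕ := S.flatMap fun s => s.2.map (code s.1)

/-- The codes of the pairs of labels below `n` that the configuration `S` says are not edges. -/
def nonedgeCodes (n : ℕ) (S : List (ℕ × List ℕ)) : List ℕ :=
  S.flatMap fun s => ((List.range n).filter fun j => !s.2.contains j).map (code s.1)

/-- The codes of the pairs inside the neighbourhoods in `S`, except those containing a vertex
in `S`. -/
def openCodes (n : ℕ) (S : List (ℕ × List ℕ)) : List ℕ :=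
  ((labelPairs (List.range n)).filter fun e =>
    (S.all fun s => s.1 != e.1 && s.1 != e.2) &&
      S.any fun s => s.2.contains e.1 && s.2.contains e.2).map fun e => code e.1 e.2

/-- Whenever the pairs in `T` are edges and those in `F` are not, one of the reducing clauses of
the candidates in `R`, or one of the clauses in `cs`, applies. -/
def settles (n : ℕ) (S : List (ℕ × List ℕ)) (T F : List ℕ) (R : List (List ℕ × List ℕ))
    (cs : List (ℕ × ℕ)) : Bool :=
  decides ((openCodes n S).filter fun q => !(T ++ F).contains q) (mask (edgeCodes S ++ T))
    (mask (nonedgeCodes n S ++ F)) ((R.filter (fits n S)).map (reducingClause S) ++ cs)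

theorem IsLabelling.exists_applies [DecidableEq V] {G : SimpleGraph V} (hirr : IrreducibleGraph G)
    {p : ℕ → V} {n : ℕ} {S : List (ℕ × List ℕ)} (hp : IsLabelling G p n S) {T F : List ℕ}
    (hT : ∀ q ∈ T, Holds G p q) (hF : ∀ q ∈ F, ¬ Holds G p q) {R : List (List ℕ × List ℕ)}
    {cs : List (ℕ × ℕ)} (hd : settles n S T F R cs = true) :
    ∃ c ∈ cs, Applies (Holds G p) c := by
  have hn := hp.le
  suffices h : ∃ c ∈ (R.filter (fits n S)).map (reducingClause S) ++ cs,
      Applies (Holds G p) c by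
    obtain ⟨c, hc, hc'⟩ := h
    rcases List.mem_append.1 hc with hc | hc
    · obtain ⟨YC, hYC, rfl⟩ := List.mem_map.1 hc
      exact absurd hc' (hp.not_applies hirr (List.mem_filter.1 hYC).2)
    · exact ⟨c, hc, hc'⟩
  refine exists_applies_of_decides _ _ _ _ ?_ ?_ hd
  · intro q hq
    rcases List.mem_append.1 (testBit_mask.1 hq) with hq | hq
    · obtain ⟨s, hs, hq⟩ := List.mem_flatMap.1 hq
      obtain ⟨i, hi, rfl⟩ := List.mem_map.1 hq
      rw [holds_code ((hp.lt_left s hs).trans_le hn) ((hp.lt_right s hs i hi).trans_le hn)]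
      exact (hp.adj_iff s hs _).2 ⟨i, hi, rfl⟩
    · exact hT q hq
  · intro q hq
    rcases List.mem_append.1 (testBit_mask.1 hq) with hq | hq
    · obtain ⟨s, hs, hq⟩ := List.mem_flatMap.1 hq
      obtain ⟨j, hj, rfl⟩ := List.mem_map.1 hq
      simp only [List.mem_filter, List.mem_range, Bool.not_eq_true', List.contains_eq_mem,
        decide_eq_false_iff_not] at hj
      rw [holds_code ((hp.lt_left s hs).trans_le hn) (hj.1.trans_le hn)]
      intro hadj
      obtain ⟨i, hi, hij⟩ := (hp.adj_iff s hs _).1 hadj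
      exact hj.2 (hp.inj i (hp.lt_right s hs i hi) j hj.1 hij ▸ hi)
    · exact hF q hq

end Decision

section Robust

theorem Robust.five_le_ncard [Finite V] {G : SimpleGraph V} (hrob : Robust G) {v : V} {U : Set V}
    (hU : U ⊆ G.neighborSet v) (hne : U.Nonempty)
    (hcl : ∀ u ∈ U, ∀ w, G.Adj v w → G.Adj u w → w ∈ U) : 5 ≤ U.ncard := by
  obtain ⟨u, hu⟩ := hne
  let u' : G.neighborSet v := ⟨u, hU hu⟩
  let c := (G.induce (G.neighborSet v)).connectedComponentMk u'
  have hsub : ∀ w : G.neighborSet v, (G.induce (G.neighborSet v)).Reachable u' w → (w : V) ∈ U := by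
    rintro w ⟨q⟩
    have : ∀ {a b : G.neighborSet v}, (G.induce (G.neighborSet v)).Walk a b →
        (a : V) ∈ U → (b : V) ∈ U := by
      intro a b q
      induction q with
      | nil => exact id
      | cons hadj _ ih => exact fun ha => ih (hcl _ ha _ (Subtype.property _) hadj)
    exact this q hu
  calc 5 ≤ c.supp.ncard := hrob v c
    _ = (Subtype.val '' c.supp).ncard :=
      (Set.ncard_image_of_injective _ Subtype.val_injective).symm
    _ ≤ U.ncard := by
      refine Set.ncard_le_ncard ?_ (Set.toFinite _)
      rintro _ ⟨w, hw, rfl⟩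
      exact hsub w (SimpleGraph.ConnectedComponent.exact hw).symm

theorem IrreducibleGraph.neighborSet_nonempty {G : SimpleGraph V} (hirr : IrreducibleGraph G)
    (v : V) : (G.neighborSet v).Nonempty := by
  by_contra hne
  refine hirr ⟨{v}, ∅, ∅, by simp, by simp, ⟨by simp, by simp⟩, by simp, ?_, by simp⟩
  rintro t ht ⟨u, hu, hut⟩
  obtain rfl := Finset.mem_singleton.1 hu
  have h1 : 1 < t.card := by rw [ht.card_eq]; norm_num
  obtain ⟨w, hw, hwu⟩ := Finset.exists_mem_ne h1 u
  exact absurd ⟨w, ht.isClique hut hw hwu.symm⟩ hne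

end Robust

section Star

/-- The configuration of a vertex, labelled `d`, with its `d` neighbours. -/
def starConfig (d : ℕ) : List (ℕ × List ℕ) := [(d, List.range d)]

/-- The clauses saying that a set of at most three neighbours of the vertex `d` has no edge to the
other neighbours. -/
def cutClauses (d : ℕ) : List (ℕ × ℕ) :=
  ((List.range d).sublists.filter fun U => decide (0 < U.length ∧ U.length < 4)).map fun U =>
    (mask [], mask (U.flatMap fun i => ((List.range d).filter fun j => !U.contains j).map (code i)))

/-- The clauses saying that `a` is adjacent neither to `b` nor to `c`, for `a`, `b`, `c` in `N`. -/
def cherryClauses (N : List ℕ) : List (ℕ × ℕ) :=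
  N.flatMap fun a => ((labelPairs N).filter fun e => decide [a, e.1, e.2].Nodup).map fun e =>
    (mask [], mask [code a e.1, code a e.2])

theorem settles_cherry_five :
    settles 6 (starConfig 5) [] [01, 02]
    [([035], [35]), ([045], [35]), ([045], [45]), ([235], [45]), ([035, 125], [35, 45]),
     ([035, 145], [35, 45]), ([035, 245], [05, 35]), ([045, 125], [25, 45]),
     ([045, 135], [25, 45])]
      (cutClauses 5) = true := by
  decide +kernel

theorem settles_cherry_six :
    settles 7 (starConfig 6) [] [01, 02]
    [([036], [36]), ([046], [46]), ([056], [56]), ([346], [56]), ([356], [46]), ([456], [36]),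
     ([036, 126], [06, 16]), ([036, 126], [06, 26]), ([036, 126], [16, 36]),
     ([036, 126], [26, 36]), ([036, 126], [36, 46]), ([036, 126], [36, 56]),
     ([036, 146], [36, 46]), ([036, 146], [36, 56]), ([036, 156], [36, 56]),
     ([036, 246], [36, 46]), ([036, 256], [36, 46]), ([046, 126], [16, 36]),
     ([046, 126], [16, 46]), ([046, 126], [26, 36]), ([046, 126], [26, 46]),
     ([046, 126], [36, 56]), ([046, 126], [46, 56]), ([046, 136], [06, 26]),
     ([046, 136], [36, 46]), ([046, 136], [46, 56]), ([046, 156], [36, 56]),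
     ([046, 156], [46, 56]), ([046, 236], [06, 16]), ([046, 236], [16, 46]),
     ([046, 236], [46, 56]), ([046, 256], [36, 46]), ([056, 126], [16, 36]),
     ([056, 126], [16, 46]), ([056, 126], [16, 56]), ([056, 126], [26, 36]),
     ([056, 126], [26, 46]), ([056, 126], [26, 56]), ([056, 126], [36, 46]),
     ([056, 136], [36, 46]), ([056, 136], [36, 56]), ([056, 146], [26, 56]),
     ([056, 146], [36, 46]), ([056, 146], [36, 56]), ([056, 146], [46, 56]),
     ([056, 236], [16, 46]), ([056, 236], [16, 56]), ([056, 236], [46, 56]),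
     ([056, 246], [36, 56]), ([036, 126, 456], [36, 46, 56]), ([036, 146, 256], [06, 16, 26]),
     ([036, 146, 256], [16, 26, 46]), ([036, 146, 256], [26, 36, 56]),
     ([036, 146, 256], [36, 46, 56]), ([036, 156, 246], [06, 16, 36]),
     ([036, 156, 246], [06, 26, 36]), ([036, 156, 246], [06, 36, 46]),
     ([036, 156, 246], [06, 36, 56]), ([046, 126, 356], [36, 46, 56]),
     ([046, 136, 256], [06, 36, 46]), ([046, 136, 256], [26, 46, 56]),
     ([046, 156, 236], [06, 26, 46]), ([046, 156, 236], [06, 36, 46]),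
     ([056, 126, 346], [06, 16, 26]), ([056, 126, 346], [16, 26, 56]),
     ([056, 136, 246], [16, 36, 56])]
      (cutClauses 6) = true := by
  decide +kernel

theorem settles_pair_five :
    settles 6 (starConfig 5) [] [03, 12] [([014, 025, 135, 234], [])]
      (cherryClauses (List.range 5)) = true := by
  decide +kernel

theorem settles_pair_six :
    settles 7 (starConfig 6) [45] [03, 12] [([014, 026, 136, 234, 456], [56])]
      (cherryClauses (List.range 6)) = true := by
  decide +kernel

end Star

section Tight

/-- The pairs of non-adjacent neighbours of `v` are pairwise disjoint; there is at most one such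
pair if `deg v = 5`, and there cannot be exactly two if `deg v = 6`. -/
structure IsTight (G : SimpleGraph V) (v : V) : Prop where
  cherry : ∀ a b c, (∀ w ∈ [a, b, c], G.Adj v w) → [a, b, c].Nodup → G.Adj a b ∨ G.Adj a c
  five : (G.neighborSet v).ncard = 5 → ∀ a b c d, (∀ w ∈ [a, b, c, d], G.Adj v w) →
    [a, b, c, d].Nodup → G.Adj a b ∨ G.Adj c d
  six : (G.neighborSet v).ncard = 6 → ∀ a b c d e f, (∀ w ∈ [a, b, c, d, e, f], G.Adj v w) →
    [a, b, c, d, e, f].Nodup → G.Adj a b ∨ G.Adj c d ∨ ¬ G.Adj e f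

theorem ncard_eq_length {s : Set V} {l : List V} (hl : l.Nodup) (h : ∀ w, w ∈ s ↔ w ∈ l) :
    s.ncard = l.length := by
  classical
  rw [← List.toFinset_card_of_nodup hl, ← Set.ncard_coe_finset]
  congr 1
  ext w
  simp [h]

/-- Every list of distinct neighbours of `v` can be prolonged to a list of all neighbours. -/
theorem exists_neighbor_list [Finite V] [DecidableEq V] {G : SimpleGraph V} {v : V} {l : List V}
    (hl : ∀ w ∈ l, G.Adj v w) (hnd : l.Nodup) :
    ∃ r : List V, (l ++ r).Nodup ∧ (∀ w, G.Adj v w ↔ w ∈ l ++ r) ∧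
      (l ++ r).length = (G.neighborSet v).ncard := by
  classical
  let r := ((Set.toFinite (G.neighborSet v)).toFinset \ l.toFinset).toList
  have hr : ∀ w, w ∈ r ↔ G.Adj v w ∧ w ∉ l := by simp [r]
  have hmem : ∀ w, G.Adj v w ↔ w ∈ l ++ r := by
    intro w
    rw [List.mem_append, hr]
    by_cases hw : w ∈ l
    · simp [hw, hl w hw]
    · simp [hw]
  have hlr : (l ++ r).Nodup :=
    hnd.append (Finset.nodup_toList _) fun w hw hw' => ((hr w).1 hw').2 hw
  exact ⟨r, hlr, hmem, (ncard_eq_length hlr hmem).symm⟩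

theorem isLabelling_getD {G : SimpleGraph V} {L : List V} (d : V) (hL : L.Nodup) {n : ℕ}
    (hlen : L.length = n) (hn : n ≤ 10) {S : List (ℕ × List ℕ)} (hS : S ≠ [])
    (hlt : ∀ s ∈ S, s.1 < n ∧ ∀ i ∈ s.2, i < n)
    (hadj : ∀ s ∈ S, ∀ w, G.Adj (L.getD s.1 d) w ↔ ∃ i ∈ s.2, L.getD i d = w) :
    IsLabelling G (fun i => L.getD i d) n S := by
  subst hlen
  refine ⟨hn, fun i hi j hj hij => ?_, hS, fun s hs => (hlt s hs).1, fun s hs => (hlt s hs).2, hadj⟩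
  simp only [List.getD_eq_getElem _ _ hi, List.getD_eq_getElem _ _ hj] at hij
  exact (hL.getElem_inj_iff).1 hij

theorem getD_concat {L : List V} {d : ℕ} (hlen : L.length = d) (v : V) :
    (L ++ [v]).getD d v = v := by
  subst hlen
  rw [List.getD_append_right _ _ _ _ le_rfl, Nat.sub_self, List.getD_cons_zero]

theorem isLabelling_star {G : SimpleGraph V} {v : V} {L : List V} (hL : L.Nodup)
    (hmem : ∀ w, G.Adj v w ↔ w ∈ L) {d : ℕ} (hlen : L.length = d) (hd : d ≤ 9) :
    IsLabelling G (fun i => (L ++ [v]).getD i v) (d + 1) (starConfig d) := by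
  have hv : v ∉ L := fun h => G.irrefl ((hmem v).2 h)
  refine isLabelling_getD v (hL.append (List.nodup_singleton v) (by simpa using hv))
    (by simp [hlen]) (by omega) (by simp [starConfig]) ?_ ?_
  · simp only [starConfig, List.mem_singleton, forall_eq, List.mem_range]
    exact ⟨by omega, fun i hi => by omega⟩
  · subst hlen
    simp only [starConfig, List.mem_singleton, forall_eq, List.mem_range]
    intro w
    rw [getD_concat rfl, hmem, List.mem_iff_getElem]
    constructor
    · rintro ⟨i, hi, rfl⟩
      exact ⟨i, hi, by rw [List.getD_append _ _ _ _ hi, List.getD_eq_getElem _ _ hi]⟩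
    · rintro ⟨i, hi, rfl⟩
      exact ⟨i, hi, by rw [List.getD_append _ _ _ _ hi, List.getD_eq_getElem _ _ hi]⟩

theorem Robust.not_applies_cut [Finite V] {G : SimpleGraph V} (hrob : Robust G) {p : ℕ → V} {d : ℕ}
    (hp : IsLabelling G p (d + 1) (starConfig d)) {c : ℕ × ℕ} (hc : c ∈ cutClauses d) :
    ¬ Applies (Holds G p) c := by
  obtain ⟨U, hU, rfl⟩ := List.mem_map.1 hc
  rw [List.mem_filter, List.mem_sublists, decide_eq_true_eq] at hU
  obtain ⟨hsub, hpos, hlt⟩ := hU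
  rw [applies_mask]
  rintro ⟨-, hA⟩
  have hn := hp.le
  have hUd : ∀ i ∈ U, i < d := fun i hi => List.mem_range.1 (hsub.subset hi)
  have hadj : ∀ w, G.Adj (p d) w ↔ ∃ i ∈ List.range d, p i = w :=
    hp.adj_iff (d, List.range d) (by simp [starConfig])
  have h5 : 5 ≤ (p '' {i | i ∈ U}).ncard := by
    refine hrob.five_le_ncard (v := p d) ?_ ?_ ?_
    · rintro _ ⟨i, hi, rfl⟩
      exact (hadj _).2 ⟨i, hsub.subset hi, rfl⟩
    · obtain ⟨i, hi⟩ := List.exists_mem_of_length_pos hpos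
      exact ⟨p i, i, hi, rfl⟩
    · rintro _ ⟨i, hi, rfl⟩ w hw hiw
      obtain ⟨j, hj, rfl⟩ := (hadj w).1 hw
      by_contra hjU
      have hj' : j ∉ U := fun h => hjU ⟨j, h, rfl⟩
      have hjd := List.mem_range.1 hj
      have hid := hUd i hi
      refine hA (code i j) (List.mem_flatMap.2 ⟨i, hi, List.mem_map.2 ⟨j, ?_, rfl⟩⟩)
        ((holds_code (by omega) (by omega)).2 hiw)
      simpa [hj'] using hjd
  have h3 : (p '' {i | i ∈ U}).ncard ≤ U.length := by
    have hfin : {i | i ∈ U} = ((U.toFinset : Finset ℕ) : Set ℕ) := by ext; simp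
    refine (Set.ncard_image_le (hfin ▸ Finset.finite_toSet _)).trans ?_
    rw [hfin, Set.ncard_coe_finset]
    exact List.toFinset_card_le U
  omega

theorem IsLabelling.nodup_map {G : SimpleGraph V} {p : ℕ → V} {n : ℕ} {S : List (ℕ × List ℕ)}
    (hp : IsLabelling G p n S) {l : List ℕ} (hl : ∀ i ∈ l, i < n) (hnd : l.Nodup) :
    (l.map p).Nodup :=
  hnd.map_on fun i hi j hj => hp.inj i (hl i hi) j (hl j hj)

theorem IsLabelling.not_applies_cherry {G : SimpleGraph V} {p : ℕ → V} {n : ℕ}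
    {S : List (ℕ × List ℕ)} (hp : IsLabelling G p n S) {s : ℕ × List ℕ} (hs : s ∈ S)
    (h : ∀ a b c, (∀ w ∈ [a, b, c], G.Adj (p s.1) w) → [a, b, c].Nodup → G.Adj a b ∨ G.Adj a c)
    {c : ℕ × ℕ} (hc : c ∈ cherryClauses s.2) : ¬ Applies (Holds G p) c := by
  obtain ⟨a, ha, hc⟩ := List.mem_flatMap.1 hc
  obtain ⟨e, he, rfl⟩ := List.mem_map.1 hc
  rw [List.mem_filter, mem_labelPairs, decide_eq_true_eq] at he
  obtain ⟨⟨h1, h2, -⟩, hnd⟩ := he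
  have hmem : ∀ i ∈ [a, e.1, e.2], i ∈ s.2 := by simp [ha, h1, h2]
  have hlt : ∀ i ∈ [a, e.1, e.2], i < n := fun i hi => hp.lt_right s hs i (hmem i hi)
  have hn := hp.le
  simp only [List.mem_cons, List.not_mem_nil, or_false, forall_eq_or_imp, forall_eq] at hlt
  rw [applies_mask]
  simp only [List.mem_cons, List.not_mem_nil, or_false, forall_eq_or_imp, forall_eq]
  rw [holds_code (by omega) (by omega), holds_code (by omega) (by omega)]
  have := h (p a) (p e.1) (p e.2) (by
    simp only [List.mem_cons, List.not_mem_nil, or_false, forall_eq_or_imp, forall_eq]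
    exact ⟨(hp.adj_iff s hs _).2 ⟨_, ha, rfl⟩, (hp.adj_iff s hs _).2 ⟨_, h1, rfl⟩,
      (hp.adj_iff s hs _).2 ⟨_, h2, rfl⟩⟩)
    (hp.nodup_map (l := [a, e.1, e.2]) (by simpa using hlt) hnd)
  tauto

theorem IrreducibleGraph.isTight [Finite V] [DecidableEq V] {G : SimpleGraph V}
    (hirr : IrreducibleGraph G) (hrob : Robust G) {v : V}
    (hv : (G.neighborSet v).ncard = 5 ∨ (G.neighborSet v).ncard = 6) : IsTight G v := by
  have cherry : ∀ a b c, (∀ w ∈ [a, b, c], G.Adj v w) → [a, b, c].Nodup →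
      G.Adj a b ∨ G.Adj a c := by
    intro a b c hN hnd
    by_contra! hcon
    obtain ⟨r, hr, hmem, hlen⟩ := exists_neighbor_list hN hnd
    have hF : ∀ q ∈ [01, 02], ¬ Holds G (fun i => ([a, b, c] ++ r ++ [v]).getD i v) q := by
      simpa [Holds] using hcon
    rcases hv with hv | hv <;> rw [hv] at hlen
    · have hp := isLabelling_star hr hmem hlen (by norm_num)
      obtain ⟨c, hc, hc'⟩ := hp.exists_applies hirr (by simp) hF settles_cherry_five
      exact hrob.not_applies_cut hp hc hc'
    · have hp := isLabelling_star hr hmem hlen (by norm_num)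
      obtain ⟨c, hc, hc'⟩ := hp.exists_applies hirr (by simp) hF settles_cherry_six
      exact hrob.not_applies_cut hp hc hc'
  refine ⟨cherry, fun h5 a b c d hN hnd => ?_, fun h6 a b c d e f hN hnd => ?_⟩
  · by_contra! hcon
    have hperm : [a, b, c, d].Perm [a, c, d, b] := by grind
    obtain ⟨r, hr, hmem, hlen⟩ := exists_neighbor_list (l := [a, c, d, b])
      (fun w hw => hN w (hperm.mem_iff.2 hw)) (hperm.nodup_iff.1 hnd)
    have hp := isLabelling_star hr hmem (hlen.trans h5) (by norm_num)
    obtain ⟨c, hc, hc'⟩ := hp.exists_applies hirr (by simp)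
      (by simpa [Holds] using hcon) settles_pair_five
    exact hp.not_applies_cherry (s := (5, List.range 5)) (by simp [starConfig])
      (by simpa only [getD_concat (hlen.trans h5)] using cherry) hc hc'
  · by_contra! hcon
    have hperm : [a, b, c, d, e, f].Perm [a, c, d, b, e, f] := by grind
    obtain ⟨r, hr, hmem, hlen⟩ := exists_neighbor_list (l := [a, c, d, b, e, f])
      (fun w hw => hN w (hperm.mem_iff.2 hw)) (hperm.nodup_iff.1 hnd)
    have hp := isLabelling_star hr hmem (hlen.trans h6) (by norm_num)
    obtain ⟨c, hc, hc'⟩ := hp.exists_applies hirr (by simpa [Holds] using hcon.2.2)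
      (by simpa [Holds] using And.intro hcon.1 hcon.2.1) settles_pair_six
    exact hp.not_applies_cherry (s := (6, List.range 6)) (by simp [starConfig])
      (by simpa only [getD_concat (hlen.trans h6)] using cherry) hc hc'

end Tight

section Pairs

/-- The clauses that the tightness of a vertex with neighbours labelled by `N` excludes. -/
def tightClauses (N : List ℕ) : List (ℕ × ℕ) :=
  cherryClauses N ++ (labelPairs N).flatMap fun e =>
    ((labelPairs N).filter fun f =>
      decide (e.1 < f.1) && decide [e.1, e.2, f.1, f.2].Nodup).flatMap fun f =>
      if N.length = 5 then [(mask [], mask [code e.1 e.2, code f.1 f.2])]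
      else if N.length = 6 then
        (labelPairs (N.filter fun i => !([e.1, e.2, f.1, f.2].contains i))).map fun g =>
          (mask [code g.1 g.2], mask [code e.1 e.2, code f.1 f.2])
      else []

/-- The clauses excluded by the tightness of the vertices in `S`. -/
def configClauses (S : List (ℕ × List ℕ)) : List (ℕ × ℕ) := S.flatMap fun s => tightClauses s.2

/-- The clause saying that the neighbourhoods in `S` are cliques. -/
def cliqueClause (S : List (ℕ × List ℕ)) : ℕ × ℕ :=
  (mask (S.flatMap fun s => (labelPairs s.2).map fun e => code e.1 e.2), mask [])

theorem IsTight.not_applies {G : SimpleGraph V} {p : ℕ → V} {n : ℕ} {S : List (ℕ × List ℕ)}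
    (hp : IsLabelling G p n S) {s : ℕ × List ℕ} (hs : s ∈ S) (ht : IsTight G (p s.1))
    (hlen : (G.neighborSet (p s.1)).ncard = s.2.length) {c : ℕ × ℕ} (hc : c ∈ tightClauses s.2) :
    ¬ Applies (Holds G p) c := by
  rcases List.mem_append.1 hc with hc | hc
  · exact hp.not_applies_cherry hs ht.cherry hc
  obtain ⟨e, he, hc⟩ := List.mem_flatMap.1 hc
  obtain ⟨f, hf, hc⟩ := List.mem_flatMap.1 hc
  rw [List.mem_filter, mem_labelPairs, Bool.and_eq_true, decide_eq_true_eq, decide_eq_true_eq] at hf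
  rw [mem_labelPairs] at he
  obtain ⟨he₁, he₂, -⟩ := he
  obtain ⟨⟨hf₁, hf₂, -⟩, -, hnd⟩ := hf
  have hadj : ∀ i ∈ s.2, G.Adj (p s.1) (p i) := fun i hi => (hp.adj_iff s hs _).2 ⟨i, hi, rfl⟩
  have hlt : ∀ i ∈ s.2, i < n := hp.lt_right s hs
  have hlt10 : ∀ i ∈ s.2, i < 10 := fun i hi => (hlt i hi).trans_le hp.le
  split_ifs at hc with h5 h6
  · rw [List.mem_singleton] at hc
    subst hc
    rw [applies_mask]
    simp only [List.mem_cons, List.not_mem_nil, or_false, forall_eq_or_imp, forall_eq]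
    rw [holds_code (hlt10 _ he₁) (hlt10 _ he₂), holds_code (hlt10 _ hf₁) (hlt10 _ hf₂)]
    have := ht.five (hlen.trans h5) (p e.1) (p e.2) (p f.1) (p f.2)
      (by simp [hadj, he₁, he₂, hf₁, hf₂])
      (hp.nodup_map (l := [e.1, e.2, f.1, f.2]) (by simp [hlt, he₁, he₂, hf₁, hf₂]) hnd)
    tauto
  · obtain ⟨g, hg, rfl⟩ := List.mem_map.1 hc
    simp only [mem_labelPairs, List.mem_filter, List.contains_eq_mem, Bool.not_eq_true',
      decide_eq_false_iff_not] at hg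
    obtain ⟨⟨hg₁, hg₁'⟩, ⟨hg₂, hg₂'⟩, hg₁₂⟩ := hg
    have hnd : ([e.1, e.2, f.1, f.2] ++ [g.1, g.2]).Nodup :=
      hnd.append (by simp [hg₁₂.ne]) (by simp_all)
    rw [applies_mask]
    simp only [List.mem_cons, List.not_mem_nil, or_false, forall_eq_or_imp, forall_eq]
    rw [holds_code (hlt10 _ he₁) (hlt10 _ he₂), holds_code (hlt10 _ hf₁) (hlt10 _ hf₂),
      holds_code (hlt10 _ hg₁) (hlt10 _ hg₂)]
    have := ht.six (hlen.trans h6) (p e.1) (p e.2) (p f.1) (p f.2) (p g.1) (p g.2)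
      (by simp [hadj, he₁, he₂, hf₁, hf₂, hg₁, hg₂])
      (hp.nodup_map (l := [e.1, e.2, f.1, f.2, g.1, g.2])
        (by simp [hlt, he₁, he₂, hf₁, hf₂, hg₁, hg₂]) hnd)
    tauto
  · exact absurd hc List.not_mem_nil

theorem IsLabelling.exists_applies_of_isTight [DecidableEq V] {G : SimpleGraph V}
    (hirr : IrreducibleGraph G) {p : ℕ → V} {n : ℕ} {S : List (ℕ × List ℕ)}
    (hp : IsLabelling G p n S)
    (ht : ∀ s ∈ S, IsTight G (p s.1) ∧ (G.neighborSet (p s.1)).ncard = s.2.length)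
    {R : List (List ℕ × List ℕ)} {cs : List (ℕ × ℕ)}
    (hd : settles n S [] [] R (configClauses S ++ cs) = true) :
    ∃ c ∈ cs, Applies (Holds G p) c := by
  obtain ⟨c, hc, hc'⟩ := hp.exists_applies hirr (by simp) (by simp) hd
  rcases List.mem_append.1 hc with hc | hc
  · obtain ⟨s, hs, hc⟩ := List.mem_flatMap.1 hc
    exact absurd hc' ((ht s hs).1.not_applies hp hs (ht s hs).2 hc)
  · exact ⟨c, hc, hc'⟩

theorem IsLabelling.isClique_of_applies {G : SimpleGraph V} {p : ℕ → V} {n : ℕ}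
    {S : List (ℕ × List ℕ)} (hp : IsLabelling G p n S)
    (h : Applies (Holds G p) (cliqueClause S)) {s : ℕ × List ℕ} (hs : s ∈ S) :
    G.IsClique (G.neighborSet (p s.1)) := by
  have key : ∀ i ∈ s.2, ∀ j ∈ s.2, i < j → G.Adj (p i) (p j) := fun i hi j hj hij =>
    (holds_code ((hp.lt_right s hs i hi).trans_le hp.le)
      ((hp.lt_right s hs j hj).trans_le hp.le)).1 (h.1 _ (testBit_mask.2 (List.mem_flatMap.2
        ⟨s, hs, List.mem_map.2 ⟨(i, j), mem_labelPairs.2 ⟨hi, hj, hij⟩, rfl⟩⟩)))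
  intro u hu w hw huw
  obtain ⟨i, hi, rfl⟩ := (hp.adj_iff s hs u).1 hu
  obtain ⟨j, hj, rfl⟩ := (hp.adj_iff s hs w).1 hw
  rcases lt_trichotomy i j with hij | rfl | hij
  · exact key i hi j hj hij
  · exact absurd rfl huw
  · exact (key j hj i hi hij).symm

/-- The configuration of two vertices, labelled `c + a + b` and `c + a + b + 1`, with `c` common
neighbours and, apart from each other, `a` and `b` further neighbours. -/
def pairConfig (c a b : ℕ) (adj : Bool) : List (ℕ × List ℕ) :=
  [(c + a + b, List.range' 0 c ++ List.range' c a ++ if adj then [c + a + b + 1] else []),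
   (c + a + b + 1, List.range' 0 c ++ List.range' (c + a) b ++ if adj then [c + a + b] else [])]

theorem mem_iff_exists_getD (l₁ l₂ l₃ : List V) (d w : V) :
    w ∈ l₂ ↔ ∃ i ∈ List.range' l₁.length l₂.length, (l₁ ++ l₂ ++ l₃).getD i d = w := by
  have key : ∀ k, k < l₂.length → (l₁ ++ l₂ ++ l₃).getD (l₁.length + k) d = l₂.getD k d := by
    intro k hk
    rw [List.getD_append _ _ _ _ (by rw [List.length_append]; omega),
      List.getD_append_right _ _ _ _ (by omega), Nat.add_sub_cancel_left]
  rw [List.mem_iff_getElem]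
  constructor
  · rintro ⟨k, hk, rfl⟩
    exact ⟨l₁.length + k, List.mem_range'_1.2 (by omega), by
      rw [key k hk, List.getD_eq_getElem _ _ hk]⟩
  · rintro ⟨i, hi, rfl⟩
    obtain ⟨k, rfl⟩ := Nat.exists_eq_add_of_le (List.mem_range'_1.1 hi).1
    have hk : k < l₂.length := by have := (List.mem_range'_1.1 hi).2; omega
    exact ⟨k, hk, by rw [key k hk, List.getD_eq_getElem _ _ hk]⟩

theorem getD_append_pair {l : List V} (x y : V) {n : ℕ} (hlen : l.length = n) :
    (l ++ [x, y]).getD n x = x ∧ (l ++ [x, y]).getD (n + 1) x = y := by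
  rw [List.getD_append_right _ _ _ _ hlen.le, List.getD_append_right _ _ _ _ (by omega), hlen,
    Nat.sub_self, Nat.add_sub_cancel_left]
  exact ⟨rfl, rfl⟩

theorem isLabelling_pair {G : SimpleGraph V} {x y : V} {C A B : List V}
    (hL : (C ++ A ++ B ++ [x, y]).Nodup) {adj : Bool}
    (hx : ∀ w, G.Adj x w ↔ (w ∈ C ∨ w ∈ A) ∨ adj = true ∧ w = y)
    (hy : ∀ w, G.Adj y w ↔ (w ∈ C ∨ w ∈ B) ∨ adj = true ∧ w = x)
    (hle : C.length + A.length + B.length ≤ 8) :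
    IsLabelling G (fun i => (C ++ A ++ B ++ [x, y]).getD i x)
      (C.length + A.length + B.length + 2) (pairConfig C.length A.length B.length adj) := by
  obtain ⟨hgx, hgy⟩ := getD_append_pair (l := C ++ A ++ B) x y
    (n := C.length + A.length + B.length) (by simp only [List.length_append])
  have hC := mem_iff_exists_getD [] C (A ++ B ++ [x, y]) x
  have hA := mem_iff_exists_getD C A (B ++ [x, y]) x
  have hB := mem_iff_exists_getD (C ++ A) B [x, y] x
  simp only [List.nil_append, List.length_nil, List.length_append, ← List.append_assoc] at hC hA hB
  refine isLabelling_getD x hL (by simp; omega) (by omega) (by simp [pairConfig]) ?_ ?_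
  · simp only [pairConfig, List.mem_cons, List.not_mem_nil, or_false, forall_eq_or_imp, forall_eq,
      List.mem_append, List.mem_range'_1]
    refine ⟨⟨by omega, ?_⟩, by omega, ?_⟩ <;> cases adj <;> simp <;> omega
  · simp only [pairConfig, List.mem_cons, List.not_mem_nil, or_false, forall_eq_or_imp, forall_eq,
      List.mem_append, hgx, hgy]
    refine ⟨fun w => ?_, fun w => ?_⟩
    · rw [hx, hC, hA]
      cases adj <;> simp [-List.getD_eq_getElem?_getD, -List.append_assoc, or_and_right, exists_or,
        hgy, eq_comm (a := w)]
    · rw [hy, hC, hB]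
      cases adj <;> simp [-List.getD_eq_getElem?_getD, -List.append_assoc, or_and_right, exists_or,
        hgx, eq_comm (a := w)]

theorem settles_nonadj_three_two_two :
    settles 9 (pairConfig 3 2 2 false) [] []
    [([027, 058, 137, 016, 128], [37, 47, 58]), ([027, 068, 137, 015, 128], [37, 47, 68]),
     ([017, 058, 237, 026, 128], [37, 47, 58]), ([017, 068, 237, 025, 128], [37, 47, 68]),
     ([017, 158, 237, 126, 028], [37, 47, 58]), ([017, 168, 237, 125, 028], [37, 47, 68]),
     ([025, 068, 158, 247, 126, 017], [37, 47]), ([028, 047, 158, 013, 127], [58, 68, 47]),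
     ([128, 247, 058, 023, 017], [58, 68, 47]), ([028, 037, 158, 014, 127], [58, 68, 37]),
     ([028, 047, 168, 013, 127], [68, 58, 47]), ([018, 037, 258, 024, 127], [58, 68, 37]),
     ([018, 137, 258, 124, 027], [58, 68, 37]), ([018, 147, 258, 123, 027], [58, 68, 47]),
     ([023, 047, 137, 268, 124, 018], [58, 68]), ([027, 018, 147, 268], [37, 47, 58, 68]),
     ([127, 018, 047, 268], [37, 47, 58, 68]), ([127, 028, 047, 168], [37, 47, 58, 68])]
      (configClauses (pairConfig 3 2 2 false) ++
        [cliqueClause (pairConfig 3 2 2 false)]) = true := by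
  decide +kernel

theorem settles_nonadj_four_one_one :
    settles 8 (pairConfig 4 1 1 false) [] []
    [([127, 136, 037, 026], [01, 23, 46, 57]), ([127, 236, 037, 016], [02, 13, 46, 57]),
     ([137, 236, 027, 016], [03, 12, 46, 57])]
      (configClauses (pairConfig 4 1 1 false)) = true := by
  decide +kernel

theorem settles_nonadj_five_zero_zero :
    settles 7 (pairConfig 5 0 0 false) [] []
    [([036, 146, 015, 345], [04, 13, 25, 26]), ([046, 126, 015, 245], [02, 14, 35, 36]),
     ([036, 246, 025, 345], [04, 23, 15, 16])]
      (configClauses (pairConfig 5 0 0 false)) = true := by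
  decide +kernel

theorem settles_nonadj_four_one_two :
    settles 9 (pairConfig 4 1 2 false) [] []
    [([247, 123, 268, 037, 358, 018], [02, 47, 58, 68]),
     ([347, 123, 368, 027, 258, 018], [03, 47, 58, 68]),
     ([147, 013, 168, 027, 058, 238], [12, 47, 58, 68]),
     ([147, 123, 168, 037, 358, 028], [01, 47, 58, 68]),
     ([347, 023, 368, 127, 258, 018], [13, 47, 58, 68]),
     ([347, 013, 368, 127, 158, 028], [23, 47, 58, 68]),
     ([247, 123, 258, 037, 368, 018], [02, 47, 68, 58]),
     ([347, 123, 358, 027, 268, 018], [03, 47, 68, 58]),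
     ([147, 123, 158, 037, 368, 028], [01, 47, 68, 58]),
     ([247, 023, 268, 137, 358, 018], [12, 47, 58, 68]),
     ([347, 023, 358, 127, 268, 018], [13, 47, 68, 58]),
     ([347, 013, 358, 127, 168, 028], [23, 47, 68, 58])]
      (configClauses (pairConfig 4 1 2 false)) = true := by
  decide +kernel

theorem settles_nonadj_five_zero_one :
    settles 8 (pairConfig 5 0 1 false) [] []
    [([136, 257, 046, 017, 347], [03, 14, 26, 27, 57]),
     ([146, 357, 026, 017, 247], [04, 12, 36, 37, 57]),
     ([236, 157, 046, 027, 347], [03, 24, 16, 17, 57])]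
      (configClauses (pairConfig 5 0 1 false)) = true := by
  decide +kernel

theorem settles_nonadj_five_one_one :
    settles 9 (pairConfig 5 1 1 false) [] []
    [([248, 147, 237, 057, 138, 068], [07, 08, 12, 34, 57, 68]),
     ([348, 047, 237, 157, 028, 168], [17, 18, 03, 24, 57, 68]),
     ([348, 047, 137, 257, 018, 268], [27, 28, 03, 14, 57, 68]),
     ([248, 027, 147, 357, 018, 368], [37, 38, 04, 12, 57, 68]),
     ([348, 147, 237, 057, 128, 068], [07, 08, 13, 24, 57, 68]),
     ([348, 137, 247, 057, 128, 068], [07, 08, 14, 23, 57, 68])]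
      (configClauses (pairConfig 5 1 1 false)) = true := by
  decide +kernel

theorem settles_nonadj_six_zero_zero :
    settles 8 (pairConfig 6 0 0 false) [] []
    [([135, 057, 256, 237, 147, 346, 016], [03, 26, 27, 46, 47]),
     ([024, 127, 256, 457, 037, 346, 016], [14, 56, 57, 36, 37]),
     ([124, 047, 456, 157, 237, 136, 026], [01, 56, 57, 36, 37]),
     ([145, 057, 256, 247, 137, 346, 016], [04, 26, 27, 36, 37]),
     ([145, 047, 246, 257, 137, 356, 016], [05, 26, 27, 36, 37]),
     ([125, 057, 356, 237, 147, 246, 016], [02, 36, 37, 46, 47]),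
     ([145, 057, 356, 347, 127, 246, 016], [04, 36, 37, 26, 27]),
     ([145, 047, 346, 357, 127, 256, 016], [05, 36, 37, 26, 27]),
     ([125, 057, 456, 247, 137, 236, 016], [02, 46, 47, 36, 37]),
     ([135, 057, 456, 347, 127, 236, 016], [03, 46, 47, 26, 27]),
     ([124, 047, 456, 257, 137, 236, 016], [02, 56, 57, 36, 37]),
     ([134, 047, 456, 357, 127, 236, 016], [03, 56, 57, 26, 27]),
     ([134, 037, 356, 457, 127, 246, 016], [04, 56, 57, 26, 27]),
     ([125, 057, 356, 137, 247, 146, 026], [01, 36, 37, 46, 47]),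
     ([125, 057, 456, 147, 237, 136, 026], [01, 46, 47, 36, 37])]
      (configClauses (pairConfig 6 0 0 false)) = true := by
  decide +kernel

theorem settles_adj_three_one_one :
    settles 7 (pairConfig 3 1 1 true) [] []
    [([235, 056, 146], [05, 06, 15, 26])]
      (configClauses (pairConfig 3 1 1 true)) = true := by
  decide +kernel

theorem settles_adj_four_zero_zero :
    settles 6 (pairConfig 4 0 0 true) [] []
    [([025, 234, 145], [03, 14, 15, 45]), ([015, 134, 245], [03, 24, 25, 45])]
      (configClauses (pairConfig 4 0 0 true)) = true := by
  decide +kernel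

theorem settles_adj_four_zero_one :
    settles 7 (pairConfig 4 0 1 true) [] []
    [([026, 235, 136, 015], [03, 12, 46, 56])]
      (configClauses (pairConfig 4 0 1 true)) = true := by
  decide +kernel

theorem settles_adj_five_zero_zero :
    settles 7 (pairConfig 5 0 0 true) [] []
    [([025, 135, 016, 236, 456], [12, 35, 36, 45, 46, 56]),
     ([035, 145, 016, 346, 256], [13, 45, 46, 25, 26, 56]),
     ([035, 125, 026, 136, 456], [23, 15, 16, 45, 46, 56])]
      (configClauses (pairConfig 5 0 0 true)) = true := by
  decide +kernel

end Pairs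

section Conclusion

theorem IsLabelling.pair_eq [DecidableEq V] {G : SimpleGraph V} (hirr : IrreducibleGraph G)
    {p : ℕ → V} {c a b : ℕ} {adj : Bool}
    (hp : IsLabelling G p (c + a + b + 2) (pairConfig c a b adj))
    (ht : ∀ s ∈ pairConfig c a b adj,
      IsTight G (p s.1) ∧ (G.neighborSet (p s.1)).ncard = s.2.length)
    (hle : a ≤ b) (hge : 5 ≤ c + a + adj.toNat) (hb : c + b + adj.toNat ≤ 6)
    (hun : c + a + b + 2 * adj.toNat ≤ 7) :
    (adj = false ∧ c = 3 ∧ a = 2 ∧ b = 2) ∧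
      ∀ s ∈ pairConfig c a b adj, G.IsClique (G.neighborSet (p s.1)) := by
  have reducible : ∀ {R}, settles (c + a + b + 2) (pairConfig c a b adj) [] [] R
      (configClauses (pairConfig c a b adj)) = true → False := by
    intro R hR
    rw [← List.append_nil (configClauses _)] at hR
    obtain ⟨c, hc, -⟩ := hp.exists_applies_of_isTight hirr ht hR
    exact absurd hc List.not_mem_nil
  cases adj
  · simp only [Bool.toNat_false] at hge hb hun
    obtain rfl | rfl | rfl | rfl : c = 3 ∨ c = 4 ∨ c = 5 ∨ c = 6 := by omega
    · obtain ⟨rfl, rfl⟩ : a = 2 ∧ b = 2 := by omega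
      obtain ⟨d, hd, hd'⟩ := hp.exists_applies_of_isTight hirr ht settles_nonadj_three_two_two
      rw [List.mem_singleton.1 hd] at hd'
      exact ⟨⟨rfl, rfl, rfl, rfl⟩, fun s hs => hp.isClique_of_applies hd' hs⟩
    · obtain rfl : a = 1 := by omega
      obtain rfl | rfl : b = 1 ∨ b = 2 := by omega
      · exact (reducible settles_nonadj_four_one_one).elim
      · exact (reducible settles_nonadj_four_one_two).elim
    · obtain rfl | rfl : b = 0 ∨ b = 1 := by omega
      · obtain rfl : a = 0 := by omega
        exact (reducible settles_nonadj_five_zero_zero).elim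
      · obtain rfl | rfl : a = 0 ∨ a = 1 := by omega
        · exact (reducible settles_nonadj_five_zero_one).elim
        · exact (reducible settles_nonadj_five_one_one).elim
    · obtain ⟨rfl, rfl⟩ : a = 0 ∧ b = 0 := by omega
      exact (reducible settles_nonadj_six_zero_zero).elim
  · simp only [Bool.toNat_true] at hge hb hun
    obtain ⟨rfl, rfl, rfl⟩ | ⟨rfl, rfl, rfl⟩ | ⟨rfl, rfl, rfl⟩ | ⟨rfl, rfl, rfl⟩ :
        c = 3 ∧ a = 1 ∧ b = 1 ∨ c = 4 ∧ a = 0 ∧ b = 0 ∨ c = 4 ∧ a = 0 ∧ b = 1 ∨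
        c = 5 ∧ a = 0 ∧ b = 0 := by omega
    · exact (reducible settles_adj_three_one_one).elim
    · exact (reducible settles_adj_four_zero_zero).elim
    · exact (reducible settles_adj_four_zero_one).elim
    · exact (reducible settles_adj_five_zero_zero).elim

theorem IrreducibleGraph.ncard_and_isClique_of_le [Finite V] [DecidableEq V] {G : SimpleGraph V}
    (hirr : IrreducibleGraph G) (hrob : Robust G) {x y : V} (hxy : x ≠ y)
    (hdx : (G.neighborSet x).ncard ≤ 6) (hdy : (G.neighborSet y).ncard ≤ 6)
    (hun : (G.neighborSet x ∪ G.neighborSet y).ncard ≤ 7)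
    (hle : (G.neighborSet x).ncard ≤ (G.neighborSet y).ncard) :
    ((G.neighborSet x).ncard = 5 ∧ (G.neighborSet y).ncard = 5) ∧
      (G.neighborSet x ∩ G.neighborSet y).ncard = 3 ∧
      G.IsClique (G.neighborSet x) ∧ G.IsClique (G.neighborSet y) := by
  classical
  have := Fintype.ofFinite V
  have hge : ∀ v, 5 ≤ (G.neighborSet v).ncard := fun v =>
    hrob.five_le_ncard subset_rfl (hirr.neighborSet_nonempty v) fun _ _ _ hw _ => hw
  have htx : IsTight G x := hirr.isTight hrob (by have := hge x; omega)
  have hty : IsTight G y := hirr.isTight hrob (by have := hge y; omega)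
  have hgex := hge x
  have hgey := hge y
  let adj : Bool := decide (G.Adj x y)
  let C := (G.neighborFinset x ∩ G.neighborFinset y).toList
  let A := ((G.neighborFinset x \ G.neighborFinset y).erase y).toList
  let B := ((G.neighborFinset y \ G.neighborFinset x).erase x).toList
  have mem_C : ∀ w, w ∈ C ↔ G.Adj x w ∧ G.Adj y w := by simp [C]
  have mem_A : ∀ w, w ∈ A ↔ w ≠ y ∧ G.Adj x w ∧ ¬ G.Adj y w := by simp [A]
  have mem_B : ∀ w, w ∈ B ↔ w ≠ x ∧ G.Adj y w ∧ ¬ G.Adj x w := by simp [B]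
  have hL : (C ++ A ++ B ++ [x, y]).Nodup := by
    refine List.Nodup.append (List.Nodup.append (List.Nodup.append (Finset.nodup_toList _)
      (Finset.nodup_toList _) ?_) (Finset.nodup_toList _) ?_) (by simpa using hxy) ?_
    all_goals
      intro w hw hw'
      simp only [List.mem_append, List.mem_cons, List.not_mem_nil, or_false, mem_C, mem_A,
        mem_B] at hw hw'
    · tauto
    · tauto
    · have := G.loopless.irrefl x
      have := G.loopless.irrefl y
      rcases hw' with rfl | rfl <;> tauto
  have hx : ∀ w, G.Adj x w ↔ (w ∈ C ∨ w ∈ A) ∨ adj = true ∧ w = y := by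
    intro w
    have : w = y → (G.Adj x w ↔ G.Adj x y) ∧ ¬ G.Adj y w := by
      rintro rfl
      simp
    simp only [mem_C, mem_A, adj, decide_eq_true_eq]
    tauto
  have hy : ∀ w, G.Adj y w ↔ (w ∈ C ∨ w ∈ B) ∨ adj = true ∧ w = x := by
    intro w
    have : w = x → (G.Adj y w ↔ G.Adj x y) ∧ ¬ G.Adj x w := by
      rintro rfl
      simp [G.adj_comm]
    simp only [mem_C, mem_B, adj, decide_eq_true_eq]
    tauto
  have hcardC : (G.neighborSet x ∩ G.neighborSet y).ncard = C.length :=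
    ncard_eq_length (Finset.nodup_toList _) fun w => (mem_C w).symm
  have hcardx : (G.neighborSet x).ncard = C.length + A.length + adj.toNat := by
    refine (ncard_eq_length (l := C ++ A ++ if adj then [y] else []) ?_ ?_).trans ?_
    · exact hL.sublist ((List.sublist_append_left (C ++ A) B).append (by cases adj <;> simp))
    · intro w
      simp only [SimpleGraph.mem_neighborSet, hx w]
      cases adj <;> simp [or_assoc]
    · cases adj <;> simp [add_assoc]
  have hcardy : (G.neighborSet y).ncard = C.length + B.length + adj.toNat := by
    refine (ncard_eq_length (l := C ++ B ++ if adj then [x] else []) ?_ ?_).trans ?_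
    · exact hL.sublist (((List.sublist_append_left C A).append (List.Sublist.refl B)).append
        (by cases adj <;> simp))
    · intro w
      simp only [SimpleGraph.mem_neighborSet, hy w]
      cases adj <;> simp [or_assoc]
    · cases adj <;> simp [add_assoc]
  have hcardu : (G.neighborSet x ∪ G.neighborSet y).ncard =
      C.length + A.length + B.length + 2 * adj.toNat := by
    refine (ncard_eq_length (l := C ++ A ++ B ++ if adj then [x, y] else []) ?_ ?_).trans ?_
    · exact hL.sublist ((List.Sublist.refl _).append (by cases adj <;> simp))
    · intro w
      simp only [Set.mem_union, SimpleGraph.mem_neighborSet, hx w, hy w]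
      cases adj <;> simp <;> tauto
    · cases adj <;> simp <;> omega
  have hp := isLabelling_pair hL hx hy (by omega)
  obtain ⟨hgx, hgy⟩ := getD_append_pair (l := C ++ A ++ B) x y
    (n := C.length + A.length + B.length) (by simp only [List.length_append])
  have ht : ∀ s ∈ pairConfig C.length A.length B.length adj,
      IsTight G ((C ++ A ++ B ++ [x, y]).getD s.1 x) ∧
        (G.neighborSet ((C ++ A ++ B ++ [x, y]).getD s.1 x)).ncard = s.2.length := by
    simp only [pairConfig, List.mem_cons, List.not_mem_nil, or_false, forall_eq_or_imp, forall_eq,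
      hgx, hgy]
    refine ⟨⟨htx, hcardx.trans ?_⟩, hty, hcardy.trans ?_⟩ <;> cases adj <;> simp [add_assoc]
  obtain ⟨⟨hadj, hC, hA, hB⟩, hcl⟩ :=
    hp.pair_eq hirr ht (by omega) (by omega) (by omega) (by omega)
  simp only [pairConfig, List.mem_cons, List.not_mem_nil, or_false, forall_eq_or_imp, forall_eq,
    hgx, hgy] at hcl
  rw [hadj, Bool.toNat_false] at hcardx hcardy
  exact ⟨⟨by omega, by omega⟩, by omega, hcl⟩

end Conclusion
/-- Let `G` be an irreducible robust graph and `x ≠ y` vertices with `deg x ≤ 6`,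
`deg y ≤ 6` and `|N(x) ∪ N(y)| ≤ 7`.  Then `deg x = deg y = 5`, `|N(x) ∩ N(y)| = 3`,
and both `G[N(x)]` and `G[N(y)]` are complete graphs on five vertices. -/
theorem degrees_of_irreducible_robust (V : Type) [Fintype V] [DecidableEq V]
    (G : SimpleGraph V) (hirr : IrreducibleGraph G) (hrob : Robust G)
    (x y : V) (hxy : x ≠ y)
    (hdx : (G.neighborSet x).ncard ≤ 6) (hdy : (G.neighborSet y).ncard ≤ 6)
    (hun : (G.neighborSet x ∪ G.neighborSet y).ncard ≤ 7) :
    ((G.neighborSet x).ncard = 5 ∧ (G.neighborSet y).ncard = 5) ∧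
    (G.neighborSet x ∩ G.neighborSet y).ncard = 3 ∧
    (G.IsClique (G.neighborSet x) ∧ (G.neighborSet x).ncard = 5) ∧
    (G.IsClique (G.neighborSet y) ∧ (G.neighborSet y).ncard = 5) := by
  rcases le_total (G.neighborSet x).ncard (G.neighborSet y).ncard with hle | hle
  · obtain ⟨⟨hx, hy⟩, hC, hclx, hcly⟩ :=
      hirr.ncard_and_isClique_of_le hrob hxy hdx hdy hun hle
    exact ⟨⟨hx, hy⟩, hC, ⟨hclx, hx⟩, hcly, hy⟩
  · obtain ⟨⟨hy, hx⟩, hC, hcly, hclx⟩ :=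
      hirr.ncard_and_isClique_of_le hrob hxy.symm hdy hdx (by rwa [Set.union_comm]) hle
    exact ⟨⟨hx, hy⟩, by rwa [Set.inter_comm], ⟨hclx, hx⟩, hcly, hy⟩
end

section
/- Every graph admits a rooted tree decomposition: a triple (𝒱, T, r) such that (T, 𝒱) is a full tree decomposition, r is a node of T, and for every node t ≠ r and every successor t' of t one has V_t ∩ V_{p(t)} ≠ V_t ∩ V_{t'}, where p(t) denotes the parent of t in the tree rooted at r. Moreover, the root r can be chosen arbitrarily. -/
open SimpleGraph

variable {V : Type*}

/-- A tree decomposition of `G` with nodes indexed by `α`. -/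
structure TreeDecomp (G : SimpleGraph V) (α : Type) where
  T : SimpleGraph α
  isTree : T.IsTree
  bag : α → Finset V
  covers : ∀ v : V, ∃ t : α, v ∈ bag t
  edge_mem : ∀ ⦃u w : V⦄, G.Adj u w → ∃ t : α, u ∈ bag t ∧ w ∈ bag t
  subtree : ∀ v : V, (T.induce {t : α | v ∈ bag t}).Connected

/-- `G` has a tree decomposition of width at most `k`. -/
def HasDecompOfWidthLE (G : SimpleGraph V) (k : ℕ) : Prop :=
  ∃ (α : Type) (D : TreeDecomp G α), ∀ t : α, (D.bag t).card ≤ k + 1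

/-- The treewidth of `G`. -/
noncomputable def treewidth (G : SimpleGraph V) : ℕ :=
  sInf {k | HasDecompOfWidthLE G k}

/-- A tree decomposition is full (for a graph of treewidth `k`) if every bag has exactly
`k + 1` vertices and the bags of any two adjacent nodes share exactly `k` vertices. -/
def IsFullDecomp [DecidableEq V] {G : SimpleGraph V} {α : Type}
    (D : TreeDecomp G α) (k : ℕ) : Prop :=
  (∀ t : α, (D.bag t).card = k + 1) ∧
    ∀ t t' : α, D.T.Adj t t' → (D.bag t ∩ D.bag t').card = k

/-- In the tree `T` rooted at `r`, `p` is the parent of `t`: it is a neighbor of `t`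
lying on the path from `t` to `r` (i.e. closer to `r` by one). -/
def IsParentOf {α : Type} (T : SimpleGraph α) (r t p : α) : Prop :=
  T.Adj t p ∧ T.dist p r + 1 = T.dist t r

/-- The rootedness condition: for every node `t ≠ r` with parent `p` and every
successor `t'` of `t`, `V_t ∩ V_p ≠ V_t ∩ V_{t'}`. -/
def RootCondition [DecidableEq V] {G : SimpleGraph V} {α : Type}
    (D : TreeDecomp G α) (r : α) : Prop :=
  ∀ t p t' : α, t ≠ r → IsParentOf D.T r t p → IsParentOf D.T r t' t →
    D.bag t ∩ D.bag p ≠ D.bag t ∩ D.bag t'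

namespace SimpleGraph

theorem IsAcyclic.card_edgeSet_add_one_le {ι : Type*} [Finite ι] [Nonempty ι]
    {F : SimpleGraph ι} (hF : F.IsAcyclic) :
    Nat.card F.edgeSet + 1 ≤ Nat.card ι := by
  obtain ⟨T, hFT, -, hT⟩ :=
    (connected_top (V := ι)).exists_isTree_le_of_le_of_isAcyclic le_top hF
  rw [← (isTree_iff_connected_and_card.mp hT).2]
  exact Nat.add_le_add_right (Nat.card_mono (Set.toFinite _) (edgeSet_mono hFT)) 1

theorem IsAcyclic.connected_of_card_le {ι : Type*} [Finite ι] [Nonempty ι]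
    {F : SimpleGraph ι} (hF : F.IsAcyclic) (h : Nat.card ι ≤ Nat.card F.edgeSet + 1) :
    F.Connected := by
  obtain ⟨T, hFT, -, hT⟩ :=
    (connected_top (V := ι)).exists_isTree_le_of_le_of_isAcyclic le_top hF
  have hcard := (isTree_iff_connected_and_card.mp hT).2
  have hle : Nat.card T.edgeSet ≤ Nat.card F.edgeSet := by omega
  have heq : F.edgeSet = T.edgeSet :=
    Set.eq_of_subset_of_ncard_le (edgeSet_mono hFT) hle (Set.toFinite _)
  rw [edgeSet_injective heq]
  exact hT.connected

theorem IsAcyclic.support_subset_of_induce_connected {ι : Type*} {T : SimpleGraph ι}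
    (hT : T.IsAcyclic) {S : Set ι} (hS : (T.induce S).Preconnected) {a b : ι} (ha : a ∈ S)
    (hb : b ∈ S) {p : T.Walk a b} (hp : p.IsPath) {c : ι} (hc : c ∈ p.support) : c ∈ S := by
  obtain ⟨q, hq⟩ := (hS ⟨a, ha⟩ ⟨b, hb⟩).exists_isPath
  have hq' : (q.map (Embedding.induce S).toHom).IsPath :=
    hq.map Subtype.val_injective
  have heq : p = q.map (Embedding.induce S).toHom :=
    congrArg Subtype.val ((hT.subsingleton_path a b).elim ⟨p, hp⟩ ⟨_, hq'⟩)
  have hsupp : p.support = q.support.map Subtype.val :=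
    (congrArg Walk.support heq).trans (Walk.support_map _ q)
  rw [hsupp, List.mem_map] at hc
  obtain ⟨d, -, rfl⟩ := hc
  exact d.2

theorem Connected.exists_adj_dist_add_one_eq {ι : Type*} {H : SimpleGraph ι} (hH : H.Connected)
    {r t : ι} (ht : t ≠ r) : ∃ p, H.Adj t p ∧ H.dist p r + 1 = H.dist t r := by
  obtain ⟨w, hw⟩ := hH.exists_walk_length_eq_dist t r
  cases w with
  | nil => exact absurd rfl ht
  | @cons _ p _ h q =>
    refine ⟨p, h, ?_⟩
    have h1 := dist_le q
    have h2 := hH.dist_triangle (u := t) (v := p) (w := r)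
    rw [dist_eq_one_iff_adj.mpr h] at h2
    rw [Walk.length_cons] at hw
    omega

/-- A finite connected graph has a breadth-first spanning tree from any root. -/
theorem Connected.exists_isTree_le_dist_eq {ι : Type*} [Finite ι] {H : SimpleGraph ι}
    (hH : H.Connected) (r : ι) : ∃ T ≤ H, T.IsTree ∧ ∀ t, T.dist t r = H.dist t r := by
  choose par hadj hdist using fun (t : ι) (ht : t ≠ r) ↦ hH.exists_adj_dist_add_one_eq ht
  let E : ({t : ι | t ≠ r} : Set ι) → Sym2 ι := fun t ↦ s(t.1, par t.1 t.2)
  let T : SimpleGraph ι := fromEdgeSet (Set.range E)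
  have hpar (t : ι) (ht : t ≠ r) : T.Adj t (par t ht) := by
    rw [fromEdgeSet_adj]
    exact ⟨⟨⟨t, ht⟩, rfl⟩, (hadj t ht).ne⟩
  have hle : T ≤ H := by
    intro a b hab
    obtain ⟨⟨t, ht⟩, h⟩ := ((fromEdgeSet_adj _).mp hab).1
    rw [← mem_edgeSet, ← h]
    exact hadj t ht
  have hwalk (n : ℕ) : ∀ t, H.dist t r = n → ∃ w : T.Walk t r, w.length = n := by
    induction n with
    | zero =>
      intro t ht
      obtain rfl := hH.dist_eq_zero_iff.mp ht
      exact ⟨.nil, rfl⟩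
    | succ n ih =>
      intro t ht
      have htr : t ≠ r := by
        rintro rfl
        simp at ht
      obtain ⟨w, hw⟩ := ih (par t htr) (by have := hdist t htr; omega)
      exact ⟨.cons (hpar t htr) w, by simp [hw]⟩
  have hreach (t : ι) : T.Reachable t r := (hwalk _ t rfl).choose.reachable
  have hT : T.Connected :=
    (connected_iff _).mpr ⟨fun a b ↦ (hreach a).trans (hreach b).symm, ⟨r⟩⟩
  refine ⟨T, hle, isTree_iff_connected_and_card.mpr ⟨hT, ?_⟩, fun t ↦ le_antisymm ?_ ?_⟩
  · refine le_antisymm ?_ hT.card_vert_le_card_edgeSet_add_one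
    have h1 : Nat.card T.edgeSet ≤ Nat.card (Set.range E) :=
      Nat.card_mono (Set.toFinite _) (by simp [T])
    have h2 : Nat.card (Set.range E) ≤ Nat.card ({t : ι | t ≠ r} : Set ι) :=
      Finite.card_range_le E
    have h3 : Nat.card ({t : ι | t ≠ r} : Set ι) < Nat.card ι :=
      Finite.card_subtype_lt (x := r) (by simp)
    omega
  · obtain ⟨w, hw⟩ := hwalk _ t rfl
    exact hw ▸ dist_le w
  · exact (hreach t).dist_anti hle

theorem two_mul_card_edgeSet_eq_sum {ι : Type*} [Fintype ι] (T : SimpleGraph ι)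
    [DecidableRel T.Adj] :
    2 * Nat.card T.edgeSet = ∑ a, ∑ b, if T.Adj a b then 1 else 0 := by
  classical
  rw [Nat.card_eq_fintype_card, ← edgeFinset_card, ← sum_degrees_eq_twice_card_edges]
  refine Finset.sum_congr rfl fun a _ ↦ ?_
  rw [← card_neighborFinset_eq_degree, neighborFinset_eq_filter, Finset.card_filter]

end SimpleGraph

theorem sum_card_edgeSet_induce_bag [Fintype V] [DecidableEq V] {ι : Type*} [Finite ι]
    {T : SimpleGraph ι} {B : ι → Finset V} {k : ℕ}
    (hB : ∀ t s, T.Adj t s → (B t ∩ B s).card = k) :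
    ∑ v : V, Nat.card (T.induce {t | v ∈ B t}).edgeSet = k * Nat.card T.edgeSet := by
  classical
  have := Fintype.ofFinite ι
  have hind (v : V) : 2 * Nat.card (T.induce {t | v ∈ B t}).edgeSet =
      ∑ a, ∑ b, if T.Adj a b ∧ v ∈ B a ∩ B b then 1 else 0 := by
    rw [two_mul_card_edgeSet_eq_sum]
    have hsub (f : ι → ℕ) :
        ∑ a : ({t | v ∈ B t} : Set ι), f a = ∑ a, if v ∈ B a then f a else 0 := by
      rw [← Finset.sum_filter]
      exact (Finset.sum_subtype _ (by simp) f).symm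
    simp only [comap_adj, Function.Embedding.subtype_apply]
    rw [hsub (fun a ↦ ∑ b : ({t | v ∈ B t} : Set ι), if T.Adj a b then 1 else 0)]
    refine Finset.sum_congr rfl fun a _ ↦ ?_
    rw [hsub (fun b ↦ if T.Adj a b then 1 else 0)]
    by_cases ha : v ∈ B a
    · simp only [ha, if_true]
      refine Finset.sum_congr rfl fun b _ ↦ ?_
      by_cases hb : v ∈ B b <;> simp [ha, hb]
    · simp [ha]
  refine Nat.eq_of_mul_eq_mul_left (n := 2) two_pos ?_
  rw [Finset.mul_sum, mul_left_comm, two_mul_card_edgeSet_eq_sum]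
  simp_rw [hind]
  rw [Finset.sum_comm, Finset.mul_sum]
  refine Finset.sum_congr rfl fun a _ ↦ ?_
  rw [Finset.sum_comm, Finset.mul_sum]
  refine Finset.sum_congr rfl fun b _ ↦ ?_
  by_cases hab : T.Adj a b
  · simp [hab, ← hB a b hab, -Finset.mem_inter]
  · simp [hab]

theorem sum_card_nodes_eq [Fintype V] [DecidableEq V] {ι : Type*} [Finite ι]
    {B : ι → Finset V} {m : ℕ} (hB : ∀ t, (B t).card = m) :
    ∑ v : V, Nat.card ({t | v ∈ B t} : Set ι) = m * Nat.card ι := by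
  classical
  have := Fintype.ofFinite ι
  have h (v : V) : Nat.card ({t | v ∈ B t} : Set ι) = ∑ t, if v ∈ B t then 1 else 0 := by
    rw [Nat.card_eq_fintype_card, ← Finset.card_filter, ← Set.toFinset_card]
    congr 1
    ext; simp
  simp_rw [h]
  rw [Finset.sum_comm]
  simp [hB, mul_comm]

/-- A spanning tree of the bags all of whose edges have maximal overlap satisfies the subtree
condition as soon as the number of bags is the right one. -/
theorem connected_induce_bag [Fintype V] [DecidableEq V] {ι : Type*} [Finite ι]
    {T : SimpleGraph ι} (hT : T.IsTree) {B : ι → Finset V} {k : ℕ}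
    (hcard : ∀ t, (B t).card = k + 1) (hB : ∀ t s, T.Adj t s → (B t ∩ B s).card = k)
    (hcov : ∀ v, ∃ t, v ∈ B t) (hV : Fintype.card V = Nat.card ι + k) (v : V) :
    (T.induce {t | v ∈ B t}).Connected := by
  have hne (v : V) : Nonempty ({t | v ∈ B t} : Set ι) := (hcov v).elim fun t ht ↦ ⟨⟨t, ht⟩⟩
  have hle (v : V) : Nat.card (T.induce {t | v ∈ B t}).edgeSet + 1 ≤
      Nat.card ({t | v ∈ B t} : Set ι) :=
    have := hne v
    (hT.isAcyclic.induce _).card_edgeSet_add_one_le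
  have hsum : ∑ v : V, (Nat.card (T.induce {t | v ∈ B t}).edgeSet + 1) =
      ∑ v : V, Nat.card ({t | v ∈ B t} : Set ι) := by
    rw [Finset.sum_add_distrib, sum_card_edgeSet_induce_bag hB, sum_card_nodes_eq hcard,
      ← (isTree_iff_connected_and_card.mp hT).2]
    have := (isTree_iff_connected_and_card.mp hT).2
    simp only [Finset.sum_const, Finset.card_univ, hV, ← this, smul_eq_mul]
    ring
  have := hne v
  refine (hT.isAcyclic.induce _).connected_of_card_le (le_of_eq ?_)
  exact ((Finset.sum_eq_sum_iff_of_le fun v _ ↦ hle v).mp hsum v (Finset.mem_univ v)).symm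

theorem IsFullDecomp.bag_injective [DecidableEq V] {G : SimpleGraph V} {α : Type}
    {D : TreeDecomp G α} {k : ℕ} (hD : IsFullDecomp D k) : Function.Injective D.bag := by
  intro a b hab
  by_contra hne
  obtain ⟨p, hp⟩ := D.isTree.connected.exists_isPath a b
  cases p with
  | nil => exact hne rfl
  | @cons _ c _ h q =>
    have hsub : D.bag a ⊆ D.bag c := fun v hv ↦
      D.isTree.isAcyclic.support_subset_of_induce_connected (D.subtree v).preconnected
        (a := a) (b := b) hv (show v ∈ D.bag b from hab ▸ hv) hp (c := c) (by simp)
    have h1 := hD.2 a c h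
    rw [Finset.inter_eq_left.mpr hsub, hD.1 a] at h1
    omega

theorem IsFullDecomp.card_eq [Fintype V] [DecidableEq V] {G : SimpleGraph V} {α : Type} [Finite α]
    {D : TreeDecomp G α} {k : ℕ} (hD : IsFullDecomp D k) :
    Fintype.card V = Nat.card α + k := by
  have h (v : V) : Nat.card (D.T.induce {t | v ∈ D.bag t}).edgeSet + 1 =
      Nat.card ({t | v ∈ D.bag t} : Set α) :=
    (isTree_iff_connected_and_card.mp ⟨D.subtree v, D.isTree.isAcyclic.induce _⟩).2
  have hsum := Finset.sum_congr (rfl : (Finset.univ : Finset V) = _) fun v _ ↦ h v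
  rw [Finset.sum_add_distrib, sum_card_edgeSet_induce_bag hD.2, sum_card_nodes_eq hD.1,
    ← (isTree_iff_connected_and_card.mp D.isTree).2] at hsum
  rw [← (isTree_iff_connected_and_card.mp D.isTree).2]
  simp only [Finset.sum_const, Finset.card_univ, smul_eq_mul, mul_one] at hsum
  linarith

/-- The graph on the index set of a family of finsets joining two indices whose members share
exactly `k` elements. -/
def overlapGraph [DecidableEq V] {ι : Type*} (B : ι → Finset V) (k : ℕ) : SimpleGraph ι where
  Adj t s := t ≠ s ∧ (B t ∩ B s).card = k
  symm := ⟨fun t s h ↦ ⟨h.1.symm, by rw [Finset.inter_comm]; exact h.2⟩⟩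
  loopless := ⟨fun _ h ↦ h.1 rfl⟩

theorem exists_rooted_decomp_of_overlapGraph_connected [Fintype V] [DecidableEq V]
    {G : SimpleGraph V} {ι : Type} [Finite ι] {B : ι → Finset V} {k : ℕ}
    (hinj : Function.Injective B) (hcard : ∀ t, (B t).card = k + 1)
    (hconn : (overlapGraph B k).Connected) (hV : Fintype.card V = Nat.card ι + k)
    (hcov : ∀ v, ∃ t, v ∈ B t) (hedge : ∀ ⦃u w⦄, G.Adj u w → ∃ t, u ∈ B t ∧ w ∈ B t) (r : ι) :
    ∃ D : TreeDecomp G ι, D.bag = B ∧ IsFullDecomp D k ∧ RootCondition D r := by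
  obtain ⟨T, hle, hT, hdist⟩ := hconn.exists_isTree_le_dist_eq r
  have hB (t s : ι) (h : T.Adj t s) : (B t ∩ B s).card = k := (hle h).2
  refine ⟨⟨T, hT, B, hcov, hedge, connected_induce_bag hT hcard hB hcov hV⟩, rfl,
    ⟨hcard, hB⟩, ?_⟩
  rintro t p t' - ⟨htp, hp⟩ ⟨htt', ht'⟩ heq
  change T.dist _ _ + 1 = T.dist _ _ at hp ht'
  change B t ∩ B p = B t ∩ B t' at heq
  rw [hdist, hdist] at hp ht'
  have hne : t' ≠ p := by
    rintro rfl
    omega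
  have hsub : B t ∩ B p ⊆ B t' ∩ B p :=
    Finset.subset_inter (heq ▸ Finset.inter_subset_right) Finset.inter_subset_right
  have hge : k ≤ (B t' ∩ B p).card := hB t p htp ▸ Finset.card_le_card hsub
  have hlt : (B t' ∩ B p).card < k + 1 := by
    by_contra! hcon
    have h1 := Finset.eq_of_subset_of_card_le (Finset.inter_subset_left (s₁ := B t') (s₂ := B p))
      ((hcard t').trans_le hcon)
    have h2 := Finset.eq_of_subset_of_card_le (Finset.inter_subset_right (s₁ := B t') (s₂ := B p))
      ((hcard p).trans_le hcon)
    exact hne (hinj (h1.symm.trans h2))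
  have hadj : (overlapGraph B k).Adj t' p := ⟨hne, by omega⟩
  have htri := hconn.dist_triangle (u := t') (v := p) (w := r)
  rw [dist_eq_one_iff_adj.mpr hadj] at htri
  omega

theorem IsFullDecomp.exists_rootCondition [Fintype V] [DecidableEq V] {G : SimpleGraph V}
    {α : Type} {D : TreeDecomp G α} {k : ℕ} (hD : IsFullDecomp D k) (r : α) :
    ∃ D' : TreeDecomp G α, D'.bag = D.bag ∧ IsFullDecomp D' k ∧ RootCondition D' r := by
  have : Finite α := Finite.of_injective _ hD.bag_injective
  exact exists_rooted_decomp_of_overlapGraph_connected hD.bag_injective hD.1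
    (D.isTree.connected.mono fun a b h ↦ ⟨h.ne, hD.2 a b h⟩) hD.card_eq D.covers D.edge_mem r

/-- A family of `(k + 1)`-sets that are the bags of a `k`-tree on their union. -/
structure IsBagFamily [DecidableEq V] (k : ℕ) (F : Finset (Finset V)) : Prop where
  card_eq : ∀ A ∈ F, A.card = k + 1
  connected : ((overlapGraph (id : Finset V → Finset V) k).induce (F : Set (Finset V))).Connected
  card_sup : (F.sup id).card = F.card + k

theorem IsBagFamily.singleton [DecidableEq V] {k : ℕ} {A : Finset V} (hA : A.card = k + 1) :
    IsBagFamily k {A} where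
  card_eq := by simpa using hA
  connected := by
    rw [Finset.coe_singleton]
    exact IsTree.of_subsingleton.connected
  card_sup := by simp [hA, add_comm]

theorem IsBagFamily.exchange [DecidableEq V] {k : ℕ} {F : Finset (Finset V)}
    (hF : IsBagFamily k F) {A : Finset V} (hA : A ∈ F) {x v : V} (hx : x ∈ A)
    (hv : v ∉ F.sup id) : IsBagFamily k (insert (insert v (A.erase x)) F) ∧
      (insert (insert v (A.erase x)) F).sup id = insert v (F.sup id) := by
  have hAF : A ⊆ F.sup id := Finset.le_sup (f := id) hA
  have hvA : v ∉ A := fun h ↦ hv (hAF h)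
  have hnew : insert v (A.erase x) ∉ F := fun h ↦
    hv (Finset.le_sup (f := id) h (Finset.mem_insert_self _ _))
  have hsup : (insert (insert v (A.erase x)) F).sup id = insert v (F.sup id) := by
    rw [Finset.sup_insert, id, Finset.sup_eq_union, Finset.insert_union,
      Finset.union_eq_right.mpr ((Finset.erase_subset _ _).trans hAF)]
  have herase : (A.erase x).card = k := by
    rw [Finset.card_erase_of_mem hx, hF.card_eq A hA, Nat.add_sub_cancel]
  refine ⟨⟨?_, ?_, ?_⟩, hsup⟩
  · intro C hC
    rcases Finset.mem_insert.mp hC with rfl | hC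
    · rw [Finset.card_insert_of_notMem (fun h ↦ hvA (Finset.mem_of_mem_erase h)), herase]
    · exact hF.card_eq C hC
  · have hadj : (overlapGraph (id : Finset V → Finset V) k).Adj A (insert v (A.erase x)) := by
      refine ⟨fun h ↦ hnew (h ▸ hA), ?_⟩
      rw [id, id, Finset.inter_insert_of_notMem hvA,
        Finset.inter_eq_right.mpr (Finset.erase_subset _ _), herase]
    rw [Finset.coe_insert, ← Set.union_singleton]
    exact connected_induce_union hF.connected.preconnected .of_subsingleton hA rfl hadj
  · rw [hsup, Finset.card_insert_of_notMem hv, hF.card_sup, Finset.card_insert_of_notMem hnew]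
    omega

theorem IsBagFamily.exists_superset [DecidableEq V] {k : ℕ} {C : Finset V} (hC : C.card ≤ k + 1)
    {F : Finset (Finset V)} (hF : IsBagFamily k F) {A : Finset V} (hA : A ∈ F)
    (hCA : C ∩ F.sup id ⊆ A) : ∃ F' : Finset (Finset V), F ⊆ F' ∧ IsBagFamily k F' ∧
      F'.sup id = F.sup id ∪ C ∧ ∃ A' ∈ F', C ⊆ A' := by
  induction hn : (C \ F.sup id).card using Nat.strong_induction_on generalizing F A with
  | _ n ih =>
  have hAF : A ⊆ F.sup id := Finset.le_sup (f := id) hA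
  by_cases hsub : C ⊆ A
  · exact ⟨F, subset_rfl, hF, (Finset.union_eq_left.mpr (hsub.trans hAF)).symm, A, hA, hsub⟩
  obtain ⟨v, hvC, hvA⟩ := Finset.not_subset.mp hsub
  have hv : v ∉ F.sup id := fun h ↦ hvA (hCA (Finset.mem_inter.mpr ⟨hvC, h⟩))
  obtain ⟨x, hxA, hxC⟩ : ∃ x ∈ A, x ∉ C := by
    by_contra! hcon
    have := Finset.eq_of_subset_of_card_le hcon (by rw [hF.card_eq A hA]; exact hC)
    exact hvA (this ▸ hvC)
  obtain ⟨hF₁, hsup⟩ := hF.exchange hA hxA hv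
  obtain ⟨F', hFF', hF', hsup', hA'⟩ := ih (C \ insert v (F.sup id)).card (by
      rw [← hn]
      refine Finset.card_lt_card (Finset.ssubset_iff_of_subset ?_ |>.mpr ⟨v, ?_, ?_⟩)
      · exact Finset.sdiff_subset_sdiff subset_rfl (Finset.subset_insert _ _)
      · exact Finset.mem_sdiff.mpr ⟨hvC, hv⟩
      · simp) hF₁ (Finset.mem_insert_self _ _) (by
      rw [hsup]
      intro y hy
      obtain ⟨hyC, hy⟩ := Finset.mem_inter.mp hy
      rcases Finset.mem_insert.mp hy with rfl | hy
      · exact Finset.mem_insert_self _ _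
      · refine Finset.mem_insert_of_mem (Finset.mem_erase.mpr ⟨?_, ?_⟩)
        · rintro rfl
          exact hxC hyC
        · exact hCA (Finset.mem_inter.mpr ⟨hyC, hy⟩)) (by rw [hsup])
  refine ⟨F', (Finset.subset_insert _ _).trans hFF', hF', ?_, hA'⟩
  rw [hsup', hsup, Finset.insert_union, Finset.insert_eq_of_mem]
  exact Finset.mem_union_right _ hvC

/-- Crossing from a connected set of nodes to a new node, a bag only keeps vertices of the last
bag visited. -/
theorem TreeDecomp.mem_bag_of_adj {G : SimpleGraph V} {α : Type} (D : TreeDecomp G α) {S : Set α}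
    (hS : (D.T.induce S).Preconnected) {a s t : α} (ha : a ∈ S) (hs : s ∈ S) (ht : t ∉ S)
    (hst : D.T.Adj s t) {v : V} (hva : v ∈ D.bag a) (hvt : v ∈ D.bag t) : v ∈ D.bag s := by
  obtain ⟨p, hp⟩ := D.isTree.connected.exists_isPath a s
  have hpS : t ∉ p.support := fun h ↦
    ht (D.isTree.isAcyclic.support_subset_of_induce_connected hS ha hs hp h)
  exact D.isTree.isAcyclic.support_subset_of_induce_connected (D.subtree v).preconnected
    (a := a) (b := t) hva hvt (hp.concat hpS hst) (c := s) (by simp [Walk.support_concat])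

/-- Every decomposition of width at most `k` with a bag of size `k + 1` refines to a bag family
covering all its bags. -/
theorem TreeDecomp.exists_isBagFamily [Fintype V] [DecidableEq V] {G : SimpleGraph V} {α : Type}
    (D : TreeDecomp G α) {k : ℕ} (hk : ∀ t, (D.bag t).card ≤ k + 1) {r : α}
    (hr : (D.bag r).card = k + 1) :
    ∃ F : Finset (Finset V), IsBagFamily k F ∧ ∀ t, ∃ A ∈ F, D.bag t ⊆ A := by
  classical
  let Q (F : Finset (Finset V)) (S : Set α) : Prop := r ∈ S ∧
    (D.T.induce S).Preconnected ∧ (∀ t ∈ S, ∃ A ∈ F, D.bag t ⊆ A) ∧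
      ∀ v ∈ F.sup id, ∃ t ∈ S, v ∈ D.bag t
  have hQ : Q {D.bag r} {r} := ⟨rfl, .of_subsingleton, by simp, by simp⟩
  obtain ⟨F, ⟨hF, S₀, hS₀⟩, hmax⟩ :=
    (Set.toFinite {F | IsBagFamily k F ∧ ∃ S, Q F S}).exists_maximal ⟨_, .singleton hr, _, hQ⟩
  have hstep {S : Set α} (hS : Q F S) {s t : α} (hs : s ∈ S) (hst : D.T.Adj s t) :
      ∃ S', t ∈ S' ∧ Q F S' := by
    by_cases ht : t ∈ S
    · exact ⟨S, ht, hS⟩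
    obtain ⟨hrS, hconn, hbag, hsup⟩ := hS
    obtain ⟨A, hA, hsA⟩ := hbag s hs
    obtain ⟨F', hFF', hF', hsup', A', hA', htA'⟩ := hF.exists_superset (hk t) hA fun v hv ↦ by
      obtain ⟨hvt, hv⟩ := Finset.mem_inter.mp hv
      obtain ⟨a, ha, hva⟩ := hsup v hv
      exact hsA (D.mem_bag_of_adj hconn ha hs ht hst hva hvt)
    have hQ' : Q F' (S ∪ {t}) := by
      refine ⟨.inl hrS,
        (connected_induce_union hconn .of_subsingleton hs (Set.mem_singleton t) hst).preconnected,
        ?_, ?_⟩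
      · rintro b (hb | rfl)
        · obtain ⟨C, hC, hbC⟩ := hbag b hb
          exact ⟨C, hFF' hC, hbC⟩
        · exact ⟨A', hA', htA'⟩
      · intro v hv
        rw [hsup', Finset.mem_union] at hv
        rcases hv with hv | hv
        · obtain ⟨b, hb, hvb⟩ := hsup v hv
          exact ⟨b, .inl hb, hvb⟩
        · exact ⟨t, .inr rfl, hv⟩
    obtain rfl : F' = F := subset_antisymm (hmax ⟨hF', _, hQ'⟩ hFF') hFF'
    exact ⟨_, .inr rfl, hQ'⟩
  have hwalk {a t : α} (p : D.T.Walk a t) :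
      ∀ S, a ∈ S → Q F S → ∃ S', t ∈ S' ∧ Q F S' := by
    induction p with
    | nil => exact fun S ha hS ↦ ⟨S, ha, hS⟩
    | cons h _ ih =>
      intro S ha hS
      obtain ⟨S', hb, hS'⟩ := hstep hS ha h
      exact ih S' hb hS'
  refine ⟨F, hF, fun t ↦ ?_⟩
  obtain ⟨p⟩ := D.isTree.connected.preconnected r t
  obtain ⟨S, ht, hS⟩ := hwalk p S₀ hS₀.1 hS₀
  exact hS.2.2.1 t ht

theorem hasDecompOfWidthLE_treewidth [Fintype V] (G : SimpleGraph V) :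
    HasDecompOfWidthLE G (treewidth G) := by
  refine Nat.sInf_mem (s := {k | HasDecompOfWidthLE G k}) ⟨Fintype.card V, Unit, ?_, ?_⟩
  · exact
      { T := ⊥
        isTree := .of_subsingleton
        bag := fun _ ↦ Finset.univ
        covers := by simp
        edge_mem := by simp
        subtree := fun v ↦
          have : Nonempty ({t | v ∈ Finset.univ} : Set Unit) := ⟨⟨(), by simp⟩⟩
          IsTree.of_subsingleton.connected }
  · exact fun _ ↦ (Finset.card_le_univ _).trans (Nat.le_succ _)

theorem TreeDecomp.exists_card_bag_eq [Nonempty V] {G : SimpleGraph V} {α : Type}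
    (D : TreeDecomp G α) (hD : ∀ t, (D.bag t).card ≤ treewidth G + 1) :
    ∃ r, (D.bag r).card = treewidth G + 1 := by
  by_contra! hne
  have hlt (t : α) : (D.bag t).card ≤ treewidth G := Nat.le_of_lt_succ ((hD t).lt_of_ne (hne t))
  obtain ⟨t, ht⟩ := D.covers (Classical.arbitrary V)
  have hpos : 1 ≤ treewidth G := (Finset.card_pos.mpr ⟨_, ht⟩).trans_le (hlt t)
  refine Nat.notMem_of_lt_sInf (s := {k | HasDecompOfWidthLE G k}) (m := treewidth G - 1)
    (Nat.sub_lt hpos one_pos) ⟨α, D, fun t ↦ ?_⟩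
  rw [Nat.sub_add_cancel hpos]
  exact hlt t

theorem exists_isFullDecomp_rootCondition {V : Type} [Fintype V] [DecidableEq V] [Nonempty V]
    (G : SimpleGraph V) : ∃ (α : Type) (D : TreeDecomp G α) (r : α),
      IsFullDecomp D (treewidth G) ∧ RootCondition D r := by
  obtain ⟨α, D, hD⟩ := hasDecompOfWidthLE_treewidth G
  obtain ⟨r, hr⟩ := D.exists_card_bag_eq hD
  obtain ⟨F, hF, hcov⟩ := D.exists_isBagFamily hD hr
  have hsup : F.sup id = Finset.univ := by
    refine Finset.eq_univ_of_forall fun v ↦ ?_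
    obtain ⟨t, ht⟩ := D.covers v
    obtain ⟨A, hA, htA⟩ := hcov t
    exact Finset.le_sup (f := id) hA (htA ht)
  obtain ⟨A, hA, -⟩ := hcov r
  have hconn : (overlapGraph (fun A : (F : Set (Finset V)) ↦ A.1) (treewidth G)).Connected := by
    refine hF.connected.mono ?_
    exact fun _ _ h ↦ ⟨fun heq ↦ h.1 (congrArg Subtype.val heq), h.2⟩
  obtain ⟨D', -, hfull, hroot⟩ := exists_rooted_decomp_of_overlapGraph_connected (G := G)
    Subtype.val_injective (fun A ↦ hF.card_eq A A.2) hconn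
    (by rw [← Finset.card_univ, ← hsup, hF.card_sup, Nat.card_coe_set_eq, Set.ncard_coe_finset])
    (fun v ↦ by
      obtain ⟨t, ht⟩ := D.covers v
      obtain ⟨C, hC, htC⟩ := hcov t
      exact ⟨⟨C, hC⟩, htC ht⟩)
    (fun u w huw ↦ by
      obtain ⟨t, hu, hw⟩ := D.edge_mem huw
      obtain ⟨C, hC, htC⟩ := hcov t
      exact ⟨⟨C, hC⟩, htC hu, htC hw⟩) ⟨A, hA⟩
  exact ⟨_, D', _, hfull, hroot⟩

/-- Every (nonempty) graph admits a rooted tree decomposition: a full tree decomposition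
`D` together with a root `r` such that for every node `t ≠ r` with parent `p` and every
successor `t'` of `t` one has `V_t ∩ V_p ≠ V_t ∩ V_{t'}`.  Moreover, the root can be
chosen arbitrarily: any full tree decomposition can be re-arranged (keeping its node set
and its bags) so that the rootedness condition holds for any prescribed root. -/
theorem exists_rooted_tree_decomposition (V : Type) [Fintype V] [DecidableEq V] [Nonempty V]
    (G : SimpleGraph V) :
    (∃ (α : Type) (D : TreeDecomp G α) (r : α),
        IsFullDecomp D (treewidth G) ∧ RootCondition D r) ∧
    (∀ (α : Type) (D : TreeDecomp G α), IsFullDecomp D (treewidth G) → ∀ r : α,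
        ∃ D' : TreeDecomp G α, D'.bag = D.bag ∧ IsFullDecomp D' (treewidth G) ∧
          RootCondition D' r) := by
  exact ⟨exists_isFullDecomp_rootCondition G, fun _ _ hD r ↦ hD.exists_rootCondition r⟩
end

section
/- If G is a planar graph on n vertices (with at least one edge and distinct from K3 when comparing sizes), then τ(G) ≤ n − 2. -/
open SimpleGraph

variable {V : Type*}

/-- A drawing of the graph `G` in the plane (identified with `ℂ`): vertices are mapped to
distinct points, each edge is realized by a simple continuous arc joining the images of its
endpoints, arcs of distinct edges meet only in common endpoints, and no arc passes through
the image of any other vertex. -/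
structure PlaneEmbedding (G : SimpleGraph V) where
  vtx : V → ℂ
  arc : V → V → Set ℂ
  vtx_inj : Function.Injective vtx
  arc_symm : ∀ u v : V, arc u v = arc v u
  arc_curve : ∀ ⦃u v : V⦄, G.Adj u v → ∃ γ : ℝ → ℂ,
    ContinuousOn γ (Set.Icc 0 1) ∧ Set.InjOn γ (Set.Icc 0 1) ∧
    γ 0 = vtx u ∧ γ 1 = vtx v ∧ arc u v = γ '' Set.Icc 0 1
  arc_inter : ∀ ⦃u v x y : V⦄, G.Adj u v → G.Adj x y → s(u, v) ≠ s(x, y) →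
    arc u v ∩ arc x y ⊆ ({vtx u, vtx v} : Set ℂ) ∩ ({vtx x, vtx y} : Set ℂ)
  arc_vtx : ∀ ⦃u v : V⦄, G.Adj u v → ∀ w : V, vtx w ∈ arc u v → w = u ∨ w = v

/-- The set of points of the plane used by a plane embedding. -/
def PlaneEmbedding.drawing {G : SimpleGraph V} (E : PlaneEmbedding G) : Set ℂ :=
  Set.range E.vtx ∪ ⋃ (u : V) (v : V) (_ : G.Adj u v), E.arc u v

/-- A graph is planar if it admits a plane embedding. -/
def PlanarGraph (G : SimpleGraph V) : Prop := Nonempty (PlaneEmbedding G)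

/-- A maximal planar graph (planar triangulation): a planar graph such that adding any
edge between nonadjacent vertices destroys planarity. -/
def MaximalPlanar (G : SimpleGraph V) : Prop :=
  PlanarGraph G ∧ ∀ u v : V, u ≠ v → ¬ G.Adj u v →
    ¬ PlanarGraph (G ⊔ SimpleGraph.fromEdgeSet {s(u, v)})


/-! ### A mod 2 certificate of planarity -/

/-- An integer `k` such that the continuous logarithm of `γ - z` along `γ|[0,1]` changes by
`log (γ 1 - z) - log (γ 0 - z) + 2 * π * i * k`. -/
def IsTurn (γ : ℝ → ℂ) (z : ℂ) (k : ℤ) : Prop :=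
  ∃ L : ℝ → ℂ, Continuous L ∧ (∀ t, Complex.exp (L t) = γ t - z) ∧
    L 1 - L 0 = Complex.log (γ 1 - z) - Complex.log (γ 0 - z) + 2 * Real.pi * Complex.I * k

/-- A nowhere vanishing continuous function on a contractible space has a continuous logarithm. -/
lemma exists_continuous_log {X : Type*} [TopologicalSpace X] [LocallyPathConnectedSpace X]
    [ContractibleSpace X] {f : X → ℂ} (hf : Continuous f) (h0 : ∀ x, f x ≠ 0) :
    ∃ L : X → ℂ, Continuous L ∧ ∀ x, Complex.exp (L x) = f x := by
  obtain ⟨x₀⟩ : Nonempty X := inferInstance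
  obtain ⟨L, ⟨-, hL⟩, -⟩ := Complex.isCoveringMapOn_exp.existsUnique_continuousMap_lifts
    ⟨f, hf⟩ (Complex.exp_log (h0 x₀)) h0
  exact ⟨L, L.continuous, congrFun hL⟩

/-- Every continuous logarithm along a curve computes a turn. -/
lemma isTurn_of_log {γ L : ℝ → ℂ} {z : ℂ} (hL : Continuous L)
    (hexp : ∀ t, Complex.exp (L t) = γ t - z) :
    ∃ k : ℤ, IsTurn γ z k ∧
      L 1 - L 0 = Complex.log (γ 1 - z) - Complex.log (γ 0 - z) + 2 * Real.pi * Complex.I * k := by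
  have key : ∀ t, ∃ n : ℤ, L t = Complex.log (γ t - z) + n * (2 * Real.pi * Complex.I) := by
    intro t
    rw [← Complex.exp_eq_exp_iff_exists_int, hexp, Complex.exp_log]
    rw [← hexp]
    exact Complex.exp_ne_zero _
  obtain ⟨n₁, h₁⟩ := key 1
  obtain ⟨n₀, h₀⟩ := key 0
  have h : L 1 - L 0 = Complex.log (γ 1 - z) - Complex.log (γ 0 - z)
      + 2 * Real.pi * Complex.I * ((n₁ - n₀ : ℤ) : ℂ) := by
    rw [h₁, h₀]
    push_cast
    ring
  exact ⟨n₁ - n₀, ⟨L, hL, hexp, h⟩, h⟩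

/-- A curve has at most one turn around a point. -/
lemma IsTurn.unique {γ : ℝ → ℂ} {z : ℂ} {k l : ℤ} (hk : IsTurn γ z k) (hl : IsTurn γ z l) :
    k = l := by
  obtain ⟨L, hL, hLe, hLk⟩ := hk
  obtain ⟨M, hM, hMe, hMl⟩ := hl
  have key : ∀ t, ∃ n : ℤ, L t - M t = n * (2 * Real.pi * Complex.I) := by
    intro t
    obtain ⟨n, hn⟩ := Complex.exp_eq_exp_iff_exists_int.mp ((hLe t).trans (hMe t).symm)
    exact ⟨n, by rw [hn]; ring⟩
  choose n hn using key
  have hpi : (2 * Real.pi * Complex.I : ℂ) ≠ 0 := Complex.two_pi_I_ne_zero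
  have hcont : Continuous fun t => (n t : ℂ) := by
    have : (fun t => (n t : ℂ)) = fun t => (L t - M t) / (2 * Real.pi * Complex.I) := by
      funext t
      rw [hn t, mul_div_cancel_right₀ _ hpi]
    rw [this]
    fun_prop
  have hcont' : Continuous n := by
    have he : Topology.IsClosedEmbedding ((↑) : ℤ → ℂ) := Complex.isClosedEmbedding_intCast
    exact he.isEmbedding.continuous_iff.mpr hcont
  have hn01 : n 1 = n 0 := PreconnectedSpace.constant inferInstance hcont'
  have h1 := hn 1
  have h0 := hn 0
  rw [hn01] at h1
  have : (2 * Real.pi * Complex.I : ℂ) * k = 2 * Real.pi * Complex.I * l := by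
    linear_combination hMl - hLk + h1 - h0
  exact_mod_cast mul_left_cancel₀ hpi this

lemma exists_isTurn {γ : ℝ → ℂ} {z : ℂ} (hγ : Continuous γ) (hz : ∀ t, γ t ≠ z) :
    ∃ k : ℤ, IsTurn γ z k := by
  obtain ⟨L, hL, hexp⟩ := exists_continuous_log (f := fun t => γ t - z) (by fun_prop)
    (fun t => sub_ne_zero.mpr (hz t))
  obtain ⟨k, hk, -⟩ := isTurn_of_log hL hexp
  exact ⟨k, hk⟩

lemma exists_log_sub_log_neg {z : ℂ} (hz : z ≠ 0) :
    ∃ q : ℤ, Complex.log z - Complex.log (-z) = Real.pi * Complex.I * (2 * q + 1) := by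
  have h : Complex.exp (Complex.log z) = Complex.exp (Complex.log (-z) + Real.pi * Complex.I) := by
    rw [Complex.exp_add, Complex.exp_log hz, Complex.exp_log (neg_ne_zero.mpr hz),
      Complex.exp_pi_mul_I]
    ring
  obtain ⟨n, hn⟩ := Complex.exp_eq_exp_iff_exists_int.mp h
  exact ⟨n, by rw [hn]; ring⟩

/-- The turns of two disjoint curves around each other's ends satisfy a linear relation, because
the difference of the two curves has a continuous logarithm on the whole square. -/
lemma IsTurn.square {γ δ : ℝ → ℂ} {a b c d : ℂ} (hγ : Continuous γ) (hδ : Continuous δ)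
    (hdisj : ∀ s t, γ s ≠ δ t) (ha : γ 0 = a) (hb : γ 1 = b) (hc : δ 0 = c) (hd : δ 1 = d)
    {ka kb kc kd qac qad qbc qbd : ℤ}
    (hka : IsTurn δ a ka) (hkb : IsTurn δ b kb) (hkc : IsTurn γ c kc) (hkd : IsTurn γ d kd)
    (hac : Complex.log (c - a) - Complex.log (a - c) = Real.pi * Complex.I * (2 * qac + 1))
    (had : Complex.log (d - a) - Complex.log (a - d) = Real.pi * Complex.I * (2 * qad + 1))
    (hbc : Complex.log (c - b) - Complex.log (b - c) = Real.pi * Complex.I * (2 * qbc + 1))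
    (hbd : Complex.log (d - b) - Complex.log (b - d) = Real.pi * Complex.I * (2 * qbd + 1)) :
    ka - kb - kc + kd = qac - qad - qbc + qbd := by
  obtain ⟨L, hL, hexp⟩ := exists_continuous_log (X := ℝ × ℝ)
    (f := fun x => δ x.2 - γ x.1) (by fun_prop)
    (fun x => sub_ne_zero.mpr (hdisj x.1 x.2).symm)
  have horiz : ∀ s k, IsTurn δ (γ s) k → L (s, 1) - L (s, 0) =
      Complex.log (d - γ s) - Complex.log (c - γ s) + 2 * Real.pi * Complex.I * k := by
    intro s k hk
    obtain ⟨l, hl, hl'⟩ := isTurn_of_log (γ := δ) (z := γ s) (L := fun t => L (s, t))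
      (by fun_prop) (fun t => hexp (s, t))
    rw [hk.unique hl, ← hc, ← hd]
    exact hl'
  have vert : ∀ t k, IsTurn γ (δ t) k → L (1, t) - L (0, t) =
      Complex.log (b - δ t) - Complex.log (a - δ t) + 2 * Real.pi * Complex.I * k := by
    intro t k hk
    obtain ⟨l, hl, hl'⟩ := isTurn_of_log (γ := γ) (z := δ t)
      (L := fun s => L (s, t) + Real.pi * Complex.I)
      (by fun_prop) (fun s => by
        rw [Complex.exp_add, hexp (s, t), Complex.exp_pi_mul_I]
        ring)
    rw [hk.unique hl, ← ha, ← hb]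
    simpa using hl'
  have e1 := horiz 0 ka (ha ▸ hka)
  have e2 := horiz 1 kb (hb ▸ hkb)
  have e3 := vert 0 kc (hc ▸ hkc)
  have e4 := vert 1 kd (hd ▸ hkd)
  rw [ha] at e1
  rw [hb] at e2
  rw [hc] at e3
  rw [hd] at e4
  have hpi : (2 * Real.pi * Complex.I : ℂ) ≠ 0 := Complex.two_pi_I_ne_zero
  have : (2 * Real.pi * Complex.I : ℂ) * (ka - kb - kc + kd) =
      2 * Real.pi * Complex.I * (qac - qad - qbc + qbd) := by
    linear_combination -e1 + e2 + e3 - e4 + hac - had - hbc + hbd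
  exact_mod_cast mul_left_cancel₀ hpi this

/-- The vanishing of the van Kampen obstruction of `G` modulo 2: `p` plays the role of an ordering
of the vertices, and `k v e` that of the parity of the turn of the edge `e` around the vertex `v`,
where the vertices are thought of as lying on a line in the order given by `p`. -/
def IsAlgPlanar (G : SimpleGraph V) : Prop :=
  ∃ (p : V → V → ZMod 2) (k : V → Sym2 V → ZMod 2),
    (∀ a b, a ≠ b → p a b + p b a = 1) ∧
    ∀ a b c d, G.Adj a b → G.Adj c d → a ≠ c → a ≠ d → b ≠ c → b ≠ d →
      k a s(c, d) + k b s(c, d) + k c s(a, b) + k d s(a, b) = p a c + p a d + p b c + p b d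

lemma Sym2.mk_out (e : Sym2 V) : s(e.out.1, e.out.2) = e :=
  Quot.out_eq e

lemma PlaneEmbedding.exists_curve {G : SimpleGraph V} (E : PlaneEmbedding G) {u v : V}
    (h : G.Adj u v) : ∃ γ : ℝ → ℂ, Continuous γ ∧ γ 0 = E.vtx u ∧ γ 1 = E.vtx v ∧
      ∀ t, γ t ∈ E.arc u v := by
  obtain ⟨γ, hγ, -, h0, h1, harc⟩ := E.arc_curve h
  refine ⟨Set.IccExtend zero_le_one (Set.domRestrict (Set.Icc 0 1) γ), ?_, ?_, ?_, ?_⟩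
  · exact (continuousOn_iff_continuous_domRestrict.mp hγ).Icc_extend'
  · rw [Set.IccExtend_left]
    exact h0
  · rw [Set.IccExtend_right]
    exact h1
  · intro t
    rw [harc]
    exact ⟨_, (Set.projIcc (0 : ℝ) 1 zero_le_one t).2, rfl⟩

lemma PlaneEmbedding.arc_disjoint {G : SimpleGraph V} (E : PlaneEmbedding G) {a b c d : V}
    (hab : G.Adj a b) (hcd : G.Adj c d) (hac : a ≠ c) (had : a ≠ d) (hbc : b ≠ c) (hbd : b ≠ d)
    {x : ℂ} (hx : x ∈ E.arc a b) : x ∉ E.arc c d := by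
  intro hx'
  have hne : s(a, b) ≠ s(c, d) := by
    simp [hac, had]
  obtain ⟨h1, h2⟩ := E.arc_inter hab hcd hne ⟨hx, hx'⟩
  simp only [Set.mem_insert_iff, Set.mem_singleton_iff] at h1 h2
  rcases h1 with rfl | rfl <;> rcases h2 with h | h
  exacts [hac (E.vtx_inj h), had (E.vtx_inj h), hbc (E.vtx_inj h), hbd (E.vtx_inj h)]

lemma PlanarGraph.isAlgPlanar {G : SimpleGraph V} (hG : PlanarGraph G) : IsAlgPlanar G := by
  obtain ⟨E⟩ := hG
  have hq : ∀ a b, ∃ q : ℤ, a ≠ b → Complex.log (E.vtx b - E.vtx a) -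
      Complex.log (E.vtx a - E.vtx b) = Real.pi * Complex.I * (2 * q + 1) := by
    intro a b
    by_cases hab : a = b
    · exact ⟨0, fun h => absurd hab h⟩
    · obtain ⟨q, hq⟩ := exists_log_sub_log_neg
        (sub_ne_zero.mpr fun h => hab (E.vtx_inj h.symm))
      exact ⟨q, fun _ => by rw [← hq, neg_sub]⟩
  choose q hq using hq
  have hγ : ∀ e : Sym2 V, ∃ γ : ℝ → ℂ, e ∈ G.edgeSet → Continuous γ ∧
      γ 0 = E.vtx e.out.1 ∧ γ 1 = E.vtx e.out.2 ∧ ∀ t, γ t ∈ E.arc e.out.1 e.out.2 := by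
    intro e
    by_cases he : e ∈ G.edgeSet
    · have : G.Adj e.out.1 e.out.2 := by
        rwa [← SimpleGraph.mem_edgeSet, Sym2.mk_out]
      obtain ⟨γ, h⟩ := E.exists_curve this
      exact ⟨γ, fun _ => h⟩
    · exact ⟨fun _ => 0, fun h => absurd h he⟩
  choose γ hγ using hγ
  have hk : ∀ v e, ∃ k : ℤ, e ∈ G.edgeSet → v ∉ e → IsTurn (γ e) (E.vtx v) k := by
    intro v e
    by_cases he : e ∈ G.edgeSet ∧ v ∉ e
    · obtain ⟨he, hv⟩ := he
      obtain ⟨hc, -, -, harc⟩ := hγ e he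
      have hadj : G.Adj e.out.1 e.out.2 := by
        rwa [← SimpleGraph.mem_edgeSet, Sym2.mk_out]
      obtain ⟨k, hk⟩ := exists_isTurn (z := E.vtx v) hc (fun t ht => by
        have := E.arc_vtx hadj v (ht ▸ harc t)
        rcases this with rfl | rfl
        · exact hv (Sym2.out_fst_mem e)
        · exact hv (Sym2.out_snd_mem e))
      exact ⟨k, fun _ _ => hk⟩
    · exact ⟨0, fun h1 h2 => absurd ⟨h1, h2⟩ he⟩
  choose k hk using hk
  refine ⟨fun a b => q a b, fun v e => k v e, fun a b hab => ?_, ?_⟩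
  · have h1 := hq a b hab
    have h2 := hq b a hab.symm
    have hpi : (2 * Real.pi * Complex.I : ℂ) ≠ 0 := Complex.two_pi_I_ne_zero
    have h3 : (2 * Real.pi * Complex.I : ℂ) * (q a b + q b a) = 2 * Real.pi * Complex.I * (-1) := by
      linear_combination -h1 - h2
    have h4 : q a b + q b a = -1 := by
      exact_mod_cast mul_left_cancel₀ hpi h3
    have h5 : ((q a b + q b a : ℤ) : ZMod 2) = ((-1 : ℤ) : ZMod 2) := by rw [h4]
    push_cast at h5
    rw [h5]
    decide
  · have main : ∀ e f : Sym2 V, e ∈ G.edgeSet → f ∈ G.edgeSet →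
        ∀ a b c d, e.out.1 = a → e.out.2 = b → f.out.1 = c → f.out.2 = d →
          a ≠ c → a ≠ d → b ≠ c → b ≠ d →
          (k a f + k b f + k c e + k d e : ZMod 2) = q a c + q a d + q b c + q b d := by
      rintro e f he hf a b c d rfl rfl rfl rfl hac had hbc hbd
      obtain ⟨hγc, hγ0, hγ1, hγarc⟩ := hγ e he
      obtain ⟨hδc, hδ0, hδ1, hδarc⟩ := hγ f hf
      have hee := Sym2.mk_out e
      have hff := Sym2.mk_out f
      have hab : G.Adj e.out.1 e.out.2 := by rwa [← SimpleGraph.mem_edgeSet, hee]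
      have hcd : G.Adj f.out.1 f.out.2 := by rwa [← SimpleGraph.mem_edgeSet, hff]
      have hnf : ∀ x, x ≠ f.out.1 → x ≠ f.out.2 → x ∉ f := by
        intro x h1 h2 h
        rw [← hff, Sym2.mem_iff] at h
        tauto
      have hne : ∀ x, x ≠ e.out.1 → x ≠ e.out.2 → x ∉ e := by
        intro x h1 h2 h
        rw [← hee, Sym2.mem_iff] at h
        tauto
      have := IsTurn.square hγc hδc
        (fun s t h => E.arc_disjoint hab hcd hac had hbc hbd (hγarc s) (h ▸ hδarc t))
        hγ0 hγ1 hδ0 hδ1 (hk _ f hf (hnf _ hac had)) (hk _ f hf (hnf _ hbc hbd))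
        (hk _ e he (hne _ hac.symm hbc.symm)) (hk _ e he (hne _ had.symm hbd.symm))
        (hq _ _ hac) (hq _ _ had) (hq _ _ hbc) (hq _ _ hbd)
      have h2 := congrArg (fun n : ℤ => (n : ZMod 2)) this
      simpa [CharTwo.sub_eq_add] using h2
    intro a b c d hab hcd hac had hbc hbd
    have hout : ∀ x y : V, (s(x, y).out.1 = x ∧ s(x, y).out.2 = y) ∨
        (s(x, y).out.1 = y ∧ s(x, y).out.2 = x) := by
      intro x y
      simpa only [Sym2.eq_iff] using Sym2.mk_out s(x, y)
    have he : s(a, b) ∈ G.edgeSet := hab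
    have hf : s(c, d) ∈ G.edgeSet := hcd
    rcases hout a b with ⟨h1, h2⟩ | ⟨h1, h2⟩ <;> rcases hout c d with ⟨h3, h4⟩ | ⟨h3, h4⟩
    · exact main _ _ he hf _ _ _ _ h1 h2 h3 h4 hac had hbc hbd
    · linear_combination main _ _ he hf _ _ _ _ h1 h2 h3 h4 had hac hbd hbc
    · linear_combination main _ _ he hf _ _ _ _ h1 h2 h3 h4 hbc hbd hac had
    · linear_combination main _ _ he hf _ _ _ _ h1 h2 h3 h4 hbd hbc had hac

/-- The graph obtained from `G` by contracting the edge `xy` onto the vertex `x`; the vertex `y`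
becomes isolated. -/
def SimpleGraph.contractEdge (G : SimpleGraph V) (x y : V) : SimpleGraph V where
  Adj a b := a ≠ b ∧ a ≠ y ∧ b ≠ y ∧ (G.Adj a b ∨ (a = x ∧ G.Adj y b) ∨ (b = x ∧ G.Adj y a))
  symm := ⟨fun a b ⟨hne, ha, hb, h⟩ => ⟨hne.symm, hb, ha, by
    rcases h with h | h | h
    exacts [Or.inl h.symm, Or.inr (Or.inr h), Or.inr (Or.inl h)]⟩⟩
  loopless := ⟨fun a h => h.1 rfl⟩

namespace IsAlgPlanar

variable {G H : SimpleGraph V}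

lemma mono (hG : IsAlgPlanar G) (h : H ≤ G) : IsAlgPlanar H := by
  obtain ⟨p, k, hp, hk⟩ := hG
  exact ⟨p, k, hp, fun a b c d hab hcd => hk a b c d (h hab) (h hcd)⟩

open scoped Classical in
lemma contractEdge (hG : IsAlgPlanar G) {x y : V} (hxy : G.Adj x y) :
    IsAlgPlanar (G.contractEdge x y) := by
  obtain ⟨p, k, hp, hk⟩ := hG
  have h2 : (2 : ZMod 2) = 0 := by decide
  let f : V → V := fun a => if a = x then y else a
  have hf : ∀ b, x ≠ b → Sym2.map f s(x, b) = s(y, b) := by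
    intro b hb
    simp [f, hb.symm]
  let k' : V → Sym2 V → ZMod 2 := fun v e =>
    if e ∈ G.edgeSet then k v e else k v (e.map f) + k v s(x, y)
  have hold : ∀ v {a b}, G.Adj a b → k' v s(a, b) = k v s(a, b) := by
    intro v a b hab
    simp [k', hab]
  have hnew : ∀ v {b}, x ≠ b → ¬ G.Adj x b → k' v s(x, b) = k v s(y, b) + k v s(x, y) := by
    intro v b hb hab
    simp only [k', SimpleGraph.mem_edgeSet, hab, if_false, hf b hb]
  refine ⟨p, k', hp, ?_⟩
  have first : ∀ b c d, x ≠ b → y ≠ b → G.Adj y b → ¬ G.Adj x b → G.Adj c d → c ≠ y → d ≠ y →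
      x ≠ c → x ≠ d → b ≠ c → b ≠ d →
      k' x s(c, d) + k' b s(c, d) + k' c s(x, b) + k' d s(x, b) =
        p x c + p x d + p b c + p b d := by
    intro b c d hxb hyb hyb' hxb' hcd hcy hdy hxc hxd hbc hbd
    rw [hold _ hcd, hold _ hcd, hnew _ hxb hxb', hnew _ hxb hxb']
    have e1 := hk y b c d hyb' hcd hcy.symm hdy.symm hbc hbd
    have e2 := hk x y c d hxy hcd hxc hxd hcy.symm hdy.symm
    linear_combination e1 + e2 + (p y c + p y d - k y s(c, d)) * h2
  have second : ∀ a b d, x ≠ d → y ≠ d → G.Adj y d → ¬ G.Adj x d → G.Adj a b → a ≠ y → b ≠ y →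
      a ≠ x → a ≠ d → b ≠ x → b ≠ d →
      k' a s(x, d) + k' b s(x, d) + k' x s(a, b) + k' d s(a, b) =
        p a x + p a d + p b x + p b d := by
    intro a b d hxd hyd hyd' hxd' hab hay hby hax had hbx hbd
    rw [hold _ hab, hold _ hab, hnew _ hxd hxd', hnew _ hxd hxd']
    have e1 := hk a b y d hab hyd' hay had hby hbd
    have e2 := hk a b x y hab hxy hax hay hbx hby
    linear_combination e1 + e2 + (p a y + p b y - k y s(a, b)) * h2
  rintro a b c d ⟨hab, hay, hby, habG⟩ ⟨hcd, hcy, hdy, hcdG⟩ hac had hbc hbd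
  by_cases h1 : G.Adj a b
  · by_cases h3 : G.Adj c d
    · rw [hold _ h1, hold _ h1, hold _ h3, hold _ h3]
      exact hk a b c d h1 h3 hac had hbc hbd
    · rcases hcdG with h | ⟨rfl, h⟩ | ⟨rfl, h⟩
      · exact absurd h h3
      · exact second a b d hcd hdy.symm h h3 h1 hay hby hac had hbc hbd
      · rw [Sym2.eq_swap (a := c)]
        linear_combination second a b c hcd.symm hcy.symm h (fun h => h3 h.symm) h1 hay hby
          had hac hbd hbc
  · have hcd' : G.Adj c d := by
      rcases habG with h | ⟨rfl, h⟩ | ⟨rfl, h⟩ <;> rcases hcdG with h' | ⟨rfl, h'⟩ | ⟨rfl, h'⟩ <;>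
        first | assumption | exact absurd h h1 | exact absurd rfl ‹_›
    rcases habG with h | ⟨rfl, h⟩ | ⟨rfl, h⟩
    · exact absurd h h1
    · exact first b c d hab hby.symm h h1 hcd' hcy hdy hac had hbc hbd
    · rw [Sym2.eq_swap (a := a)]
      linear_combination first a c d hab.symm hay.symm h (fun h => h1 h.symm) hcd' hcy hdy
        hbc hbd hac had

/-- If an edge `uv` lies in three triangles, then one of them, `uvw`, separates the third vertices
of the other two. -/
lemma exists_separating_triangle (hG : IsAlgPlanar G) {u v x y z : V} (huv : G.Adj u v)
    (hux : G.Adj u x) (huy : G.Adj u y) (huz : G.Adj u z)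
    (hvx : G.Adj v x) (hvy : G.Adj v y) (hvz : G.Adj v z)
    (hxy : x ≠ y) (hxz : x ≠ z) (hyz : y ≠ z) :
    ∃ w, G.Adj u w ∧ G.Adj v w ∧ ∃ σ : V → ZMod 2,
      (∀ a b, G.Adj a b → a ≠ u → a ≠ v → a ≠ w → b ≠ u → b ≠ v → b ≠ w → σ a = σ b) ∧
      ∃ a b, G.Adj u a ∧ G.Adj v a ∧ a ≠ w ∧ G.Adj u b ∧ G.Adj v b ∧ b ≠ w ∧ σ a ≠ σ b := by
  obtain ⟨p, k, hp, hk⟩ := hG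
  have h2 : (2 : ZMod 2) = 0 := by decide
  let σ : V → V → ZMod 2 := fun w a => k a s(u, v) + k a s(v, w) + k a s(u, w)
  have hσ : ∀ w, G.Adj u w → G.Adj v w → ∀ a b, G.Adj a b → a ≠ u → a ≠ v → a ≠ w →
      b ≠ u → b ≠ v → b ≠ w → σ w a = σ w b := by
    intro w huw hvw a b hab hau hav haw hbu hbv hbw
    have e1 := hk a b u v hab huv hau hav hbu hbv
    have e2 := hk a b v w hab hvw hav haw hbv hbw
    have e3 := hk a b u w hab huw hau haw hbu hbw
    simp only [σ]
    linear_combination e1 + e2 + e3 + (p a u + p a v + p a w + p b u + p b v + p b w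
      - k u s(a, b) - k v s(a, b) - k w s(a, b)
      - k b s(u, v) - k b s(v, w) - k b s(u, w)) * h2
  by_contra hcon
  push Not at hcon
  have hx := hcon x hux hvx (σ x) (hσ x hux hvx) y z huy hvy hxy.symm huz hvz hxz.symm
  have hy := hcon y huy hvy (σ y) (hσ y huy hvy) x z hux hvx hxy huz hvz hyz.symm
  have hz := hcon z huz hvz (σ z) (hσ z huz hvz) x y hux hvx hxz huy hvy hyz
  have rel : ∀ i j, G.Adj v i → G.Adj u i → G.Adj u j → G.Adj v j → i ≠ j →
      k v s(u, j) + k i s(u, j) + k u s(v, i) + k j s(v, i) = p v u + p v j + p i u + p i j :=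
    fun i j hvi hui huj hvj hij => hk v i u j hvi huj huv.ne.symm hvj.ne hui.ne.symm hij
  have r1 := rel x y hvx hux huy hvy hxy
  have r2 := rel y x hvy huy hux hvx hxy.symm
  have r3 := rel x z hvx hux huz hvz hxz
  have r4 := rel z x hvz huz hux hvx hxz.symm
  have r5 := rel y z hvy huy huz hvz hyz
  have r6 := rel z y hvz huz huy hvy hyz.symm
  have p1 := hp x y hxy
  have p2 := hp x z hxz
  have p3 := hp y z hyz
  have : (1 : ZMod 2) = 0 := by
    simp only [σ] at hx hy hz
    linear_combination hx + hy + hz + r1 + r2 + r3 + r4 + r5 + r6 + p1 + p2 + p3 +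
      (2 - k x s(u, v) + k z s(u, v)
        - k y s(v, x) - k y s(u, x) - k x s(v, y) - k x s(u, y) - k x s(v, z) - k x s(u, z)
        - k v s(u, x) - k v s(u, y) - k v s(u, z) - k u s(v, x) - k u s(v, y) - k u s(v, z)
        + 3 * p v u + p v x + p v y + p v z + p x u + p y u + p z u) * h2
  exact absurd this (by decide)

end IsAlgPlanar

/-! ### Perfect matchings of bridgeless cubic graphs -/

section Petersen

open Finset

open scoped Classical

variable {T E : Type*} [Fintype T] [Fintype E]

/-- In an incidence structure where every `t` is incident with three `e`s and every `e` with at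
most two `t`s, an odd set of `t`s whose boundary is not a single `e` has a boundary of size at
least three. -/
lemma three_le_card_boundary {I : T → Finset E} (h3 : ∀ t, #(I t) = 3)
    (h2 : ∀ e, #{t | e ∈ I t} = 2) {K : Finset T} (hK : Odd #K)
    (hb : #{e | #{t ∈ K | e ∈ I t} = 1} ≠ 1) : 3 ≤ #{e | #{t ∈ K | e ∈ I t} = 1} := by
  have hle : ∀ e, #{t ∈ K | e ∈ I t} ≤ 2 := fun e =>
    (card_le_card (filter_subset_filter _ (subset_univ K))).trans (h2 e).le
  have hsum : ∑ e, #{t ∈ K | e ∈ I t} = 3 * #K := by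
    calc ∑ e, #{t ∈ K | e ∈ I t} = ∑ t ∈ K, #{e | e ∈ I t} :=
          (sum_card_bipartiteAbove_eq_sum_card_bipartiteBelow fun t e => e ∈ I t).symm
      _ = 3 * #K := by simp [h3, mul_comm]
  have hodd : Odd #{e | #{t ∈ K | e ∈ I t} = 1} := by
    have h : Odd (∑ e, #{t ∈ K | e ∈ I t}) := by
      rw [hsum]
      exact Odd.mul (by decide) hK
    rw [odd_sum_iff_odd_card_odd] at h
    convert h using 5 with e
    have := hle e
    constructor
    · intro h
      rw [h]
      exact odd_one
    · rintro ⟨r, hr⟩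
      omega
  obtain ⟨r, hr⟩ := hodd
  omega

/-- Counting the boundaries of disjoint odd sets `K c` of vertices, where edges outside `B` lead
from `K c` only to `K c` and to `U`. -/
lemma card_odd_parts_le {ι : Type*} {I : T → Finset E} (h3 : ∀ t, #(I t) = 3)
    (h2 : ∀ e, #{t | e ∈ I t} = 2) (hb : ∀ K : Finset T, #{e | #{t ∈ K | e ∈ I t} = 1} ≠ 1)
    (U : Finset T) (B : Finset E) (C : Finset ι) (K : ι → Finset T)
    (hodd : ∀ c ∈ C, Odd #(K c)) (hdisj : ∀ c d t, t ∈ K c → t ∈ K d → c = d)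
    (hU : ∀ c, ∀ t ∈ K c, t ∉ U)
    (hclosed : ∀ c, ∀ s ∈ K c, ∀ t ∉ U, ∀ e ∉ B, e ∈ I s → e ∈ I t → t ∈ K c) :
    3 * #C ≤ 3 * #U + 2 * #B := by
  let bd : ι → Finset E := fun c => {e | #{t ∈ K c | e ∈ I t} = 1}
  have hsplit : ∀ e, #{t ∈ U | e ∈ I t} + #{t ∈ Uᶜ | e ∈ I t} = 2 := by
    intro e
    rw [← h2 e, ← card_union_of_disjoint, ← filter_union, union_compl]
    exact disjoint_filter_filter disjoint_compl_right
  have hout : ∀ e, #{c ∈ C | e ∈ bd c} ≤ #{t ∈ Uᶜ | e ∈ I t} := by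
    intro e
    have hex : ∀ c, e ∈ bd c → ∃ t ∈ K c, e ∈ I t := by
      intro c hc
      simp only [bd, mem_filter, mem_univ, true_and] at hc
      obtain ⟨t, ht⟩ := card_pos.mp (by omega : 0 < #{t ∈ K c | e ∈ I t})
      exact ⟨t, (mem_filter.mp ht).1, (mem_filter.mp ht).2⟩
    have : Nonempty T := by
      obtain ⟨t, -⟩ := card_pos.mp (by rw [h2 e]; omega : 0 < #{t | e ∈ I t})
      exact ⟨t⟩
    choose! r hr using hex
    refine card_le_card_of_injOn r (fun c hc => ?_) (fun c hc d hd hcd => ?_)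
    · have hc' := (mem_filter.mp hc).2
      simp only [coe_filter, Set.mem_ofPred_eq, mem_compl]
      exact ⟨hU c _ (hr c hc').1, (hr c hc').2⟩
    · have hc' := (mem_filter.mp hc).2
      have hd' := (mem_filter.mp hd).2
      exact hdisj c d (r c) (hr c hc').1 (hcd ▸ (hr d hd').1)
  have hbound : ∀ e, #{c ∈ C | e ∈ bd c} ≤ #{t ∈ U | e ∈ I t} + if e ∈ B then 2 else 0 := by
    intro e
    have h1 := hsplit e
    have h4 := hout e
    by_cases heB : e ∈ B
    · simp only [heB, if_true]
      omega
    by_cases hu : #{t ∈ U | e ∈ I t} = 0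
    · suffices #{c ∈ C | e ∈ bd c} = 0 by omega
      rw [card_eq_zero, filter_eq_empty_iff]
      intro c _ hc
      simp only [bd, mem_filter, mem_univ, true_and] at hc
      obtain ⟨s, hs⟩ := card_eq_one.mp hc
      have hsK : s ∈ K c ∧ e ∈ I s := mem_filter.mp (hs ▸ mem_singleton_self s)
      have hall : ({t | e ∈ I t} : Finset T) ⊆ {t ∈ K c | e ∈ I t} := by
        intro t ht
        have het := (mem_filter.mp ht).2
        refine mem_filter.mpr ⟨hclosed c s hsK.1 t (fun htU => ?_) e heB hsK.2 het, het⟩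
        rw [card_eq_zero, filter_eq_empty_iff] at hu
        exact hu htU het
      have := card_le_card hall
      rw [h2 e] at this
      omega
    · omega
  calc 3 * #C = ∑ _c ∈ C, 3 := by simp [mul_comm]
    _ ≤ ∑ c ∈ C, #(bd c) :=
        sum_le_sum fun c hc => three_le_card_boundary h3 h2 (hodd c hc) (hb _)
    _ = ∑ c ∈ C, #{e | e ∈ bd c} := by simp
    _ = ∑ e, #{c ∈ C | e ∈ bd c} :=
        sum_card_bipartiteAbove_eq_sum_card_bipartiteBelow fun c e => e ∈ bd c
    _ ≤ ∑ e, (#{t ∈ U | e ∈ I t} + if e ∈ B then 2 else 0) := sum_le_sum fun e _ => hbound e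
    _ = ∑ t ∈ U, #{e | e ∈ I t} + 2 * #B := by
        rw [sum_add_distrib]
        congr 1
        · exact (sum_card_bipartiteAbove_eq_sum_card_bipartiteBelow fun t e => e ∈ I t).symm
        · simp [mul_comm]
    _ = 3 * #U + 2 * #B := by simp [h3, mul_comm]

/-- Petersen's theorem, for the cubic graph with vertex set `T` and edge set `E`, in the form of
Plesník: every edge of a bridgeless cubic graph is in a perfect matching. -/
theorem exists_perfect_matching_of_cubic {I : T → Finset E} (h3 : ∀ t, #(I t) = 3)
    (h2 : ∀ e, #{t | e ∈ I t} = 2)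
    (h1 : ∀ s t, s ≠ t → ∀ e ∈ I s, e ∈ I t → ∀ f ∈ I s, f ∈ I t → e = f)
    (hb : ∀ K : Finset T, #{e | #{t ∈ K | e ∈ I t} = 1} ≠ 1) (g : E) :
    ∃ X : Finset E, g ∈ X ∧ (∀ t, ∃ e ∈ X, e ∈ I t) ∧ 3 * #X ≤ Fintype.card E := by
  have hcount : 3 * Fintype.card T = 2 * Fintype.card E := by
    have := sum_card_bipartiteAbove_eq_sum_card_bipartiteBelow (s := (univ : Finset T))
      (t := (univ : Finset E)) fun t e => e ∈ I t
    simp only [bipartiteAbove, bipartiteBelow, h2, filter_univ_mem, h3, sum_const, card_univ,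
      smul_eq_mul] at this
    omega
  obtain ⟨t₁, ht₁⟩ : ∃ t, g ∈ I t := by
    obtain ⟨t, ht⟩ := card_pos.mp (by rw [h2 g]; omega : 0 < #{t | g ∈ I t})
    exact ⟨t, (mem_filter.mp ht).2⟩
  let B : Finset E := (I t₁).erase g
  have hB : #B = 2 := by
    rw [card_erase_of_mem ht₁, h3]
  let D : SimpleGraph T :=
    { Adj := fun s t => s ≠ t ∧ ∃ e, e ∈ I s ∧ e ∈ I t ∧ e ∉ B
      symm := ⟨fun s t ⟨hne, e, hs, ht, he⟩ => ⟨hne.symm, e, ht, hs, he⟩⟩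
      loopless := ⟨fun s h => h.1 rfl⟩ }
  obtain ⟨M, hM⟩ : ∃ M : D.Subgraph, M.IsPerfectMatching := by
    rw [SimpleGraph.tutte]
    intro U hU
    let H := ((⊤ : D.Subgraph).deleteVerts U).coe
    have hlt : U.ncard < H.oddComponents.ncard := hU
    have hverts : ∀ t, t ∈ ((⊤ : D.Subgraph).deleteVerts U).verts ↔ t ∉ U := by simp
    let K : H.ConnectedComponent → Finset T := fun c =>
      {t | ∃ h : t ∈ ((⊤ : D.Subgraph).deleteVerts U).verts, H.connectedComponentMk ⟨t, h⟩ = c}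
    have hKcard : ∀ c, #(K c) = c.supp.ncard := by
      intro c
      rw [← Set.ncard_image_of_injective _ Subtype.val_injective, ← Set.ncard_coe_finset]
      congr 1
      ext t
      simp [K]
    have key := card_odd_parts_le h3 h2 hb U.toFinset B H.oddComponents.toFinset K
      (fun c hc => by
        rw [hKcard]
        simpa using hc)
      (fun c d t hc hd => by
        obtain ⟨_, h⟩ := (mem_filter.mp hc).2
        obtain ⟨_, h'⟩ := (mem_filter.mp hd).2
        exact h.symm.trans h')
      (fun c t hc => by
        obtain ⟨h, _⟩ := (mem_filter.mp hc).2
        simpa using (hverts t).mp h)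
      (fun c s hs t ht e heB hes het => by
        obtain ⟨h, hsc⟩ := (mem_filter.mp hs).2
        have ht' : t ∉ U := by simpa using ht
        refine mem_filter.mpr ⟨mem_univ _, (hverts t).mpr ht', ?_⟩
        by_cases hst : s = t
        · subst hst
          exact hsc
        rw [← hsc, SimpleGraph.ConnectedComponent.eq]
        refine SimpleGraph.Adj.reachable ?_
        have hadj : D.Adj t s := ⟨fun h => hst h.symm, e, het, hes, heB⟩
        simpa [H, SimpleGraph.Subgraph.deleteVerts_adj, ht', (hverts s).mp h] using hadj)
    have hpar : Odd H.oddComponents.ncard ↔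
        Odd (Nat.card ((⊤ : D.Subgraph).deleteVerts U).verts) :=
      H.odd_ncard_oddComponents
    have hcardV : Nat.card ((⊤ : D.Subgraph).deleteVerts U).verts + U.ncard = Fintype.card T := by
      have : ((⊤ : D.Subgraph).deleteVerts U).verts = Uᶜ := by
        ext t
        simp
      rw [this, Nat.card_coe_set_eq, add_comm, Set.ncard_add_ncard_compl, Nat.card_eq_fintype_card]
    rw [← Set.ncard_eq_toFinset_card', ← Set.ncard_eq_toFinset_card', hB] at key
    rw [Nat.odd_iff, Nat.odd_iff] at hpar
    omega
  have hMD : ∀ {s t}, M.Adj s t → ∃ e, e ∈ I s ∧ e ∈ I t ∧ e ∉ B := fun h => (M.adj_sub h).2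
  have huniq : ∀ t, ∃! s, M.Adj t s := SimpleGraph.Subgraph.isPerfectMatching_iff.mp hM
  let X : Finset E := {e | ∃ s t, M.Adj s t ∧ e ∈ I s ∧ e ∈ I t}
  have hone : ∀ t, #{e ∈ X | e ∈ I t} = 1 := by
    intro t
    obtain ⟨s, hts, hs⟩ := huniq t
    obtain ⟨e, het, hes, -⟩ := hMD hts
    rw [card_eq_one]
    refine ⟨e, eq_singleton_iff_unique_mem.mpr ⟨?_, fun f hf => ?_⟩⟩
    · simp only [X, mem_filter, mem_univ, true_and]
      exact ⟨⟨t, s, hts, het, hes⟩, het⟩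
    · simp only [X, mem_filter, mem_univ, true_and] at hf
      obtain ⟨⟨a, b, hab, hfa, hfb⟩, hft⟩ := hf
      have hpair : ({a, b} : Finset T) = univ.filter fun t => f ∈ I t := by
        refine eq_of_subset_of_card_le ?_ ?_
        · intro c hc
          simp only [mem_insert, mem_singleton] at hc
          rcases hc with rfl | rfl <;> simp [*]
        · rw [h2 f, card_pair hab.ne]
      have ht : t ∈ ({a, b} : Finset T) := by
        rw [hpair]
        simpa using hft
      simp only [mem_insert, mem_singleton] at ht
      have hfs : f ∈ I s := by
        rcases ht with rfl | rfl
        · rwa [← hs b hab]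
        · rwa [← hs a hab.symm]
      exact h1 t s hts.ne f hft hfs e het hes
  refine ⟨X, ?_, fun t => ?_, ?_⟩
  · obtain ⟨s, hts, hs⟩ := huniq t₁
    obtain ⟨e, het, hes, heB⟩ := hMD hts
    have : e = g := by
      by_contra hne
      exact heB (mem_erase.mpr ⟨hne, het⟩)
    subst this
    simp only [X, mem_filter, mem_univ, true_and]
    exact ⟨t₁, s, hts, het, hes⟩
  · obtain ⟨e, he⟩ := card_pos.mp (by rw [hone t]; omega : 0 < #{e ∈ X | e ∈ I t})
    exact ⟨e, (mem_filter.mp he).1, (mem_filter.mp he).2⟩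
  · have := sum_card_bipartiteAbove_eq_sum_card_bipartiteBelow (s := (univ : Finset T))
      (t := X) fun t e => e ∈ I t
    simp only [bipartiteAbove, bipartiteBelow, h2, hone, sum_const, card_univ,
      smul_eq_mul] at this
    omega

end Petersen

/-! ### Triangle transversals -/

section Transversal

open Finset

open scoped Classical

lemma card_filter_subtype_mem {α : Type*} (s : Finset α) (p : α → Prop) :
    #{x : {x // x ∈ s} | p x} = #{x ∈ s | p x} := by
  rw [← card_map (Function.Embedding.subtype _)]
  congr 1
  ext x
  simp [and_comm]

variable [Fintype V] {G : SimpleGraph V}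

/-- The set of common neighbours of `u` and `v`. -/
noncomputable def commonNbrs (G : SimpleGraph V) (u v : V) : Finset V :=
  {w | G.Adj u w ∧ G.Adj v w}

@[simp] lemma mem_commonNbrs {u v w : V} : w ∈ commonNbrs G u v ↔ G.Adj u w ∧ G.Adj v w := by
  simp [commonNbrs]

/-- The set of triangles of `G` containing the edge `e`. -/
noncomputable def trianglesOn (G : SimpleGraph V) (e : Sym2 V) : Finset (Finset V) :=
  {t ∈ G.cliqueFinset 3 | ∀ v ∈ e, v ∈ t}

/-- A triangle containing the edge `uv` is obtained by adding a common neighbour. -/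
lemma exists_third_vertex {u v : V} {t : Finset V} (ht : G.IsNClique 3 t) (hu : u ∈ t) (hv : v ∈ t)
    (huv : u ≠ v) : ∃ w ∈ commonNbrs G u v, t = {u, v, w} := by
  obtain ⟨w, hw⟩ : ∃ w, (t.erase u).erase v = {w} := by
    rw [← card_eq_one, card_erase_of_mem (mem_erase.mpr ⟨huv.symm, hv⟩), card_erase_of_mem hu,
      ht.card_eq]
  have hwt : w ∈ (t.erase u).erase v := hw ▸ mem_singleton_self w
  simp only [mem_erase] at hwt
  refine ⟨w, mem_commonNbrs.mpr ⟨ht.isClique hu hwt.2.2 hwt.2.1.symm,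
    ht.isClique hv hwt.2.2 hwt.1.symm⟩, ?_⟩
  rw [← hw, insert_erase (mem_erase.mpr ⟨huv.symm, hv⟩), insert_erase hu]

lemma card_trianglesOn {u v : V} (huv : G.Adj u v) :
    #(trianglesOn G s(u, v)) = #(commonNbrs G u v) := by
  symm
  refine card_bij (fun w _ => {u, v, w}) (fun w hw => ?_) (fun w hw w' hw' h => ?_) (fun t ht => ?_)
  · rw [mem_commonNbrs] at hw
    simp only [trianglesOn, mem_filter, SimpleGraph.mem_cliqueFinset_iff]
    exact ⟨SimpleGraph.is3Clique_triple_iff.mpr ⟨huv, hw.1, hw.2⟩, by simp⟩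
  · rw [mem_commonNbrs] at hw hw'
    have : w ∈ ({u, v, w'} : Finset V) := h ▸ by simp
    simp only [mem_insert, mem_singleton] at this
    rcases this with h | h | h
    · exact absurd h hw.1.ne.symm
    · exact absurd h hw.2.ne.symm
    · exact h
  · simp only [trianglesOn, mem_filter, SimpleGraph.mem_cliqueFinset_iff, Sym2.mem_iff,
      forall_eq_or_imp, forall_eq] at ht
    obtain ⟨w, hw, rfl⟩ := exists_third_vertex ht.1 ht.2.1 ht.2.2 huv.ne
    exact ⟨w, hw, rfl⟩

lemma card_edges_of_triangle {t : Finset V} (ht : G.IsNClique 3 t) :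
    #{e ∈ G.edgeFinset | ∀ v ∈ e, v ∈ t} = 3 := by
  obtain ⟨a, b, c, hab, hac, hbc, rfl⟩ := SimpleGraph.is3Clique_iff.mp ht
  have : ({e ∈ G.edgeFinset | ∀ v ∈ e, v ∈ ({a, b, c} : Finset V)} : Finset (Sym2 V)) =
      {s(a, b), s(a, c), s(b, c)} := by
    ext e
    induction e with | _ x y
    have h1 := hab.symm
    have h2 := hac.symm
    have h3 := hbc.symm
    simp only [mem_filter, SimpleGraph.mem_edgeFinset, SimpleGraph.mem_edgeSet, Sym2.mem_iff,
      forall_eq_or_imp, forall_eq, mem_insert, mem_singleton, Sym2.eq_iff]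
    constructor
    · rintro ⟨hxy, rfl | rfl | rfl, rfl | rfl | rfl⟩ <;> simp_all
    · rintro ((⟨rfl, rfl⟩ | ⟨rfl, rfl⟩) | (⟨rfl, rfl⟩ | ⟨rfl, rfl⟩) | (⟨rfl, rfl⟩ | ⟨rfl, rfl⟩)) <;>
        simp_all
  rw [this, card_eq_three]
  exact ⟨_, _, _, by simp [hbc.ne, hab.ne.symm], by simp [hab.ne, hac.ne], by simp [hab.ne, hac.ne],
    rfl⟩

lemma even_card_edges_at_vertex {t : Finset V} (ht : G.IsNClique 3 t) (v : V) :
    Even #{e ∈ G.edgeFinset | v ∈ e ∧ ∀ w ∈ e, w ∈ t} := by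
  by_cases hv : v ∈ t
  · have : ({e ∈ G.edgeFinset | v ∈ e ∧ ∀ w ∈ e, w ∈ t} : Finset (Sym2 V)) =
        (t.erase v).image fun w => s(v, w) := by
      ext e
      simp only [mem_filter, SimpleGraph.mem_edgeFinset, mem_image, mem_erase]
      constructor
      · rintro ⟨he, ⟨w, rfl⟩, hw⟩
        exact ⟨w, ⟨(SimpleGraph.mem_edgeSet _ |>.mp he).ne.symm, hw w (by simp)⟩, rfl⟩
      · rintro ⟨w, ⟨hwv, hw⟩, rfl⟩
        exact ⟨ht.isClique hv hw hwv.symm, by simp, by simp [hv, hw]⟩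
    rw [this, card_image_of_injective _ (fun a b h => Sym2.congr_right.mp h), card_erase_of_mem hv,
      ht.card_eq]
    decide
  · rw [filter_false_of_mem]
    · simp
    · rintro e - ⟨hve, h⟩
      exact hv (h v hve)

/-- A sum of triangles modulo 2 is never a single edge. -/
lemma exists_ne_odd_card {K : Finset (Finset V)} (hK : ∀ t ∈ K, G.IsNClique 3 t) {e₀ : Sym2 V}
    (he₀ : e₀ ∈ G.edgeFinset) (hodd : Odd #{t ∈ K | ∀ v ∈ e₀, v ∈ t}) :
    ∃ e ∈ G.edgeFinset, e ≠ e₀ ∧ Odd #{t ∈ K | ∀ v ∈ e, v ∈ t} := by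
  by_contra hcon
  push Not at hcon
  obtain ⟨v, hv⟩ : ∃ v, v ∈ e₀ := ⟨_, Sym2.out_fst_mem e₀⟩
  have heven : Even (∑ t ∈ K, #{e ∈ {e ∈ G.edgeFinset | v ∈ e} | ∀ w ∈ e, w ∈ t}) := by
    refine even_sum _ fun t ht => ?_
    rw [filter_filter]
    exact even_card_edges_at_vertex (hK t ht) v
  have hswap := sum_card_bipartiteAbove_eq_sum_card_bipartiteBelow (s := K)
    (t := {e ∈ G.edgeFinset | v ∈ e}) fun t e => ∀ w ∈ e, w ∈ t
  simp only [bipartiteAbove, bipartiteBelow] at hswap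
  rw [hswap, ← add_sum_erase _ _ (mem_filter.mpr ⟨he₀, hv⟩)] at heven
  refine (Nat.not_even_iff_odd.mpr ?_) heven
  refine hodd.add_even (even_sum _ fun e he => ?_)
  simp only [mem_erase, mem_filter] at he
  exact Nat.not_odd_iff_even.mp (hcon e he.2.1 he.1)

/-- Two distinct triangles share at most one edge. -/
lemma edge_eq_of_mem_two_triangles {s t : Finset V} (hs : G.IsNClique 3 s) (ht : G.IsNClique 3 t)
    (hst : s ≠ t) {e f : Sym2 V} (he : e ∈ G.edgeFinset) (hes : ∀ v ∈ e, v ∈ s)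
    (het : ∀ v ∈ e, v ∈ t) (hf : f ∈ G.edgeFinset) (hfs : ∀ v ∈ f, v ∈ s)
    (hft : ∀ v ∈ f, v ∈ t) : e = f := by
  have hcs := hs.card_eq
  have hct := ht.card_eq
  have hinter : #(s ∩ t) ≤ 2 := by
    by_contra hlt
    have h1 : s ∩ t = s := eq_of_subset_of_card_le inter_subset_left (by omega)
    have h2 : s ∩ t = t := eq_of_subset_of_card_le inter_subset_right (by omega)
    exact hst (h1.symm.trans h2)
  have key : ∀ e' ∈ G.edgeFinset, (∀ v ∈ e', v ∈ s) → (∀ v ∈ e', v ∈ t) →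
      ∀ v, v ∈ e' ↔ v ∈ s ∩ t := by
    intro e' he' hs' ht'
    induction e' with | _ a b
    have hab : G.Adj a b := by simpa using he'
    have hsub : ({a, b} : Finset V) = s ∩ t := by
      refine eq_of_subset_of_card_le (fun c hc => ?_) ?_
      · have hc' : c ∈ s(a, b) := by simpa using hc
        exact mem_inter.mpr ⟨hs' c hc', ht' c hc'⟩
      · rw [card_pair hab.ne]
        exact hinter
    intro v
    rw [← hsub]
    simp
  exact Sym2.ext fun v => by rw [key e he hes het, key f hf hfs hft]

/-- If every edge lies in exactly two triangles, then every edge lies in a triangle transversal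
consisting of a third of the edges. -/
lemma exists_transversal_of_two_triangles (h2 : ∀ e ∈ G.edgeFinset, #(trianglesOn G e) = 2)
    {g : Sym2 V} (hg : g ∈ G.edgeFinset) :
    ∃ X, IsTriangleTransversal G X ∧ g ∈ X ∧ 3 * #X ≤ #G.edgeFinset := by
  let I : {t // t ∈ G.cliqueFinset 3} → Finset {e // e ∈ G.edgeFinset} :=
    fun t => {e | ∀ v ∈ e.1, v ∈ t.1}
  have hI : ∀ t e, e ∈ I t ↔ ∀ v ∈ e.1, v ∈ t.1 := by simp [I]
  have hcl : ∀ t : {t // t ∈ G.cliqueFinset 3}, G.IsNClique 3 t.1 :=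
    fun t => SimpleGraph.mem_cliqueFinset_iff.mp t.2
  have h3 : ∀ t, #(I t) = 3 := by
    intro t
    have h := card_filter_subtype_mem G.edgeFinset fun e => ∀ v ∈ e, v ∈ t.1
    refine Eq.trans ?_ (card_edges_of_triangle (hcl t))
    convert h
  clear_value I
  have h2I : ∀ e, #{t | e ∈ I t} = 2 := by
    intro e
    have h := card_filter_subtype_mem (G.cliqueFinset 3) fun t => ∀ v ∈ e.1, v ∈ t
    rw [← h2 e.1 e.2, trianglesOn]
    simp only [hI]
    convert h
  have h1 : ∀ s t, s ≠ t → ∀ e ∈ I s, e ∈ I t → ∀ f ∈ I s, f ∈ I t → e = f := by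
    intro s t hst e hes het f hfs hft
    rw [hI] at hes het hfs hft
    exact Subtype.ext (edge_eq_of_mem_two_triangles (hcl s) (hcl t) (fun h => hst (Subtype.ext h))
      e.2 hes het f.2 hfs hft)
  have hb : ∀ K : Finset _, #{e | #{t ∈ K | e ∈ I t} = 1} ≠ 1 := by
    intro K hK1
    obtain ⟨e₀, he₀⟩ := card_eq_one.mp hK1
    have hcount : ∀ e, #{t ∈ K | e ∈ I t} =
        #{t ∈ K.map (Function.Embedding.subtype _) | ∀ v ∈ e.1, v ∈ t} := by
      intro e
      rw [filter_map, card_map]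
      congr 1
      ext t
      simp only [mem_filter, hI, Function.comp_apply, Function.Embedding.subtype_apply]
    have hmem : #{t ∈ K | e₀ ∈ I t} = 1 := by
      have h := mem_singleton_self e₀
      rw [← he₀, mem_filter] at h
      exact h.2
    obtain ⟨e, he, hne, hodd⟩ := exists_ne_odd_card (G := G)
      (K := K.map (Function.Embedding.subtype _)) (by
        intro t ht
        obtain ⟨t', -, rfl⟩ := mem_map.mp ht
        exact hcl t') e₀.2 (by
        rw [← hcount, hmem]
        exact odd_one)
    rw [← hcount ⟨e, he⟩] at hodd
    have hle : #{t ∈ K | ⟨e, he⟩ ∈ I t} ≤ 2 := by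
      rw [hcount, ← h2 e he]
      refine card_le_card fun t ht => ?_
      obtain ⟨ht, hte⟩ := mem_filter.mp ht
      obtain ⟨t', -, rfl⟩ := mem_map.mp ht
      exact mem_filter.mpr ⟨t'.2, hte⟩
    have hone : #{t ∈ K | ⟨e, he⟩ ∈ I t} = 1 := by
      obtain ⟨r, hr⟩ := hodd
      omega
    have : (⟨e, he⟩ : {e // e ∈ G.edgeFinset}) ∈ ({e₀} : Finset _) := by
      rw [← he₀, mem_filter]
      exact ⟨mem_univ _, hone⟩
    exact hne (congrArg Subtype.val (mem_singleton.mp this))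
  obtain ⟨X, hgX, hX, hcard⟩ := exists_perfect_matching_of_cubic h3
    (fun e => by convert h2I e) h1 (fun K => by convert hb K) ⟨g, hg⟩
  refine ⟨X.map (Function.Embedding.subtype _), ⟨?_, fun t ht => ?_⟩, ?_, ?_⟩
  · intro e he
    simp only [coe_map, Function.Embedding.subtype_apply, Set.mem_image] at he
    obtain ⟨e', -, rfl⟩ := he
    exact SimpleGraph.mem_edgeFinset.mp e'.2
  · obtain ⟨e, he, het⟩ := hX ⟨t, SimpleGraph.mem_cliqueFinset_iff.mpr ht⟩
    exact ⟨e, mem_map_of_mem _ he, (hI _ _).mp het⟩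
  · exact mem_map.mpr ⟨_, hgX, rfl⟩
  · rw [card_map]
    simpa only [Fintype.card_coe] using hcard

/-! ### Lifting transversals along an edge contraction -/

/-- The vertex map of the contraction of `xy` onto `x`. -/
noncomputable def contractVertex (x y a : V) : V := if a = y then x else a

/-- The edges of `G` whose image under the contraction of `xy` lies in `Y`. -/
noncomputable def liftEdges (G : SimpleGraph V) (x y : V) (Y : Finset (Sym2 V)) :
    Finset (Sym2 V) :=
  {e ∈ G.edgeFinset | e.map (contractVertex x y) ∈ Y}

lemma mem_liftEdges {x y a b : V} {Y : Finset (Sym2 V)} :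
    s(a, b) ∈ liftEdges G x y Y ↔
      G.Adj a b ∧ s(contractVertex x y a, contractVertex x y b) ∈ Y := by
  simp [liftEdges]

lemma contractEdge_adj_contractVertex {V : Type*} {G : SimpleGraph V} {x y a b : V}
    (hxy : G.Adj x y) (hab : G.Adj a b) (hne : s(a, b) ≠ s(x, y)) :
    (G.contractEdge x y).Adj (contractVertex x y a) (contractVertex x y b) := by
  have h1 := hxy.ne
  have h2 := hab.ne
  have h3 := hab.symm
  simp only [ne_eq, Sym2.eq_iff, not_or, not_and] at hne
  unfold contractVertex SimpleGraph.contractEdge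
  split_ifs with ha hb hb
  · subst ha hb
    exact absurd rfl h2
  · subst ha
    exact ⟨fun h => hne.2 rfl h.symm, h1, hb, Or.inr (Or.inl ⟨rfl, hab⟩)⟩
  · subst hb
    exact ⟨fun h => hne.1 h rfl, ha, h1, Or.inr (Or.inr ⟨rfl, h3⟩)⟩
  · exact ⟨h2, ha, hb, Or.inl hab⟩

lemma card_liftEdges_le {x y : V} {Y : Finset (Sym2 V)} :
    #(liftEdges G x y Y) ≤ #Y + #{z ∈ commonNbrs G x y | s(x, z) ∈ Y} := by
  set Z : Finset V := {z | ¬ G.Adj x z ∧ s(x, z) ∈ Y} with hZ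
  have hZc : #Z ≤ #(Y \ G.edgeFinset) := by
    refine card_le_card_of_injOn (fun z => s(x, z)) (fun z hz => ?_)
      fun a _ b _ h => Sym2.congr_right.mp h
    simpa [hZ, and_comm] using hz
  have hsub : liftEdges G x y Y ⊆ (Y ∩ G.edgeFinset) ∪
      ((Z ∪ {z ∈ commonNbrs G x y | s(x, z) ∈ Y}).image fun z => s(y, z)) := by
    have key : ∀ b, G.Adj y b → s(contractVertex x y y, contractVertex x y b) ∈ Y →
        s(y, b) ∈ (Z ∪ {z ∈ commonNbrs G x y | s(x, z) ∈ Y}).image fun z => s(y, z) := by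
      intro b hb hbY
      simp only [contractVertex, if_true, hb.ne.symm, if_false] at hbY
      refine mem_image_of_mem _ ?_
      by_cases h : G.Adj x b
      · exact mem_union_right _ (by simp [h, hb, hbY])
      · exact mem_union_left _ (by simp [hZ, h, hbY])
    intro e he
    induction e with | _ a b
    obtain ⟨hab, hY'⟩ := mem_liftEdges.mp he
    rcases eq_or_ne a y with rfl | ha
    · exact mem_union_right _ (key b hab hY')
    rcases eq_or_ne b y with rfl | hb
    · rw [Sym2.eq_swap] at hY' ⊢
      exact mem_union_right _ (key a hab.symm hY')
    · simp only [contractVertex, ha, hb, if_false] at hY'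
      exact mem_union_left _ (by simp [hY', hab])
  have h1 := card_le_card hsub
  have h2 := card_union_le (Y ∩ G.edgeFinset)
    ((Z ∪ {z ∈ commonNbrs G x y | s(x, z) ∈ Y}).image fun z => s(y, z))
  have h3 : #((Z ∪ {z ∈ commonNbrs G x y | s(x, z) ∈ Y}).image fun z => s(y, z)) ≤ _ :=
    card_image_le
  have h4 := card_union_le Z {z ∈ commonNbrs G x y | s(x, z) ∈ Y}
  have h5 := card_inter_add_card_sdiff Y G.edgeFinset
  omega

lemma card_edgeFinset_le_contractEdge {x y : V} (hxy : G.Adj x y) :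
    #G.edgeFinset ≤ #(G.contractEdge x y).edgeFinset + 1 + #(commonNbrs G x y) := by
  have hsub : G.edgeFinset ⊆ insert s(x, y) (liftEdges G x y (G.contractEdge x y).edgeFinset) := by
    intro e he
    induction e with | _ a b
    have hab : G.Adj a b := by simpa using he
    by_cases h : s(a, b) = s(x, y)
    · simp [h]
    · exact mem_insert_of_mem (mem_liftEdges.mpr
        ⟨hab, by simpa using contractEdge_adj_contractVertex hxy hab h⟩)
  have h1 := card_le_card hsub
  have h2 := card_insert_le s(x, y) (liftEdges G x y (G.contractEdge x y).edgeFinset)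
  have h3 := card_liftEdges_le (G := G) (x := x) (y := y) (Y := (G.contractEdge x y).edgeFinset)
  have h4 := card_filter_le (commonNbrs G x y) fun z => s(x, z) ∈ (G.contractEdge x y).edgeFinset
  omega

lemma exists_mem_liftEdges_of_isNClique {x y : V} (hxy : G.Adj x y) {X : Finset (Sym2 V)}
    (hX : IsTriangleTransversal (G.contractEdge x y) X) {t : Finset V} (ht : G.IsNClique 3 t)
    (hxyt : ¬ (x ∈ t ∧ y ∈ t)) : ∃ e ∈ liftEdges G x y X, ∀ v ∈ e, v ∈ t := by
  have hadj : ∀ a ∈ t, ∀ b ∈ t, a ≠ b →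
      (G.contractEdge x y).Adj (contractVertex x y a) (contractVertex x y b) := by
    intro a ha b hb hab
    refine contractEdge_adj_contractVertex hxy (ht.isClique ha hb hab) fun h => hxyt ?_
    rcases Sym2.eq_iff.mp h with ⟨rfl, rfl⟩ | ⟨rfl, rfl⟩
    exacts [⟨ha, hb⟩, ⟨hb, ha⟩]
  have hinj : Set.InjOn (contractVertex x y) t := by
    intro a ha b hb h
    by_contra hab
    exact (hadj a ha b hb hab).ne h
  obtain ⟨e, he, het⟩ := hX.2 (t.image (contractVertex x y)) ⟨by
    intro a ha b hb hab
    obtain ⟨a, ha', rfl⟩ := mem_image.mp (mem_coe.mp ha)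
    obtain ⟨b, hb', rfl⟩ := mem_image.mp (mem_coe.mp hb)
    exact hadj a ha' b hb' fun h => hab (h ▸ rfl), by
    rw [card_image_of_injOn hinj, ht.card_eq]⟩
  induction e with | _ p q
  obtain ⟨a, ha, rfl⟩ := mem_image.mp (het p (Sym2.mem_mk_left _ _))
  obtain ⟨b, hb, rfl⟩ := mem_image.mp (het q (Sym2.mem_mk_right _ _))
  have hab : a ≠ b := by
    rintro rfl
    exact (SimpleGraph.mem_edgeSet _ |>.mp (hX.1 he)).ne rfl
  exact ⟨s(a, b), mem_liftEdges.mpr ⟨ht.isClique ha hb hab, he⟩, by simp [ha, hb]⟩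

/-- A transversal of the contraction of an edge lying in at most one triangle lifts to a
transversal with at most one more edge. -/
lemma exists_transversal_of_contractEdge {x y : V} (hxy : G.Adj x y)
    (hN : #(commonNbrs G x y) ≤ 1) {X : Finset (Sym2 V)}
    (hX : IsTriangleTransversal (G.contractEdge x y) X) :
    ∃ X', IsTriangleTransversal G X' ∧ #X' ≤ #X + 1 ∧ liftEdges G x y X ⊆ X' ∧
      (commonNbrs G x y = ∅ → s(x, y) ∈ X') := by
  have hlift : (↑(liftEdges G x y X) : Set (Sym2 V)) ⊆ G.edgeSet := fun e he =>
    SimpleGraph.mem_edgeFinset.mp (mem_filter.mp he).1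
  have hcard := card_liftEdges_le (G := G) (x := x) (y := y) (Y := X)
  have hcov := fun t => exists_mem_liftEdges_of_isNClique (t := t) hxy hX
  by_cases hz : ∃ z ∈ commonNbrs G x y, s(x, z) ∈ X
  · obtain ⟨z, hzN, hzX⟩ := hz
    refine ⟨liftEdges G x y X, ⟨hlift, fun t ht => ?_⟩, ?_, Subset.rfl, fun h => ?_⟩
    · by_cases hxyt : x ∈ t ∧ y ∈ t
      · obtain ⟨w, hw, rfl⟩ := exists_third_vertex ht hxyt.1 hxyt.2 hxy.ne
        obtain rfl := card_le_one.mp hN z hzN w hw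
        rw [mem_commonNbrs] at hw
        exact ⟨s(x, z), mem_liftEdges.mpr ⟨hw.1, by
          simpa [contractVertex, hxy.ne, hw.2.ne.symm] using hzX⟩, by simp⟩
      · exact hcov t ht hxyt
    · have := card_filter_le (commonNbrs G x y) fun z => s(x, z) ∈ X
      omega
    · simp [h] at hzN
  · push Not at hz
    refine ⟨insert s(x, y) (liftEdges G x y X), ⟨?_, fun t ht => ?_⟩, ?_, subset_insert _ _,
      fun _ => mem_insert_self _ _⟩
    · rw [coe_insert, Set.insert_subset_iff]
      exact ⟨hxy, hlift⟩
    · by_cases hxyt : x ∈ t ∧ y ∈ t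
      · exact ⟨_, mem_insert_self _ _, by simpa using hxyt⟩
      · obtain ⟨e, he, h⟩ := hcov t ht hxyt
        exact ⟨e, mem_insert_of_mem he, h⟩
    · rw [filter_false_of_mem hz, card_empty, add_zero] at hcard
      exact (card_insert_le _ _).trans (by omega)

/-! ### Gluing transversals along a triangle -/

/-- The graph on the same vertex type keeping only the edges inside `S`. -/
def restrictTo (G : SimpleGraph V) (S : Finset V) : SimpleGraph V where
  Adj a b := G.Adj a b ∧ a ∈ S ∧ b ∈ S
  symm := ⟨fun _ _ ⟨h, ha, hb⟩ => ⟨h.symm, hb, ha⟩⟩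
  loopless := ⟨fun _ h => h.1.ne rfl⟩

lemma restrictTo_le {V : Type*} {G : SimpleGraph V} (S : Finset V) : restrictTo G S ≤ G :=
  fun _ _ h => h.1

lemma mem_edgeFinset_restrictTo {S : Finset V} {e : Sym2 V} :
    e ∈ (restrictTo G S).edgeFinset ↔ e ∈ G.edgeFinset ∧ ∀ v ∈ e, v ∈ S := by
  induction e with | _ a b
  simp only [SimpleGraph.mem_edgeFinset, SimpleGraph.mem_edgeSet, Sym2.mem_iff, forall_eq_or_imp,
    forall_eq]
  rfl

lemma isNClique_restrictTo {V : Type*} {G : SimpleGraph V} {S t : Finset V}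
    (ht : G.IsNClique 3 t) (htS : t ⊆ S) :
    (restrictTo G S).IsNClique 3 t :=
  ⟨fun _ ha _ hb hab => ⟨ht.isClique ha hb hab, htS ha, htS hb⟩, ht.card_eq⟩

section Glue

variable {S₁ S₂ T : Finset V}

lemma card_edgeFinset_glue (hT : G.IsNClique 3 T) (hT₁ : T ⊆ S₁) (hT₂ : T ⊆ S₂)
    (hcov : ∀ a b, G.Adj a b → a ∈ S₁ ∧ b ∈ S₁ ∨ a ∈ S₂ ∧ b ∈ S₂) :
    #G.edgeFinset + 3 ≤ #(restrictTo G S₁).edgeFinset + #(restrictTo G S₂).edgeFinset := by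
  rw [← card_union_add_card_inter, ← card_edges_of_triangle hT]
  refine Nat.add_le_add (card_le_card fun e he => ?_) (card_le_card fun e he => ?_)
  · rw [mem_union, mem_edgeFinset_restrictTo, mem_edgeFinset_restrictTo]
    induction e with | _ a b
    simpa [show G.Adj a b by simpa using he] using hcov a b (by simpa using he)
  · obtain ⟨he, h⟩ := mem_filter.mp he
    exact mem_inter.mpr ⟨mem_edgeFinset_restrictTo.mpr ⟨he, fun v hv => hT₁ (h v hv)⟩,
      mem_edgeFinset_restrictTo.mpr ⟨he, fun v hv => hT₂ (h v hv)⟩⟩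

lemma subset_or_subset_of_isNClique {V : Type*} {G : SimpleGraph V} {S₁ S₂ : Finset V}
    (hcov : ∀ a b, G.Adj a b → a ∈ S₁ ∧ b ∈ S₁ ∨ a ∈ S₂ ∧ b ∈ S₂) {t : Finset V}
    (ht : G.IsNClique 3 t) : t ⊆ S₁ ∨ t ⊆ S₂ := by
  by_contra! hcon
  obtain ⟨a, ha, ha₁⟩ := not_subset.mp hcon.1
  obtain ⟨b, hb, hb₂⟩ := not_subset.mp hcon.2
  rcases eq_or_ne a b with rfl | hab
  · obtain ⟨c, hc, hca⟩ := exists_mem_ne (by rw [ht.card_eq]; omega) a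
    have := hcov a c (ht.isClique ha hc hca.symm)
    tauto
  · have := hcov a b (ht.isClique ha hb hab)
    tauto

lemma exists_transversal_glue (hT : G.IsNClique 3 T) (hT₁ : T ⊆ S₁) (hT₂ : T ⊆ S₂)
    (hcov : ∀ a b, G.Adj a b → a ∈ S₁ ∧ b ∈ S₁ ∨ a ∈ S₂ ∧ b ∈ S₂) {n₁ n₂ : ℕ}
    (h₁ : ∀ g ∈ (restrictTo G S₁).edgeFinset,
      ∃ X, IsTriangleTransversal (restrictTo G S₁) X ∧ g ∈ X ∧ #X + 2 ≤ n₁)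
    (h₂ : ∀ g ∈ (restrictTo G S₂).edgeFinset,
      ∃ X, IsTriangleTransversal (restrictTo G S₂) X ∧ g ∈ X ∧ #X + 2 ≤ n₂)
    {g : Sym2 V} (hg : g ∈ (restrictTo G S₁).edgeFinset) :
    ∃ X, IsTriangleTransversal G X ∧ g ∈ X ∧ #X + 5 ≤ n₁ + n₂ := by
  obtain ⟨X₁, hX₁, hgX₁, hc₁⟩ := h₁ g hg
  obtain ⟨f, hf, hfT⟩ := hX₁.2 T (isNClique_restrictTo hT hT₁)
  have hfG : f ∈ G.edgeFinset :=
    (mem_edgeFinset_restrictTo.mp (SimpleGraph.mem_edgeFinset.mpr (hX₁.1 hf))).1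
  obtain ⟨X₂, hX₂, hfX₂, hc₂⟩ := h₂ f
    (mem_edgeFinset_restrictTo.mpr ⟨hfG, fun v hv => hT₂ (hfT v hv)⟩)
  refine ⟨X₁ ∪ X₂, ⟨?_, fun t ht => ?_⟩, mem_union_left _ hgX₁, ?_⟩
  · rw [coe_union]
    exact Set.union_subset (hX₁.1.trans (SimpleGraph.edgeSet_mono (restrictTo_le _)))
      (hX₂.1.trans (SimpleGraph.edgeSet_mono (restrictTo_le _)))
  · rcases subset_or_subset_of_isNClique hcov ht with h | h
    · obtain ⟨e, he, h⟩ := hX₁.2 t (isNClique_restrictTo ht h)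
      exact ⟨e, mem_union_left _ he, h⟩
    · obtain ⟨e, he, h⟩ := hX₂.2 t (isNClique_restrictTo ht h)
      exact ⟨e, mem_union_right _ he, h⟩
  · have h1 := card_union_add_card_inter X₁ X₂
    have h2 : 0 < #(X₁ ∩ X₂) := card_pos.mpr ⟨f, mem_inter.mpr ⟨hf, hfX₂⟩⟩
    omega

end Glue

/-! ### The induction -/

/-- Every edge of `G` lies in a triangle transversal with at most `n - 2` edges. -/
def HasSmallTransversals (G : SimpleGraph V) (n : ℕ) : Prop :=
  ∀ g ∈ G.edgeFinset, ∃ X, IsTriangleTransversal G X ∧ g ∈ X ∧ #X + 2 ≤ n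

lemma bounds_of_card_eq_three {S : Finset V} (hS : #S = 3) (hGS : ∀ a b, G.Adj a b → a ∈ S) :
    #G.edgeFinset ≤ 3 ∧ HasSmallTransversals G 3 := by
  have hsub : ∀ t, G.IsNClique 3 t → t = S := by
    intro t ht
    refine eq_of_subset_of_card_le (fun a ha => ?_) (by rw [hS, ht.card_eq])
    obtain ⟨c, hc, hca⟩ := exists_mem_ne (by rw [ht.card_eq]; omega) a
    exact hGS a c (ht.isClique ha hc hca.symm)
  have hends : ∀ e ∈ G.edgeFinset, ∀ v ∈ e, v ∈ S := by
    intro e he v hv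
    obtain ⟨w, rfl⟩ := hv
    exact hGS v w (by simpa using he)
  constructor
  · have h : G.edgeFinset ⊆ S.offDiag.image Sym2.mk.uncurry := by
      intro e he
      have hS' := hends e he
      induction e with | _ a b
      refine mem_image.mpr ⟨(a, b), mem_offDiag.mpr ⟨hS' a (by simp), hS' b (by simp), ?_⟩, rfl⟩
      exact (show G.Adj a b by simpa using he).ne
    have := card_le_card h
    rwa [Sym2.card_image_offDiag, hS] at this
  · intro g hg
    refine ⟨{g}, ⟨by simpa using hg, fun t ht => ⟨g, mem_singleton_self g, ?_⟩⟩,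
      mem_singleton_self g, by simp⟩
    rw [hsub t ht]
    exact hends g hg

/-- If every edge lies in at most two triangles, smaller bounds for contractions give bounds
for the graph itself. -/
lemma bounds_of_contractEdge {n : ℕ} (hn : 4 ≤ n)
    (hc : ∀ x y, G.Adj x y → #(G.contractEdge x y).edgeFinset + 9 ≤ 3 * n ∧
      HasSmallTransversals (G.contractEdge x y) (n - 1))
    (h2 : ∀ x y, G.Adj x y → #(commonNbrs G x y) ≤ 2) :
    #G.edgeFinset + 6 ≤ 3 * n ∧ HasSmallTransversals G n := by
  have hedge : #G.edgeFinset + 6 ≤ 3 * n := by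
    rcases G.edgeFinset.eq_empty_or_nonempty with h | ⟨e, he⟩
    · rw [h, card_empty]
      omega
    · induction e with | _ x y
      have hxy : G.Adj x y := by simpa using he
      have h3 := card_edgeFinset_le_contractEdge hxy
      have h4 := (hc x y hxy).1
      have h5 := h2 x y hxy
      omega
  refine ⟨hedge, fun g hg => ?_⟩
  by_cases hB : ∃ x y, G.Adj x y ∧ s(x, y) ≠ g ∧ #(commonNbrs G x y) ≤ 1
  · obtain ⟨x, y, hxy, hne, hN⟩ := hB
    induction g with | _ a b
    have hab : G.Adj a b := by simpa using hg
    obtain ⟨X, hX, hgX, hcard⟩ := (hc x y hxy).2 s(contractVertex x y a, contractVertex x y b)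
      (by simpa using contractEdge_adj_contractVertex hxy hab hne.symm)
    obtain ⟨X', hX', hcard', hsub, -⟩ := exists_transversal_of_contractEdge hxy hN hX
    exact ⟨X', hX', hsub (mem_liftEdges.mpr ⟨hab, hgX⟩), by omega⟩
  push Not at hB
  have htwo : ∀ e ∈ G.edgeFinset, e ≠ g → #(trianglesOn G e) = 2 := by
    intro e he hne
    induction e with | _ x y
    have hxy : G.Adj x y := by simpa using he
    have h3 := h2 x y hxy
    have h4 := hB x y hxy hne
    rw [card_trianglesOn hxy]
    omega
  by_cases hg2 : #(trianglesOn G g) = 2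
  · obtain ⟨X, hX, hgX, hcard⟩ := exists_transversal_of_two_triangles
      (fun e he => (eq_or_ne e g).elim (fun h => h ▸ hg2) (htwo e he)) hg
    exact ⟨X, hX, hgX, by omega⟩
  have hg0 : trianglesOn G g = ∅ := by
    have hle : #(trianglesOn G g) ≤ 2 := by
      induction g with | _ x y
      have hxy : G.Adj x y := by simpa using hg
      rw [card_trianglesOn hxy]
      exact h2 x y hxy
    have hne1 : #(trianglesOn G g) ≠ 1 := by
      intro h1
      obtain ⟨e, he, hne, hodd⟩ := exists_ne_odd_card (K := G.cliqueFinset 3)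
        (fun t ht => SimpleGraph.mem_cliqueFinset_iff.mp ht) hg (by
          change Odd #(trianglesOn G g)
          rw [h1]
          exact odd_one)
      change Odd #(trianglesOn G e) at hodd
      rw [htwo e he hne] at hodd
      exact absurd hodd (by decide)
    exact card_eq_zero.mp (by omega)
  induction g with | _ x y
  have hxy : G.Adj x y := by simpa using hg
  have hN : #(commonNbrs G x y) = 0 := by rw [← card_trianglesOn hxy, hg0, card_empty]
  obtain ⟨X, hX, hcard⟩ : ∃ X, IsTriangleTransversal (G.contractEdge x y) X ∧ #X + 2 ≤ n - 1 := by
    rcases (G.contractEdge x y).edgeFinset.eq_empty_or_nonempty with h | ⟨e, he⟩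
    · refine ⟨∅, ⟨by simp, fun t ht => ?_⟩, by rw [card_empty]; omega⟩
      obtain ⟨a, b, -, hab, -⟩ := SimpleGraph.is3Clique_iff.mp ht
      have := (SimpleGraph.edgeFinset_eq_empty.mp h) ▸ hab
      exact absurd this (by simp)
    · obtain ⟨X, hX, -, hcard⟩ := (hc x y hxy).2 e he
      exact ⟨X, hX, hcard⟩
  obtain ⟨X', hX', hcard', -, hmem⟩ := exists_transversal_of_contractEdge hxy (by omega) hX
  exact ⟨X', hX', hmem (card_eq_zero.mp hN), by omega⟩

/-- A graph with a planarity certificate, supported on `n ≥ 3` vertices, has at most `3 * n - 6`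
edges, and each of its edges lies in a triangle transversal with at most `n - 2` edges. -/
theorem IsAlgPlanar.bounds {n : ℕ} (hn : 3 ≤ n) : ∀ {G : SimpleGraph V} {S : Finset V}, #S = n →
    (∀ a b, G.Adj a b → a ∈ S) → IsAlgPlanar G →
      #G.edgeFinset + 6 ≤ 3 * n ∧ HasSmallTransversals G n := by
  induction n using Nat.strong_induction_on with | _ n ih
  intro G S hS hGS hG
  rcases hn.eq_or_lt with rfl | hn4
  · obtain ⟨h1, h2⟩ := bounds_of_card_eq_three hS hGS
    exact ⟨by omega, h2⟩
  by_cases h2 : ∀ x y, G.Adj x y → #(commonNbrs G x y) ≤ 2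
  · refine bounds_of_contractEdge hn4 (fun x y hxy => ?_) h2
    have hy : y ∈ S := hGS y x hxy.symm
    obtain ⟨h3, h4⟩ := ih (n - 1) (by omega) (by omega) (G := G.contractEdge x y) (S := S.erase y)
      (by rw [card_erase_of_mem hy, hS]) (fun a b hab => by
        obtain ⟨-, ha, -, h⟩ := hab
        refine mem_erase.mpr ⟨ha, ?_⟩
        rcases h with h | ⟨rfl, -⟩ | ⟨-, h⟩
        exacts [hGS _ _ h, hGS _ _ hxy, hGS _ _ h.symm]) (hG.contractEdge hxy)
    exact ⟨by omega, h4⟩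
  push Not at h2
  obtain ⟨u, v, huv, h3⟩ := h2
  obtain ⟨x, hx, y, hy, z, hz, hxy, hxz, hyz⟩ := two_lt_card.mp h3
  rw [mem_commonNbrs] at hx hy hz
  obtain ⟨w, huw, hvw, σ, hσ, a, b, hua, hva, haw, hub, hvb, hbw, hab⟩ :=
    hG.exists_separating_triangle huv hx.1 hy.1 hz.1 hx.2 hy.2 hz.2 hxy hxz hyz
  set T : Finset V := {u, v, w} with hTdef
  have hmemT : ∀ s, s ∈ T ↔ s = u ∨ s = v ∨ s = w := by simp [hTdef]
  have hT : G.IsNClique 3 T := SimpleGraph.is3Clique_triple_iff.mpr ⟨huv, huw, hvw⟩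
  have hTS : T ⊆ S := by
    intro s hs
    rcases (hmemT s).mp hs with rfl | rfl | rfl
    exacts [hGS _ _ huv, hGS _ _ hvw, hGS _ _ hvw.symm]
  set S₁ : Finset V := {s ∈ S | s ∈ T ∨ σ s = σ a} with hS₁
  set S₂ : Finset V := {s ∈ S | s ∈ T ∨ σ s ≠ σ a} with hS₂
  have hT₁ : T ⊆ S₁ := fun s hs => mem_filter.mpr ⟨hTS hs, Or.inl hs⟩
  have hT₂ : T ⊆ S₂ := fun s hs => mem_filter.mpr ⟨hTS hs, Or.inl hs⟩
  have haT : a ∉ T := by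
    rw [hmemT]
    rintro (rfl | rfl | rfl)
    exacts [hua.ne rfl, hva.ne rfl, haw rfl]
  have hbT : b ∉ T := by
    rw [hmemT]
    rintro (rfl | rfl | rfl)
    exacts [hub.ne rfl, hvb.ne rfl, hbw rfl]
  have hcov : ∀ p q, G.Adj p q → p ∈ S₁ ∧ q ∈ S₁ ∨ p ∈ S₂ ∧ q ∈ S₂ := by
    intro p q hpq
    have hp := hGS p q hpq
    have hq := hGS q p hpq.symm
    simp only [hS₁, hS₂, mem_filter, hp, hq, true_and]
    by_cases hpT : p ∈ T
    · by_cases h : σ q = σ a <;> simp [hpT, h]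
    by_cases hqT : q ∈ T
    · by_cases h : σ p = σ a <;> simp [hqT, h]
    have : σ p = σ q := by
      simp only [hmemT, not_or] at hpT hqT
      exact hσ p q hpq hpT.1 hpT.2.1 hpT.2.2 hqT.1 hqT.2.1 hqT.2.2
    by_cases h : σ q = σ a <;> simp [this, h]
  have hunion : S₁ ∪ S₂ = S := by
    ext s
    simp only [hS₁, hS₂, mem_union, mem_filter]
    tauto
  have hinter : S₁ ∩ S₂ = T := by
    ext s
    have := @hTS s
    simp only [hS₁, hS₂, mem_inter, mem_filter]
    tauto
  have hsum := card_union_add_card_inter S₁ S₂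
  rw [hunion, hinter, hS, hT.card_eq] at hsum
  have hlt₁ : 3 < #S₁ := by
    rw [← hT.card_eq]
    refine card_lt_card ((ssubset_iff_of_subset hT₁).mpr ⟨a, ?_, haT⟩)
    exact mem_filter.mpr ⟨hGS _ _ hua.symm, Or.inr rfl⟩
  have hlt₂ : 3 < #S₂ := by
    rw [← hT.card_eq]
    refine card_lt_card ((ssubset_iff_of_subset hT₂).mpr ⟨b, ?_, hbT⟩)
    exact mem_filter.mpr ⟨hGS _ _ hub.symm, Or.inr hab.symm⟩
  obtain ⟨he₁, hX₁⟩ := ih #S₁ (by omega) (by omega) (G := restrictTo G S₁) rfl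
    (fun _ _ h => h.2.1) (hG.mono (restrictTo_le _))
  obtain ⟨he₂, hX₂⟩ := ih #S₂ (by omega) (by omega) (G := restrictTo G S₂) rfl
    (fun _ _ h => h.2.1) (hG.mono (restrictTo_le _))
  refine ⟨?_, fun g hg => ?_⟩
  · have := card_edgeFinset_glue hT hT₁ hT₂ hcov
    omega
  · have hg' : g ∈ (restrictTo G S₁).edgeFinset ∨ g ∈ (restrictTo G S₂).edgeFinset := by
      rw [mem_edgeFinset_restrictTo, mem_edgeFinset_restrictTo]
      induction g with | _ p q
      simpa [show G.Adj p q by simpa using hg] using hcov p q (by simpa using hg)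
    rcases hg' with h | h
    · obtain ⟨X, hX, hgX, hcard⟩ := exists_transversal_glue hT hT₁ hT₂ hcov hX₁ hX₂ h
      exact ⟨X, hX, hgX, by omega⟩
    · obtain ⟨X, hX, hgX, hcard⟩ := exists_transversal_glue hT hT₂ hT₁
        (fun p q hpq => (hcov p q hpq).symm) hX₂ hX₁ h
      exact ⟨X, hX, hgX, by omega⟩

end Transversal

/-- If `G` is a planar graph on `n` vertices, with at least one edge and distinct
from `K₃`, then `τ(G) ≤ n - 2`. -/
theorem tau_le_of_planar (V : Type) [Fintype V] (G : SimpleGraph V)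
    (hplanar : PlanarGraph G) (hedge : G.edgeSet.Nonempty)
    (hK3 : ¬ Nonempty (G ≃g (⊤ : SimpleGraph (Fin 3)))) :
    tau G ≤ Fintype.card V - 2 := by
  classical
  obtain ⟨g, hg⟩ := hedge
  by_cases hn : 3 ≤ Fintype.card V
  · obtain ⟨X, hX, -, hcard⟩ := (hplanar.isAlgPlanar.bounds hn (S := Finset.univ)
      Finset.card_univ fun a _ _ => Finset.mem_univ a).2 g (SimpleGraph.mem_edgeFinset.mpr hg)
    have hle : tau G ≤ X.card := Nat.sInf_le ⟨X, hX, rfl⟩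
    omega
  · have hle : tau G ≤ 0 := Nat.sInf_le ⟨∅, ⟨by simp, fun t ht =>
      absurd (ht.card_eq ▸ Finset.card_le_univ t) hn⟩, Finset.card_empty⟩
    omega
end
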